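/- arXiv:2408.14046 — 3 statements merged into one kernel-verified Lean document; each statement's English description precedes it below -/
import Mathlib

section
/- Let q be an odd prime power, r and n_0 positive integers, and g ∈ GL(n_0, F_q). Then the proportion of irreducible complex characters χ of GL(n, F_q) such that 2^r does not divide χ(g) tends to 0 as n → ∞: lim_{n→∞} #{χ ∈ Irr(GL(n,q)) : 2^r ∤ χ(g)} / |Irr(GL(n,q))| = 0. -/
open Matrix

noncomputable def blockOneHom (F : Type*) [Field F] (n₀ n : ℕ) (h : n₀ ≤ n) :
    Matrix (Fin n₀) (Fin n₀) F →* Matrix (Fin n) (Fin n) F :=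
  (Matrix.reindexAlgEquiv F F
      ((finSumFinEquiv (m := n₀) (n := n - n₀)).trans
        (finCongr (Nat.add_sub_cancel' h)))).toAlgHom.toMonoidHom.comp
    { toFun := fun A => Matrix.fromBlocks A 0 0 (1 : Matrix (Fin (n - n₀)) (Fin (n - n₀)) F)
      map_one' := by simp [Matrix.fromBlocks_one]
      map_mul' := fun A B => by
        simp [Matrix.fromBlocks_multiply] }

noncomputable def glEmbed {F : Type*} [Field F] {n₀ n : ℕ} (h : n₀ ≤ n) :
    GL (Fin n₀) F →* GL (Fin n) F :=
  Units.map (blockOneHom F n₀ n h)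

def IsIrrChar (G : Type) [Group G] (f : G → ℂ) : Prop :=
  ∃ V : FDRep ℂ G, CategoryTheory.Simple V ∧ FDRep.character V = f

/-- `d` divides the algebraic number `z`, i.e. `z / d` is an algebraic integer. -/
def NatDvdAlg (d : ℕ) (z : ℂ) : Prop := IsIntegral ℤ (z / (d : ℂ))


open Matrix

section CharTheory
open scoped BigOperators ComplexConjugate

/-- twisted average of a character is a natural number -/
lemma avg_twist_nat {H : Type} [Group H] [Fintype H] {W : Type} [AddCommGroup W] [Module ℂ W]
    [FiniteDimensional ℂ W] (σ : Representation ℂ H W) (c : H →* ℂ) :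
    ∃ n : ℕ, (Fintype.card H : ℂ)⁻¹ * ∑ h, c h * σ.character h = n := by
  let τ : Representation ℂ H W :=
    { toFun := fun h => c h • σ h
      map_one' := by simp
      map_mul' := fun a b => by
        rw [map_mul, map_mul, smul_mul_smul_comm] }
  have hc : (Nat.card H : ℂ) ≠ 0 := by simp
  let : Invertible (Nat.card H : ℂ) := invertibleOfNonzero hc
  refine ⟨Module.finrank ℂ τ.invariants, ?_⟩
  have := Representation.card_inv_mul_sum_char_eq_finrank τ
  rw [← this, Nat.card_eq_fintype_card]
  congr 1
  apply Finset.sum_congr rfl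
  intro h _
  simp [Representation.character, τ]

lemma avg_twist_nat₂ {G H : Type} [Group G] [Group H] [Fintype H] (V : FDRep ℂ G)
    (π₁ π₂ : H →* G) (c : H →* ℂ) :
    ∃ n : ℕ, (Fintype.card H : ℂ)⁻¹ *
      ∑ h, c h * (V.character (π₁ h) * V.character (π₂ h)⁻¹) = n := by
  let σ₁ : Representation ℂ H V := (V.ρ).comp π₁
  let σ₂ : Representation ℂ H V := (V.ρ).comp π₂
  obtain ⟨n, hn⟩ := avg_twist_nat (Representation.linHom σ₂ σ₁) c
  refine ⟨n, ?_⟩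
  rw [← hn]
  congr 1
  apply Finset.sum_congr rfl
  intro h _
  rw [Representation.char_linHom]
  have h1 : V.character (π₁ h) = σ₁.character h := rfl
  have h2 : V.character (π₂ h)⁻¹ = σ₂.character h⁻¹ := by
    rw [← map_inv]; rfl
  rw [h1, h2, mul_comm (σ₁.character h)]

lemma char_inv_conj {G : Type} [Group G] [Finite G] (V : FDRep ℂ G) (g : G) :
    V.character g⁻¹ = conj (V.character g) := by
  classical
  let H := Subgroup.zpowers g
  have : Fintype H := Fintype.ofFinite _
  let : CommGroup H := { (inferInstance : Group H) with mul_comm := isMulCommutative_iff.1 (Subgroup.zpowers_isMulCommutative g) }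
  let f : H → ℂ := fun h => V.character h
  have key : ∀ ψ : AddChar (Additive H) ℂ, ∃ n : ℕ,
      (Fintype.card H : ℂ)⁻¹ * ∑ h, ψ (Additive.ofMul h) * f h = n := by
    intro ψ
    let σ : Representation ℂ H V := (V.ρ).comp H.subtype
    let c : H →* ℂ :=
      { toFun := fun h => ψ (Additive.ofMul h)
        map_one' := by simp
        map_mul' := fun a b => by
          simp [AddChar.map_add_eq_mul] }
    obtain ⟨n, hn⟩ := avg_twist_nat σ c
    refine ⟨n, ?_⟩
    rw [← hn]
    rfl
  choose n hn using key
  have inv : ∀ h : H, ∑ ψ : AddChar (Additive H) ℂ, ψ (-Additive.ofMul h) * n ψ = f h := by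
    intro h
    calc ∑ ψ : AddChar (Additive H) ℂ, ψ (-Additive.ofMul h) * n ψ
        = ∑ ψ : AddChar (Additive H) ℂ, ∑ h' : H, (Fintype.card H : ℂ)⁻¹ *
            (ψ (Additive.ofMul h' - Additive.ofMul h) * f h') := by
          apply Finset.sum_congr rfl
          intro ψ _
          rw [← hn, Finset.mul_sum, Finset.mul_sum]
          apply Finset.sum_congr rfl
          intro h' _
          rw [sub_eq_add_neg, AddChar.map_add_eq_mul]
          ring
      _ = ∑ h' : H, (Fintype.card H : ℂ)⁻¹ *
            ((∑ ψ : AddChar (Additive H) ℂ, ψ (Additive.ofMul h' - Additive.ofMul h)) * f h') := by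
          rw [Finset.sum_comm]
          apply Finset.sum_congr rfl
          intro h' _
          rw [Finset.sum_mul, Finset.mul_sum]
      _ = f h := by
          rw [Finset.sum_eq_single h]
          · rw [AddChar.sum_apply_eq_ite]
            simp
          · intro b _ hb
            rw [AddChar.sum_apply_eq_ite, if_neg]
            · simp
            · intro h0
              apply hb
              exact Additive.ofMul.injective (sub_eq_zero.1 h0)
          · simp
  let γ : H := ⟨g, Subgroup.mem_zpowers g⟩
  have h1 := inv γ
  have h2 := inv γ⁻¹
  have e1 : f γ = V.character g := rfl
  have e2 : f γ⁻¹ = V.character g⁻¹ := rfl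
  rw [← e1, ← e2, ← h1, ← h2, map_sum]
  apply Finset.sum_congr rfl
  intro ψ _
  rw [map_mul, ← AddChar.map_neg_eq_conj]
  simp

lemma irr_conj {G : Type} [Group G] [Finite G] {χ : G → ℂ} (h : IsIrrChar G χ) (g : G) :
    χ g⁻¹ = conj (χ g) := by
  obtain ⟨V, _, rfl⟩ := h
  exact char_inv_conj V g

lemma irr_class {G : Type} [Group G] {χ : G → ℂ} (h : IsIrrChar G χ) (g k : G) :
    χ (k * g * k⁻¹) = χ g := by
  obtain ⟨V, _, rfl⟩ := h
  exact V.char_conj g k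

lemma irr_orth {G : Type} [Group G] [Fintype G] {χ ψ : G → ℂ} (h : IsIrrChar G χ)
    (h' : IsIrrChar G ψ) [Decidable (χ = ψ)] :
    ∑ g, χ g * conj (ψ g) = if χ = ψ then (Fintype.card G : ℂ) else 0 := by
  simp_rw [← irr_conj h']
  obtain ⟨V, hV, rfl⟩ := h
  obtain ⟨W, hW, rfl⟩ := h'
  split_ifs with e
  · rw [← e, ← Nat.card_eq_fintype_card]
    exact (FDRep.simple_iff_char_is_norm_one V).1 hV
  · have hc : (Nat.card G : ℂ) ≠ 0 := by simp
    let : Invertible (Nat.card G : ℂ) := invertibleOfNonzero hc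
    have := FDRep.char_orthonormal V W
    rw [if_neg] at this
    · rcases mul_eq_zero.1 this with h | h
      · exact absurd (inv_eq_zero.1 h) hc
      · exact h
    · rintro ⟨i⟩
      exact e (FDRep.char_iso i)

/-- the type of irreducible characters -/
abbrev Irr (G : Type) [Group G] := {χ : G → ℂ // IsIrrChar G χ}

noncomputable def irrVec {G : Type} [Group G] [Fintype G] (χ : Irr G) : EuclideanSpace ℂ G :=
  WithLp.toLp 2 (fun g => ((Real.sqrt (Fintype.card G))⁻¹ : ℂ) * χ.1 g)

lemma irrVec_orth {G : Type} [Group G] [Fintype G] :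
    Orthonormal ℂ (irrVec (G := G)) := by
  classical
  rw [orthonormal_iff_ite]
  intro χ ψ
  have h := irr_orth ψ.2 χ.2
  have h3 : ((Real.sqrt (Fintype.card G) : ℂ))⁻¹ * ((Real.sqrt (Fintype.card G) : ℂ))⁻¹
      * (Fintype.card G : ℂ) = 1 := by
    have : (Real.sqrt (Fintype.card G) : ℂ) * (Real.sqrt (Fintype.card G) : ℂ)
        = (Fintype.card G : ℂ) := by
      rw [← Complex.ofReal_mul, Real.mul_self_sqrt (by positivity)]; simp
    rw [← mul_inv, this, inv_mul_cancel₀]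
    simp
  have : inner ℂ (irrVec χ) (irrVec ψ) = ((Real.sqrt (Fintype.card G) : ℂ))⁻¹ *
      ((Real.sqrt (Fintype.card G) : ℂ))⁻¹ * ∑ g, ψ.1 g * conj (χ.1 g) := by
    rw [PiLp.inner_apply, Finset.mul_sum]
    apply Finset.sum_congr rfl
    intro g _
    simp [irrVec]
    ring
  rw [this, h]
  by_cases hcp : χ = ψ
  · subst hcp; simpa using h3
  · rw [if_neg hcp, if_neg (fun e => hcp (Subtype.ext e.symm)), mul_zero]

instance irr_finite {G : Type} [Group G] [Finite G] : Finite (Irr G) := by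
  have : Fintype G := Fintype.ofFinite G
  exact (irrVec_orth (G := G)).linearIndependent.finite

/-- Bessel-type inequality -/
lemma irr_bessel {G : Type} [Group G] [Fintype G] [DecidableEq G] (S : Finset (Irr G))
    {I : Type} [Fintype I] (c : I → ℂ) (y : I → G) :
    ∑ χ ∈ S, ‖∑ i, c i * χ.1 (y i)‖ ^ 2 ≤
      ∑ i, ∑ j, ‖c i‖ * ‖c j‖ * (Fintype.card {h : G // h * y i = y j * h} : ℝ) := by
  classical
  let N : ℝ := Fintype.card G
  have hN : 0 < N := by simp only [N]; exact_mod_cast Fintype.card_pos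
  -- vector
  let φ : EuclideanSpace ℂ G := WithLp.toLp 2 (fun g =>
    ∑ i, conj (c i) * (Fintype.card {h : G // h * y i = g * h} : ℂ))
  have hsum : ∀ (f : G → ℂ) (i : I), ∑ g, (Fintype.card {h : G // h * y i = g * h} : ℂ) * f g =
      ∑ h : G, f (h * y i * h⁻¹) := by
    intro f i
    have : ∀ g, (Fintype.card {h : G // h * y i = g * h} : ℂ) * f g =
        ∑ h : G, if h * y i * h⁻¹ = g then f g else 0 := by
      intro g
      rw [← Finset.sum_filter, Finset.sum_const, nsmul_eq_mul, Fintype.card_subtype]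
      congr 3
      ext h
      simp [mul_inv_eq_iff_eq_mul]
    simp_rw [this]
    rw [Finset.sum_comm]
    simp
  have h1 : ∀ χ : Irr G, ‖inner ℂ (irrVec χ) φ‖ ^ 2 = N * ‖∑ i, c i * χ.1 (y i)‖ ^ 2 := by
    intro χ
    have : inner ℂ (irrVec χ) φ = ((Real.sqrt N : ℂ))⁻¹ * N * conj (∑ i, c i * χ.1 (y i)) := by
      rw [PiLp.inner_apply]
      simp only [irrVec, φ, RCLike.inner_apply, map_mul, map_inv₀, Complex.conj_ofReal]
      rw [map_sum, Finset.mul_sum]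
      have : ∀ g, (∑ i, conj (c i) * (Fintype.card {h : G // h * y i = g * h} : ℂ)) *
          (((Real.sqrt N : ℂ))⁻¹ * conj (χ.1 g)) = ∑ i, ((Real.sqrt N : ℂ))⁻¹ * conj (c i) *
          ((Fintype.card {h : G // h * y i = g * h} : ℂ) * conj (χ.1 g)) := by
        intro g; rw [Finset.sum_mul]; apply Finset.sum_congr rfl; intro i _; ring
      erw [Finset.sum_congr rfl (fun g _ => this g)]
      rw [Finset.sum_comm]
      apply Finset.sum_congr rfl
      intro i _
      rw [← Finset.mul_sum, hsum (fun g => conj (χ.1 g))]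
      simp_rw [irr_class χ.2]
      simp [N]
      ring
    rw [this]
    simp only [norm_mul, norm_inv, Complex.norm_real, RCLike.norm_conj, mul_pow, inv_pow]
    rw [Real.norm_eq_abs, Real.norm_eq_abs, sq_abs, sq_abs, Real.sq_sqrt hN.le]
    field_simp
  have h2 : ‖φ‖ ^ 2 ≤ N * ∑ i, ∑ j, ‖c i‖ * ‖c j‖ *
      (Fintype.card {h : G // h * y i = y j * h} : ℝ) := by
    rw [EuclideanSpace.norm_sq_eq]
    have hb : ∀ g, ‖φ g‖ ≤ ∑ i, ‖c i‖ * (Fintype.card {h : G // h * y i = g * h} : ℝ) := by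
      intro g
      refine (norm_sum_le _ _).trans ?_
      apply Finset.sum_le_sum
      intro i _
      simp
    have hconj : ∀ i j, ∑ g, (Fintype.card {h : G // h * y i = g * h} : ℝ) *
        (Fintype.card {h : G // h * y j = g * h} : ℝ) =
        N * (Fintype.card {h : G // h * y i = y j * h} : ℝ) := by
      intro i j
      have h0 := hsum (fun g => (Fintype.card {h : G // h * y i = g * h} : ℂ)) j
      have h3 : ∀ k : G, Fintype.card {h : G // h * y i = (k * y j * k⁻¹) * h} =
          Fintype.card {h : G // h * y i = y j * h} := by
        intro k
        apply Fintype.card_congr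
        refine Equiv.subtypeEquiv (Equiv.mulLeft k⁻¹) ?_
        intro h
        simp only [Equiv.coe_mulLeft]
        constructor
        · intro e; rw [mul_assoc, e]; group
        · intro e
          have := congrArg (k * ·) e
          simp only [mul_assoc, mul_inv_cancel_left] at this
          rw [this]; group
      have h4 : ((∑ g, (Fintype.card {h : G // h * y i = g * h} : ℝ) *
        (Fintype.card {h : G // h * y j = g * h} : ℝ) : ℝ) : ℂ) =
        ((N * (Fintype.card {h : G // h * y i = y j * h} : ℝ) : ℝ) : ℂ) := by
        push_cast
        simp_rw [h3] at h0
        simp only [Finset.sum_const, nsmul_eq_mul] at h0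
        rw [Finset.card_univ] at h0
        simp only [N]
        push_cast
        rw [← h0]
        apply Finset.sum_congr rfl; intro g _; ring
      exact_mod_cast h4
    calc ∑ g, ‖φ g‖ ^ 2 ≤ ∑ g, (∑ i, ‖c i‖ * (Fintype.card {h : G // h * y i = g * h} : ℝ)) ^ 2 := by
          apply Finset.sum_le_sum
          intro g _
          exact pow_le_pow_left₀ (norm_nonneg _) (hb g) 2
      _ = ∑ i, ∑ j, ‖c i‖ * ‖c j‖ * ∑ g, (Fintype.card {h : G // h * y i = g * h} : ℝ) *
        (Fintype.card {h : G // h * y j = g * h} : ℝ) := by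
          simp_rw [sq, Finset.sum_mul_sum, Finset.mul_sum]
          rw [Finset.sum_comm]
          apply Finset.sum_congr rfl; intro i _
          rw [Finset.sum_comm]
          apply Finset.sum_congr rfl; intro j _
          apply Finset.sum_congr rfl; intro g _
          ring
      _ = _ := by
          simp_rw [hconj, Finset.mul_sum]
          apply Finset.sum_congr rfl; intro i _
          apply Finset.sum_congr rfl; intro j _
          ring
  have h3 := (irrVec_orth (G := G)).sum_inner_products_le φ (s := S)
  simp_rw [h1] at h3
  rw [← Finset.mul_sum] at h3
  exact le_of_mul_le_mul_left (h3.trans h2) hN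

end CharTheory

open Matrix

section CharTheory2
open scoped BigOperators ComplexConjugate

lemma trace_integral {V : Type} [AddCommGroup V] [Module ℂ V] [FiniteDimensional ℂ V]
    (T : Module.End ℂ V) (N : ℕ) (hN : 1 ≤ N) (hT : T ^ (N + 1) = T) :
    IsIntegral ℤ (LinearMap.trace ℂ V T) := by
  rw [Module.End.trace_eq_sum_roots_charpoly_of_splits (IsAlgClosed.splits _)]
  apply Subalgebra.multiset_sum_mem (integralClosure ℤ ℂ)
  intro μ hμ
  have h1 := (Polynomial.mem_roots'.1 hμ).2
  rw [← Module.End.hasEigenvalue_iff_isRoot_charpoly] at h1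
  obtain ⟨v, hv⟩ := h1.exists_hasEigenvector
  have h2 : μ ^ (N + 1) = μ := by
    have := hv.pow_apply (N + 1)
    rw [hT, hv.apply_eq_smul] at this
    exact (smul_left_injective ℂ hv.2 this).symm
  refine ⟨Polynomial.X ^ (N + 1) - Polynomial.X, ?_, ?_⟩
  · apply Polynomial.monic_X_pow_sub
    rw [Polynomial.degree_X]; norm_cast; omega
  · simp [h2]

lemma irr_of_rep {G : Type} [Group G] [Fintype G] {V : Type} [AddCommGroup V] [Module ℂ V]
    [FiniteDimensional ℂ V] (ρ : Representation ℂ G V) [ρ.IsIrreducible] :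
    IsIrrChar G ρ.character := by
  refine ⟨FDRep.of ρ, ?_, rfl⟩
  rw [FDRep.simple_iff_char_is_norm_one]
  have hc : (Nat.card G : ℂ) ≠ 0 := by simp
  let : Invertible (Nat.card G : ℂ) := invertibleOfNonzero hc
  have := Representation.char_orthonormal ρ ρ
  rw [if_pos ⟨Representation.Equiv.refl ρ⟩] at this
  rw [inv_mul_eq_iff_eq_mul₀ hc, mul_one] at this
  exact this

lemma card_conjClasses_le_irr (G : Type) [Group G] [Fintype G] :
    Nat.card (ConjClasses G) ≤ Nat.card (Irr G) := by
  classical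
  obtain ⟨r, d, hd, ⟨e⟩⟩ :=
    IsSemisimpleRing.exists_algEquiv_pi_matrix_of_isAlgClosed ℂ (MonoidAlgebra ℂ G)
  let π : ∀ i, MonoidAlgebra ℂ G →ₐ[ℂ] Matrix (Fin (d i)) (Fin (d i)) ℂ :=
    fun i => (Pi.evalAlgHom ℂ _ i).comp e.toAlgHom
  have hπ : ∀ i, Function.Surjective (π i) := by
    intro i M
    obtain ⟨x, hx⟩ := e.surjective (Pi.single i M)
    exact ⟨x, by simp [π, hx]⟩
  let ρ : ∀ i, Representation ℂ G (Fin (d i) → ℂ) := fun i =>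
    ((Matrix.toLinAlgEquiv' (R := ℂ) (n := Fin (d i))).toAlgHom.comp (π i)).toMonoidHom.comp
      (MonoidAlgebra.of ℂ G)
  have hρalg : ∀ i x, (ρ i).asAlgebraHom x = Matrix.toLinAlgEquiv' (π i x) := by
    intro i x
    have : (ρ i).asAlgebraHom =
      ((Matrix.toLinAlgEquiv' (R := ℂ) (n := Fin (d i))).toAlgHom.comp (π i)) := by
      apply MonoidAlgebra.algHom_ext'
      · ext1 g
        simp [ρ]
      · exact Subsingleton.elim _ _
    rw [this]; rfl
  have hirr : ∀ i, (ρ i).IsIrreducible := by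
    intro i
    have := hd i
    refine { exists_pair_ne := ⟨⊥, ⊤, ?_⟩, eq_bot_or_eq_top := ?_ }
    · intro h
      have : (1 : Fin (d i) → ℂ) ∈ (⊥ : Subrepresentation (ρ i)) := by rw [h]; trivial
      have h1 : (1 : Fin (d i) → ℂ) = 0 := this
      exact one_ne_zero h1
    · intro W
      by_cases hW : ∀ v ∈ W, v = 0
      · left
        apply Subrepresentation.toSubmodule_injective
        ext v
        exact ⟨fun h => hW v h, fun h => by
          have h0 : v = 0 := h
          rw [h0]; exact W.toSubmodule.zero_mem⟩
      · right
        push Not at hW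
        obtain ⟨v, hv, hv0⟩ := hW
        apply Subrepresentation.toSubmodule_injective
        ext w
        refine ⟨fun _ => trivial, fun _ => ?_⟩
        obtain ⟨j, hj⟩ := Function.ne_iff.1 hv0
        obtain ⟨x, hx⟩ := hπ i (Matrix.vecMulVec w (Pi.single j (v j)⁻¹))
        have := (ρ i).asAlgebraHom_mem_of_forall_mem W.toSubmodule
          (fun g v hv => W.apply_mem_toSubmodule g hv) v hv x
        rw [hρalg, hx] at this
        convert this
        ext a
        have hj' : v j ≠ 0 := hj
        simp [Matrix.mulVec, dotProduct, Matrix.vecMulVec_apply, Pi.single_apply, hj']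
  let I : Fin r → Irr G := fun i => ⟨(ρ i).character, by have := hirr i; exact irr_of_rep (ρ i)⟩
  have htr : ∀ i (x : MonoidAlgebra ℂ G), Matrix.trace (π i x) =
      x.coeff.sum (fun g c => c * (ρ i).character g) := by
    intro i x
    conv_lhs => rw [← MonoidAlgebra.sum_coeff_single x]
    rw [Finsupp.sum, map_sum, Matrix.trace_sum, Finsupp.sum]
    apply Finset.sum_congr rfl
    intro g _
    have h1 : (ρ i).character g = Matrix.trace (π i (MonoidAlgebra.of ℂ G g)) := by
      exact Matrix.trace_toLin'_eq _
    have h2 : MonoidAlgebra.single g (x.coeff g) = x.coeff g • MonoidAlgebra.of ℂ G g := by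
      simp
    rw [h2, map_smul, Matrix.trace_smul, h1, smul_eq_mul]
  have hI : Function.Injective I := by
    intro i j hij
    by_contra hne
    have hch : (ρ i).character = (ρ j).character := congrArg Subtype.val hij
    have := hd i
    obtain ⟨x, hx⟩ := e.surjective (Pi.single i (Matrix.single 0 0 1))
    have h1 := htr i x
    have h2 := htr j x
    rw [← hch, ← h1] at h2
    simp [π, hx, Ne.symm hne] at h2
  have hr : r ≤ Nat.card (Irr G) := by
    have := Nat.card_le_card_of_injective I hI
    simpa using this
  refine le_trans ?_ hr
  let L : (ConjClasses G → ℂ) →ₗ[ℂ] (Fin r → ℂ) :=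
    { toFun := fun f i => ∑ g, f (ConjClasses.mk g) * (ρ i).character g
      map_add' := fun f f' => by
        ext i; simp [add_mul, Finset.sum_add_distrib]
      map_smul' := fun c f => by
        ext i; simp [Finset.mul_sum, mul_assoc] }
  have hL : Function.Injective L := by
    rw [injective_iff_map_eq_zero]
    intro f hf
    let c : MonoidAlgebra ℂ G := MonoidAlgebra.ofCoeff
      (Finsupp.equivFunOnFinite.symm (fun g => f (ConjClasses.mk g)))
    have hcent : ∀ g, MonoidAlgebra.of ℂ G g * c = c * MonoidAlgebra.of ℂ G g := by
      intro g
      ext h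
      rw [MonoidAlgebra.of_apply, MonoidAlgebra.coeff_single_mul_eq_mul_coeff (g⁻¹ * h)
        (by intro m _; rw [eq_inv_mul_iff_mul_eq]),
        MonoidAlgebra.coeff_mul_single_eq_coeff_mul (h * g⁻¹)
        (by intro m _; rw [eq_mul_inv_iff_mul_eq]), one_mul, mul_one]
      change f (ConjClasses.mk _) = f (ConjClasses.mk _)
      congr 1
      rw [ConjClasses.mk_eq_mk_iff_isConj, isConj_iff]
      exact ⟨g, by group⟩
    have hcent2 : ∀ x, x * c = c * x := by
      intro x
      induction x using MonoidAlgebra.induction_on with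
      | of g => exact hcent g
      | add a b ha hb => rw [add_mul, mul_add, ha, hb]
      | smul a x hx => rw [smul_mul_assoc, mul_smul_comm, hx]
    have hzero : ∀ i, π i c = 0 := by
      intro i
      have := hd i
      have h1 : π i c ∈ Set.range (Matrix.scalar (Fin (d i))) := by
        apply Matrix.mem_range_scalar_of_commute_single
        intro a b _
        obtain ⟨x, hx⟩ := hπ i (Matrix.single a b 1)
        rw [← hx]
        change _ * _ = _ * _
        rw [← map_mul, ← map_mul, hcent2]
      obtain ⟨s, hs⟩ := h1
      have h2 : Matrix.trace (π i c) = 0 := by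
        rw [htr, Finsupp.sum_fintype _ _ (by simp)]
        exact congrFun hf i
      rw [← hs] at h2 ⊢
      simp [Matrix.trace_diagonal, NeZero.ne] at h2
      simp [h2]
    have hc0 : c = 0 := by
      apply e.injective
      rw [map_zero]
      ext1 i
      exact hzero i
    ext g
    obtain ⟨g, rfl⟩ := ConjClasses.mk_surjective g
    have : c.coeff g = 0 := by rw [hc0]; rfl
    exact this
  have := LinearMap.finrank_le_finrank_of_injective hL
  simpa [Nat.card_eq_fintype_card] using this

end CharTheory2

open Matrix

section ClassLower
open Polynomial

lemma exists_matrix_charpoly {F : Type} [Field F] {n : ℕ} (f : F[X]) (hf : f.Monic)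
    (hn : f.natDegree = n) : ∃ M : Matrix (Fin n) (Fin n) F, M.charpoly = f := by
  subst hn
  refine ⟨Algebra.leftMulMatrix (AdjoinRoot.powerBasis hf.ne_zero).basis
    (AdjoinRoot.powerBasis hf.ne_zero).gen, ?_⟩
  have := charpoly_leftMulMatrix (AdjoinRoot.powerBasis hf.ne_zero)
  rw [AdjoinRoot.minpoly_powerBasis_gen_of_monic hf] at this
  exact this

lemma conjClasses_lower (F : Type) [Field F] [Fintype F] (k : ℕ) :
    (Fintype.card F - 1) * Fintype.card F ^ k ≤ Nat.card (ConjClasses (GL (Fin (k + 1)) F)) := by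
  classical
  let P : (Fin (k + 1) → F) → F[X] := fun a =>
    X ^ (k + 1) + ((degreeLTEquiv F (k + 1)).symm a : F[X])
  have hdeg : ∀ a, ((degreeLTEquiv F (k + 1)).symm a : F[X]).degree < (k + 1 : ℕ) := fun a =>
    mem_degreeLT.1 ((degreeLTEquiv F (k + 1)).symm a).2
  have hmon : ∀ a, (P a).Monic := fun a => monic_X_pow_add (hdeg a)
  have hnat : ∀ a, (P a).natDegree = k + 1 := by
    intro a
    simp only [P]
    rw [natDegree_add_eq_left_of_degree_lt, natDegree_X_pow]
    rw [degree_X_pow]; exact hdeg a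
  have hinj : Function.Injective P := by
    intro a b h
    have := add_left_cancel h
    exact (degreeLTEquiv F (k + 1)).symm.injective (Subtype.ext this)
  have h0 : ∀ a, (P a).coeff 0 = a 0 := by
    intro a
    have h1 : (degreeLTEquiv F (k + 1)) ((degreeLTEquiv F (k + 1)).symm a) 0 = a 0 := by simp
    rw [← h1]
    simp [P, degreeLTEquiv]
  choose M hM using fun a => exists_matrix_charpoly (P a) (hmon a) (hnat a)
  let S := {a : Fin (k + 1) → F // a 0 ≠ 0}
  have hdet : ∀ a : S, IsUnit (M a.1).det := by
    intro a
    rw [Matrix.det_eq_sign_charpoly_coeff, hM, h0, isUnit_iff_ne_zero]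
    exact mul_ne_zero (by simp) a.2
  let Φ : S → ConjClasses (GL (Fin (k + 1)) F) := fun a =>
    ConjClasses.mk (Matrix.GeneralLinearGroup.mk'' (M a.1) (hdet a))
  have hΦ : Function.Injective Φ := by
    intro a b h
    rw [ConjClasses.mk_eq_mk_iff_isConj, isConj_iff] at h
    obtain ⟨c, hc⟩ := h
    have h2 : (M b.1).charpoly = (M a.1).charpoly := by
      rw [← Matrix.charpoly_units_conj c (M a.1)]
      have := congrArg Units.val hc
      simp only [Units.val_mul] at this
      rw [Matrix.coe_units_inv] at this
      exact congrArg Matrix.charpoly this.symm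
    rw [hM, hM] at h2
    exact Subtype.ext (hinj h2.symm)
  have h3 := Nat.card_le_card_of_injective Φ hΦ
  refine le_trans (le_of_eq ?_) h3
  have e : S ≃ {x : F // x ≠ 0} × (Fin k → F) :=
    { toFun := fun a => (⟨a.1 0, a.2⟩, fun i => a.1 i.succ)
      invFun := fun p => ⟨Fin.cons p.1.1 p.2, by simpa using p.1.2⟩
      left_inv := fun a => by
        ext i
        refine Fin.cases ?_ (fun j => ?_) i <;> simp
      right_inv := fun p => by simp }
  rw [Nat.card_congr e, Nat.card_prod, Nat.card_eq_fintype_card, Nat.card_eq_fintype_card]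
  simp [Fintype.card_subtype_compl]

/-- lower bound for the number of irreducible characters -/
lemma irr_lower (F : Type) [Field F] [Fintype F] (q : ℕ) (hq : Fintype.card F = q) (hq3 : 3 ≤ q)
    (n : ℕ) (hn : 1 ≤ n) :
    (q : ℝ) ^ n / 2 ≤ (Nat.card (Irr (GL (Fin n) F)) : ℝ) := by
  obtain ⟨k, rfl⟩ : ∃ k, n = k + 1 := ⟨n - 1, by omega⟩
  classical
  have h1 := conjClasses_lower F k
  have h2 := card_conjClasses_le_irr (GL (Fin (k + 1)) F)
  have h3 := h1.trans h2
  rw [hq] at h3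
  have h4 : (((q - 1) * q ^ k : ℕ) : ℝ) ≤ (Nat.card (Irr (GL (Fin (k + 1)) F)) : ℝ) := by
    exact_mod_cast h3
  refine le_trans ?_ h4
  push_cast [Nat.cast_sub (show 1 ≤ q by omega)]
  rw [pow_succ]
  have : (3 : ℝ) ≤ q := by exact_mod_cast hq3
  have hp : (0 : ℝ) < (q : ℝ) ^ k := by positivity
  nlinarith

end ClassLower

open Matrix

section ClassUpper
open Polynomial

lemma exists_equiv_of_map_eq {ι ι' X : Type} [Fintype ι] [Fintype ι'] (f : ι → X) (g : ι' → X)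
    (h : (Finset.univ : Finset ι).val.map f = (Finset.univ : Finset ι').val.map g) :
    ∃ σ : ι ≃ ι', ∀ i, g (σ i) = f i := by
  classical
  have hc : ∀ x, Nonempty ({i // f i = x} ≃ {j // g j = x}) := by
    intro x
    rw [← Fintype.card_eq, Fintype.card_subtype, Fintype.card_subtype]
    have := congrArg (Multiset.count x) h
    rw [Multiset.count_map, Multiset.count_map] at this
    simp only [Finset.card_def, Finset.filter_val]
    simp_rw [eq_comm (a := x)] at this
    convert this
  let e : ∀ x, {i // f i = x} ≃ {j // g j = x} := fun x => (hc x).some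
  refine ⟨(Equiv.sigmaFiberEquiv f).symm.trans
    ((Equiv.sigmaCongrRight e).trans (Equiv.sigmaFiberEquiv g)), ?_⟩
  intro i
  simp only [Equiv.trans_apply, Equiv.sigmaFiberEquiv, Equiv.sigmaCongrRight, Equiv.coe_fn_mk,
    Equiv.coe_fn_symm_mk]
  exact (e (f i) ⟨i, rfl⟩).2

def PDec {F : Type} [Field F] {m : ℕ} (A : Matrix (Fin m) (Fin m) F)
    (s : Multiset (F[X] × ℕ)) : Prop :=
  ∃ (ι : Type) (_ : Fintype ι) (pe : ι → F[X] × ℕ), (Finset.univ : Finset ι).val.map pe = s ∧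
    Nonempty (Module.AEval' (Matrix.toLin' A) ≃ₗ[F[X]]
      (∀ i, F[X] ⧸ Ideal.span {(pe i).1 ^ (pe i).2}))

lemma aeval_equiv {F : Type} [Field F] {V : Type} [AddCommGroup V] [Module F V] (a b : Module.End F V)
    (φ : Module.AEval' a ≃ₗ[F[X]] Module.AEval' b) :
    ∃ ψ : V ≃ₗ[F] V, ∀ v, ψ (a v) = b (ψ v) := by
  refine ⟨((Module.AEval'.of a).trans (φ.restrictScalars F)).trans (Module.AEval'.of b).symm, ?_⟩
  intro v
  apply (Module.AEval'.of b).injective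
  rw [← Module.AEval'.X_smul_of]
  simp only [LinearEquiv.trans_apply, LinearEquiv.apply_symm_apply,
      LinearEquiv.restrictScalars_apply]
  rw [← map_smul, Module.AEval'.X_smul_of]

lemma pdec_conj {F : Type} [Field F] {m : ℕ} {A B : Matrix (Fin m) (Fin m) F}
    {s : Multiset (F[X] × ℕ)} (hA : PDec A s) (hB : PDec B s) :
    ∃ P : GL (Fin m) F, P.1 * A = B * P.1 := by
  obtain ⟨ι, _, pe, hpe, ⟨e⟩⟩ := hA
  obtain ⟨ι', _, pe', hpe', ⟨e'⟩⟩ := hB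
  obtain ⟨σ, hσ⟩ := exists_equiv_of_map_eq pe pe' (hpe.trans hpe'.symm)
  have e1 : (∀ i, F[X] ⧸ Ideal.span {(pe i).1 ^ (pe i).2}) ≃ₗ[F[X]]
      (∀ i, F[X] ⧸ Ideal.span {(pe' i).1 ^ (pe' i).2}) := by
    have : pe = fun i => pe' (σ i) := funext fun i => (hσ i).symm
    rw [this]
    exact LinearEquiv.piCongrLeft F[X] (fun i => F[X] ⧸ Ideal.span {(pe' i).1 ^ (pe' i).2}) σ
  let φ : Module.AEval' (Matrix.toLin' A) ≃ₗ[F[X]] Module.AEval' (Matrix.toLin' B) :=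
    (e.trans e1).trans e'.symm
  obtain ⟨ψ, hψ⟩ := aeval_equiv _ _ φ
  refine ⟨⟨LinearMap.toMatrix' ψ.toLinearMap, LinearMap.toMatrix' ψ.symm.toLinearMap, ?_, ?_⟩, ?_⟩
  · rw [← LinearMap.toMatrix'_comp]; simp
  · rw [← LinearMap.toMatrix'_comp]; simp
  change LinearMap.toMatrix' ψ.toLinearMap * A = B * LinearMap.toMatrix' ψ.toLinearMap
  apply Matrix.toLin'.injective
  rw [Matrix.toLin'_mul, Matrix.toLin'_mul, Matrix.toLin'_toMatrix']
  exact LinearMap.ext fun v => hψ v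

lemma pdec_exists {F : Type} [Field F] {m : ℕ} (A : Matrix (Fin m) (Fin m) F) :
    ∃ s, PDec A s ∧ (∀ x ∈ s, x.1.Monic ∧ Irreducible x.1 ∧ 1 ≤ x.2) ∧
      (s.map (fun x => x.2 * x.1.natDegree)).sum = m := by
  classical
  have htor : Module.IsTorsion F[X] (Module.AEval' (Matrix.toLin' A)) :=
    Module.AEval.isTorsion_of_finiteDimensional F (Fin m → F) (Matrix.toLin' A)
  have hfin : Module.Finite F[X] (Module.AEval' (Matrix.toLin' A)) := inferInstance
  obtain ⟨ι, hι, p, hp, e, ⟨E⟩⟩ := Module.equiv_directSum_of_isTorsion htor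
  let J := {i // e i ≠ 0}
  let pe : J → F[X] × ℕ := fun i => (normalize (p i), e i)
  have hmonic : ∀ i, (normalize (p i)).Monic := fun i => monic_normalize (hp i).ne_zero
  have E1 := E.trans (DirectSum.linearEquivFunOnFintype F[X] ι _)
  let R : (∀ i, F[X] ⧸ F[X] ∙ p i ^ e i) →ₗ[F[X]] (∀ i : J, F[X] ⧸ F[X] ∙ p i ^ e i) :=
    LinearMap.pi fun i => LinearMap.proj i.1
  have hsub : ∀ i, e i = 0 → Subsingleton (F[X] ⧸ F[X] ∙ p i ^ e i) := by
    intro i hi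
    rw [Submodule.Quotient.subsingleton_iff, hi, pow_zero]
    exact Ideal.span_singleton_one
  have hR : Function.Bijective R := by
    constructor
    · intro a b h
      funext i
      by_cases hi : e i = 0
      · have := hsub i hi
        exact Subsingleton.elim _ _
      · exact congrFun h ⟨i, hi⟩
    · intro b
      refine ⟨fun i => if hi : e i ≠ 0 then b ⟨i, hi⟩ else 0, ?_⟩
      funext i
      change dite _ _ _ = _
      rw [dif_pos i.2]
  have E2 := E1.trans (LinearEquiv.ofBijective R hR)
  have hspan : ∀ i : J, (F[X] ∙ p i ^ e i : Submodule F[X] F[X]) =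
      Ideal.span {(pe i).1 ^ (pe i).2} := by
    intro i
    apply Ideal.span_singleton_eq_span_singleton.2
    exact (Associated.pow_pow (normalize_associated (p i)).symm)
  have E3 : Module.AEval' (Matrix.toLin' A) ≃ₗ[F[X]]
      (∀ i, F[X] ⧸ Ideal.span {(pe i).1 ^ (pe i).2}) :=
    E2.trans (LinearEquiv.piCongrRight fun i => Submodule.quotEquivOfEq _ _ (hspan i))
  refine ⟨(Finset.univ : Finset J).val.map pe, ⟨J, inferInstance, pe, rfl, ⟨E3⟩⟩, ?_, ?_⟩
  · intro x hx
    obtain ⟨i, _, rfl⟩ := Multiset.mem_map.1 hx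
    exact ⟨hmonic i, (normalize_associated (p i)).symm.irreducible (hp i),
      Nat.one_le_iff_ne_zero.2 i.2⟩
  · have hfd : ∀ i, Module.Finite F (F[X] ⧸ Ideal.span {(pe i).1 ^ (pe i).2}) := by
      intro i
      exact ((hmonic i).pow (e i)).finite_quotient
    have h1 : Module.finrank F (Module.AEval' (Matrix.toLin' A)) = m := by
      rw [← (Module.AEval'.of (Matrix.toLin' A)).finrank_eq]; simp
    rw [(E3.restrictScalars F).finrank_eq, Module.finrank_pi_fintype] at h1
    simp_rw [finrank_quotient_span_eq_natDegree] at h1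
    rw [Multiset.map_map]
    conv_rhs => rw [← h1]
    apply Finset.sum_congr rfl
    intro i _
    simp [natDegree_pow]

end ClassUpper

open Matrix

section ClassUpper2
open Polynomial

noncomputable def gE {F : Type} [Field F] (s : Multiset (F[X] × ℕ)) (e : ℕ) : F[X] :=
  ((s.filter (fun x => x.2 = e)).map Prod.fst).prod

lemma gE_natDegree {F : Type} [Field F] (s : Multiset (F[X] × ℕ)) (hs : ∀ x ∈ s, x.1.Monic)
    (e : ℕ) : (gE s e).natDegree = ((s.filter (fun x => x.2 = e)).map (fun x => x.1.natDegree)).sum := by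
  unfold gE
  rw [natDegree_multiset_prod_of_monic, Multiset.map_map]
  · rfl
  · intro f hf
    obtain ⟨x, hx, rfl⟩ := Multiset.mem_map.1 hf
    exact hs x (Multiset.mem_of_mem_filter hx)

lemma gE_monic {F : Type} [Field F] (s : Multiset (F[X] × ℕ)) (hs : ∀ x ∈ s, x.1.Monic)
    (e : ℕ) : (gE s e).Monic := by
  unfold gE
  apply monic_multiset_prod_of_monic
  intro x hx
  exact hs x (Multiset.mem_of_mem_filter hx)

lemma gE_sum {F : Type} [Field F] (m : ℕ) (s : Multiset (F[X] × ℕ))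
    (hs : ∀ x ∈ s, 1 ≤ x.2 ∧ x.2 ≤ m + 1) :
    (∑ i : Fin m, (i.1 + 2) * ((s.filter (fun x => x.2 = i.1 + 2)).map (fun x => x.1.natDegree)).sum)
      + ((s.filter (fun x => x.2 = 1)).map (fun x => x.1.natDegree)).sum =
    (s.map (fun x => x.2 * x.1.natDegree)).sum := by
  induction s using Multiset.induction with
  | empty => simp
  | cons x s ih =>
    have ih' := ih fun y hy => hs y (Multiset.mem_cons_of_mem hy)
    have key : ∀ e, (((x ::ₘ s).filter (fun x => x.2 = e)).map (fun x => x.1.natDegree)).sum =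
        (if x.2 = e then x.1.natDegree else 0) +
        ((s.filter (fun x => x.2 = e)).map (fun x => x.1.natDegree)).sum := by
      intro e
      rw [Multiset.filter_cons]
      split_ifs <;> simp
    simp only [key, Multiset.map_cons, Multiset.sum_cons, mul_add, Finset.sum_add_distrib]
    rw [← ih']
    have h2 : (∑ i : Fin m, (i.1 + 2) * (if x.2 = i.1 + 2 then x.1.natDegree else 0)) +
        (if x.2 = 1 then x.1.natDegree else 0) = x.2 * x.1.natDegree := by
      obtain ⟨h1, h3⟩ := hs x (Multiset.mem_cons_self _ _)
      rcases h1.eq_or_lt with h | h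
      · rw [← h]; simp
      · obtain ⟨j, hj⟩ : ∃ j : Fin m, x.2 = j.1 + 2 := ⟨⟨x.2 - 2, by omega⟩, by simp; omega⟩
        rw [Finset.sum_eq_single j]
        · rw [if_pos hj, hj]; simp
        · intro b _ hb
          rw [if_neg, mul_zero]
          intro h'
          apply hb; ext; omega
        · simp
    omega

lemma gE_inj {F : Type} [Field F] (m : ℕ) (s s' : Multiset (F[X] × ℕ))
    (hs : ∀ x ∈ s, (x.1.Monic ∧ Irreducible x.1) ∧ 1 ≤ x.2 ∧ x.2 ≤ m + 1)
    (hs' : ∀ x ∈ s', (x.1.Monic ∧ Irreducible x.1) ∧ 1 ≤ x.2 ∧ x.2 ≤ m + 1)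
    (h : ∀ e, 1 ≤ e → e ≤ m + 1 → gE s e = gE s' e) : s = s' := by
  classical
  have aux : ∀ t : Multiset (F[X] × ℕ), (∀ x ∈ t, (x.1.Monic ∧ Irreducible x.1) ∧ 1 ≤ x.2 ∧ x.2 ≤ m + 1) →
      ∀ e, UniqueFactorizationMonoid.normalizedFactors (gE t e) =
        (t.filter (fun x => x.2 = e)).map Prod.fst := by
    intro t ht e
    unfold gE
    rw [UniqueFactorizationMonoid.normalizedFactors_prod_eq]
    · conv_rhs => rw [← Multiset.map_id ((t.filter (fun x => x.2 = e)).map Prod.fst)]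
      apply Multiset.map_congr rfl
      intro x hx
      obtain ⟨y, hy, rfl⟩ := Multiset.mem_map.1 hx
      exact (ht y (Multiset.mem_of_mem_filter hy)).1.1.normalize_eq_self
    · intro x hx
      obtain ⟨y, hy, rfl⟩ := Multiset.mem_map.1 hx
      exact (ht y (Multiset.mem_of_mem_filter hy)).1.2
  have hback : ∀ t : Multiset (F[X] × ℕ), ∀ e, t.filter (fun x => x.2 = e) =
      ((t.filter (fun x => x.2 = e)).map Prod.fst).map (fun p => (p, e)) := by
    intro t e
    rw [Multiset.map_map]
    conv_lhs => rw [← Multiset.map_id (t.filter (fun x => x.2 = e))]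
    apply Multiset.map_congr rfl
    intro x hx
    have := Multiset.of_mem_filter hx
    ext1 <;> simp [this]
  have hf : ∀ e, 1 ≤ e → e ≤ m + 1 → s.filter (fun x => x.2 = e) = s'.filter (fun x => x.2 = e) := by
    intro e h1 h2
    rw [hback s e, hback s' e, ← aux s hs, ← aux s' hs', h e h1 h2]
  ext ⟨p, e⟩
  by_cases he : 1 ≤ e ∧ e ≤ m + 1
  · have := congrArg (Multiset.count (p, e)) (hf e he.1 he.2)
    rwa [Multiset.count_filter_of_pos (p := fun x : F[X] × ℕ => x.2 = e) rfl,
      Multiset.count_filter_of_pos (p := fun x : F[X] × ℕ => x.2 = e) rfl] at this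
  · rw [Multiset.count_eq_zero_of_notMem, Multiset.count_eq_zero_of_notMem]
    · intro hx; exact he (hs' _ hx).2
    · intro hx; exact he (hs _ hx).2

noncomputable def monPoly {F : Type} [Field F] (k : ℕ) (c : Fin k → F) : F[X] :=
  X ^ k + ∑ i : Fin k, C (c i) * X ^ i.1

lemma exists_monPoly {F : Type} [Field F] (p : F[X]) (hp : p.Monic) (k : ℕ) (hk : p.natDegree = k) :
    ∃ c, monPoly k c = p := by
  subst hk
  refine ⟨fun i => p.coeff i, ?_⟩
  unfold monPoly
  conv_rhs => rw [hp.as_sum]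
  rw [Finset.sum_range]

lemma prod_lower (r : ℝ) (h0 : 0 ≤ r) (h1 : r ≤ 1 / 3) (k : ℕ) (hk : 1 ≤ k) :
    1 / 2 + r ^ k / 2 ≤ ∏ i : Fin k, (1 - r ^ (i.1 + 1)) := by
  induction k, hk using Nat.le_induction with
  | base => simp; linarith
  | succ k hk ih =>
    rw [Fin.prod_univ_castSucc]
    simp only [Fin.val_castSucc, Fin.val_last]
    have hr : r ^ (k + 1) ≤ 1 := pow_le_one₀ h0 (by linarith)
    have hr0 : 0 ≤ r ^ (k+1) := by positivity
    have hrk : r ^ k ≤ 1/3 := by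
      calc r ^ k ≤ r ^ 1 := pow_le_pow_of_le_one h0 (by linarith) hk
        _ ≤ 1/3 := by simpa using h1
    have hrk0 : 0 ≤ r ^ k := by positivity
    calc 1 / 2 + r ^ (k + 1) / 2 ≤ (1 / 2 + r ^ k / 2) * (1 - r ^ (k + 1)) := by
          rw [pow_succ]
          nlinarith [mul_nonneg hrk0 h0, mul_nonneg hrk0 (sub_nonneg.2 h1), mul_nonneg (mul_nonneg hrk0 hrk0) h0, mul_nonneg hrk0 (sub_nonneg.2 hrk), mul_nonneg (mul_nonneg hrk0 h0) (sub_nonneg.2 hrk)]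
      _ ≤ _ := mul_le_mul_of_nonneg_right ih (by linarith)

lemma conjClasses_upper (F : Type) [Field F] [Fintype F] (q : ℕ) (hq : Fintype.card F = q)
    (hq3 : 3 ≤ q) (m : ℕ) : (Nat.card (ConjClasses (GL (Fin m) F)) : ℝ) ≤ 2 * (q : ℝ) ^ m := by
  classical
  let W := Σ k : Fin (m + 1), (Fin k → F)
  let T := Σ g : {g : Fin m → W // ∑ i, (i.1 + 2) * (g i).1.1 ≤ m},
    (Fin (m - ∑ i, (i.1 + 2) * (g.1 i).1.1) → F)
  have hex : ∀ c : ConjClasses (GL (Fin m) F), ∃ (A : GL (Fin m) F) (s : Multiset (F[X] × ℕ)) (t : T),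
      ConjClasses.mk A = c ∧ PDec A.1 s ∧
      (∀ x ∈ s, (x.1.Monic ∧ Irreducible x.1) ∧ 1 ≤ x.2 ∧ x.2 ≤ m + 1) ∧
      (∀ i : Fin m, monPoly _ (t.1.1 i).2 = gE s (i.1 + 2)) ∧ monPoly _ t.2 = gE s 1 := by
    intro c
    obtain ⟨A, rfl⟩ := ConjClasses.exists_rep c
    obtain ⟨s, hs, h1, h2⟩ := pdec_exists A.1
    have hle : ∀ x ∈ s, x.2 ≤ m ∧ x.2 * x.1.natDegree ≤ m := by
      intro x hx
      have h3 : x.2 * x.1.natDegree ≤ m := by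
        rw [← h2]
        exact Multiset.single_le_sum (fun _ _ => Nat.zero_le _) _
          (Multiset.mem_map.2 ⟨x, hx, rfl⟩)
      refine ⟨le_trans (Nat.le_mul_of_pos_right _ (h1 x hx).2.1.natDegree_pos) h3, h3⟩
    have h3 : ∀ x ∈ s, (x.1.Monic ∧ Irreducible x.1) ∧ 1 ≤ x.2 ∧ x.2 ≤ m + 1 := fun x hx =>
      ⟨⟨(h1 x hx).1, (h1 x hx).2.1⟩, (h1 x hx).2.2, (hle x hx).1.trans (Nat.le_succ _)⟩
    have hm : ∀ x ∈ s, x.1.Monic := fun x hx => (h1 x hx).1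
    have hsum := gE_sum m s fun x hx => (h3 x hx).2
    rw [h2] at hsum
    simp_rw [← gE_natDegree s hm] at hsum
    have hdeg : ∀ i : Fin m, (gE s (i.1+2)).natDegree < m + 1 := by
      intro i
      have : (i.1 + 2) * (gE s (i.1+2)).natDegree ≤ m := by
        have := Finset.single_le_sum (f := fun i : Fin m => (i.1 + 2) * (gE s (i.1+2)).natDegree)
          (fun _ _ => Nat.zero_le _) (Finset.mem_univ i)
        omega
      nlinarith
    choose c hc using fun i : Fin m => exists_monPoly (gE s (i.1 + 2)) (gE_monic s hm _) _ rfl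
    let g : Fin m → W := fun i => ⟨⟨(gE s (i.1+2)).natDegree, hdeg i⟩, c i⟩
    have hg : ∑ i, (i.1 + 2) * (g i).1.1 ≤ m := by
      conv_rhs => rw [← hsum]
      exact Nat.le_add_right _ _
    obtain ⟨c1, hc1⟩ := exists_monPoly (gE s 1) (gE_monic s hm _)
      (m - ∑ i, (i.1 + 2) * (g i).1.1) (by
        change _ = m - ∑ i : Fin m, (i.1 + 2) * (gE s (i.1+2)).natDegree
        omega)
    exact ⟨A, s, ⟨⟨g, hg⟩, c1⟩, rfl, hs, h3, hc, hc1⟩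
  choose A s t hA hs h3 hg h1 using hex
  have hinj : Function.Injective t := by
    intro c c' h
    have : s c = s c' := by
      refine gE_inj m _ _ (h3 c) (h3 c') ?_
      intro e he1 he2
      rcases he1.eq_or_lt with he | he
      · rw [← he, ← h1 c, ← h1 c', h]
      · obtain ⟨j, rfl⟩ : ∃ j : Fin m, e = j.1 + 2 := ⟨⟨e - 2, by omega⟩, by simp; omega⟩
        rw [← hg c, ← hg c', h]
    obtain ⟨P, hP⟩ := pdec_conj (hs c) (this ▸ hs c')
    rw [← hA c, ← hA c', ConjClasses.mk_eq_mk_iff_isConj, isConj_iff]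
    refine ⟨P, ?_⟩
    rw [mul_inv_eq_iff_eq_mul]
    exact Units.ext hP
  have hcard : Nat.card (ConjClasses (GL (Fin m) F)) ≤ Nat.card T := Nat.card_le_card_of_injective t hinj
  have hq0 : (0:ℝ) < q := by exact_mod_cast (by omega : 0 < q)
  let r : ℝ := (q:ℝ)⁻¹
  have hr0 : 0 < r := inv_pos.2 hq0
  have hr3 : r ≤ 1 / 3 := by
    rw [one_div]; exact inv_anti₀ (by norm_num) (by exact_mod_cast hq3)
  have hT : (Nat.card T : ℝ) ≤ q ^ m * ∏ i : Fin m, ∑ w : W, r ^ ((i.1 + 2) * w.1.1) := by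
    rw [Finset.prod_univ_sum, Fintype.piFinset_univ, Finset.mul_sum, Nat.card_eq_fintype_card,
      Fintype.card_sigma]
    push_cast
    have : ∀ g : {g : Fin m → W // ∑ i, (i.1 + 2) * (g i).1.1 ≤ m},
        (Fintype.card (Fin (m - ∑ i, (i.1 + 2) * (g.1 i).1.1) → F) : ℝ) =
        q ^ m * ∏ i : Fin m, r ^ ((i.1 + 2) * (g.1 i).1.1) := by
      intro g
      rw [Fintype.card_fun, Fintype.card_fin, hq, Finset.prod_pow_eq_pow_sum]
      push_cast
      rw [pow_sub₀ _ hq0.ne' g.2, inv_pow]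
    rw [Finset.sum_congr rfl fun g _ => this g]
    refine le_trans (le_of_eq ?_) (Finset.sum_le_sum_of_subset_of_nonneg (Finset.subset_univ
      (Finset.univ.map (Function.Embedding.subtype fun g : Fin m → W =>
        ∑ i, (i.1 + 2) * (g i).1.1 ≤ m))) fun _ _ _ => by positivity)
    rw [Finset.sum_map]
    rfl
  have hW : ∀ i : Fin m, ∑ w : W, r ^ ((i.1 + 2) * w.1.1) ≤ (1 - r ^ (i.1 + 1))⁻¹ := by
    intro i
    rw [Fintype.sum_sigma]
    have h4 : ∀ k : Fin (m+1), ∑ y : Fin k → F, r ^ ((i.1 + 2) * k.1) = (r ^ (i.1+1)) ^ k.1 := by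
      intro k
      rw [Finset.sum_const, Finset.card_univ, Fintype.card_fun, Fintype.card_fin, hq, nsmul_eq_mul]
      push_cast
      rw [← pow_mul, show (i.1 + 2) * k.1 = k.1 + (i.1+1) * k.1 by ring, pow_add, ← mul_assoc, ← mul_pow,
        mul_inv_cancel₀ hq0.ne', one_pow, one_mul]
    have hri : r ^ (i.1+1) < 1 := pow_lt_one₀ hr0.le (by linarith) (by omega)
    calc _ = ∑ k : Fin (m+1), (r ^ (i.1+1)) ^ k.1 := Finset.sum_congr rfl fun k _ => h4 k
      _ = ∑ k ∈ Finset.range (m+1), (r ^ (i.1+1)) ^ k := by rw [Finset.sum_range]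
      _ ≤ ∑' k, (r ^ (i.1+1)) ^ k := (summable_geometric_of_lt_one (by positivity) hri).sum_le_tsum _ (fun _ _ => by positivity)
      _ = _ := tsum_geometric_of_lt_one (by positivity) hri
  have hP : ∏ i : Fin m, ∑ w : W, r ^ ((i.1 + 2) * w.1.1) ≤ 2 := by
    calc _ ≤ ∏ i : Fin m, (1 - r ^ (i.1 + 1))⁻¹ :=
          Finset.prod_le_prod (fun i _ => Finset.sum_nonneg fun _ _ => by positivity) fun i _ => hW i
      _ = (∏ i : Fin m, (1 - r ^ (i.1 + 1)))⁻¹ := by rw [Finset.prod_inv_distrib]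
      _ ≤ (1/2)⁻¹ := by
          apply inv_anti₀ (by norm_num)
          rcases Nat.eq_zero_or_pos m with h | h
          · subst h; simp; norm_num
          · exact le_trans (by have : 0 ≤ r ^ m := by positivity
                               linarith) (prod_lower r hr0.le hr3 m h)
      _ = 2 := by norm_num
  calc (Nat.card (ConjClasses (GL (Fin m) F)) : ℝ) ≤ Nat.card T := by exact_mod_cast hcard
    _ ≤ _ := hT
    _ ≤ q ^ m * 2 := by gcongr
    _ = _ := by ring

end ClassUpper2

open Matrix

section Counting

lemma classes_upper (F : Type) [Field F] [Fintype F] (q : ℕ) (hq : Fintype.card F = q)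
    (hq3 : 3 ≤ q) (κ : Type) [Fintype κ] [DecidableEq κ] :
    (Nat.card (ConjClasses (GL κ F)) : ℝ) ≤ 2 * (q : ℝ) ^ Fintype.card κ := by
  refine le_trans ?_ (conjClasses_upper F q hq hq3 (Fintype.card κ))
  let e : GL (Fin (Fintype.card κ)) F ≃* GL κ F :=
    Units.mapEquiv (Matrix.reindexAlgEquiv F F (Fintype.equivFin κ).symm).toMulEquiv
  have hs : Function.Surjective (ConjClasses.map e.toMonoidHom) :=
    ConjClasses.map_surjective e.surjective
  exact_mod_cast Nat.card_le_card_of_surjective _ hs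

abbrev UMat (κ F : Type) [Fintype κ] [DecidableEq κ] [Field F] := {z : Matrix κ κ F // IsUnit z}

noncomputable def umatEquiv (κ F : Type) [Fintype κ] [DecidableEq κ] [Field F] : UMat κ F ≃ GL κ F where
  toFun z := z.2.unit
  invFun z := ⟨z.1, z.isUnit⟩
  left_inv z := rfl
  right_inv z := by ext1; rfl

lemma card_comm_umat (F : Type) [Field F] [Fintype F] (q : ℕ) (hq : Fintype.card F = q)
    (hq3 : 3 ≤ q) (κ : Type) [Fintype κ] [DecidableEq κ] :
    (Nat.card {p : UMat κ F × UMat κ F // p.1.1 * p.2.1 = p.2.1 * p.1.1} : ℝ) ≤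
      2 * (q : ℝ) ^ Fintype.card κ * Nat.card (GL κ F) := by
  have h : Nat.card {p : UMat κ F × UMat κ F // p.1.1 * p.2.1 = p.2.1 * p.1.1} =
      Nat.card {p : GL κ F × GL κ F // Commute p.1 p.2} := by
    apply Nat.card_congr
    refine Equiv.subtypeEquiv (Equiv.prodCongr (umatEquiv κ F) (umatEquiv κ F)) ?_
    intro a
    exact (Units.ext_iff (u := (umatEquiv κ F a.1) * (umatEquiv κ F a.2))
      (v := (umatEquiv κ F a.2) * (umatEquiv κ F a.1))).symm
  rw [h, card_comm_eq_card_conjClasses_mul_card]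
  push_cast
  gcongr
  exact classes_upper F q hq hq3 κ

/-- existence of adapted coordinates for an injective matrix -/
lemma exists_adapted {F ι κ κ' : Type} [Field F] [Fintype ι] [DecidableEq ι] [Fintype κ] [DecidableEq κ]
    [Fintype κ'] [DecidableEq κ'] (hc : Fintype.card κ = Fintype.card ι + Fintype.card κ')
    (γ : Matrix κ ι F) (hγ : Function.Injective γ.mulVec) :
    ∃ (k : Matrix (ι ⊕ κ') κ F) (k' : Matrix κ (ι ⊕ κ') F), k * k' = 1 ∧ k' * k = 1 ∧
      k' * (fromRows 1 0 : Matrix (ι ⊕ κ') ι F) = γ := by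
  have hli : LinearIndependent F γ.col := Matrix.mulVec_injective_iff.1 hγ
  let b := Module.Basis.sumExtend hli
  have hf : Finite (ι ⊕ Module.Basis.sumExtendIndex hli) := Module.Finite.finite_basis b
  have : Fintype (Module.Basis.sumExtendIndex hli) := by
    have := Finite.of_injective (Sum.inr : Module.Basis.sumExtendIndex hli → ι ⊕ Module.Basis.sumExtendIndex hli)
      Sum.inr_injective
    exact Fintype.ofFinite _
  have hcard : Fintype.card (Module.Basis.sumExtendIndex hli) = Fintype.card κ' := by
    have h1 := Module.finrank_eq_card_basis b
    rw [Module.finrank_fintype_fun_eq_card, hc, Fintype.card_sum] at h1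
    omega
  let e := Fintype.equivOfCardEq hcard
  let b' := b.reindex (Equiv.sumCongr (Equiv.refl ι) e)
  refine ⟨b'.toMatrix (Pi.basisFun F κ), (Pi.basisFun F κ).toMatrix b',
    Module.Basis.toMatrix_mul_toMatrix_flip _ _, Module.Basis.toMatrix_mul_toMatrix_flip _ _, ?_⟩
  ext i j
  rw [Matrix.mul_apply, Fintype.sum_sum_type]
  simp [Matrix.one_apply, Module.Basis.toMatrix_apply, b', b, Module.Basis.sumExtend]
  rfl

/-- `x` acts irreducibly. -/
def IrrM {ι F : Type} [Fintype ι] [DecidableEq ι] [Field F] (x : Matrix ι ι F) : Prop :=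
  ∀ v : ι → F, v ≠ 0 → ∀ w, ∃ p : Polynomial F, (Polynomial.aeval x p) *ᵥ v = w

lemma intertwine_poly {ι κ F : Type} [Fintype ι] [DecidableEq ι] [Fintype κ] [DecidableEq κ] [Field F]
    {x : Matrix ι ι F} {z : Matrix κ κ F} {γ : Matrix κ ι F} (h : γ * x = z * γ) (p : Polynomial F) :
    γ * Polynomial.aeval x p = Polynomial.aeval z p * γ := by
  induction p using Polynomial.induction_on' with
  | add p q hp hq => simp only [map_add, Matrix.mul_add, Matrix.add_mul, hp, hq]
  | monomial n a =>
    have hn : γ * x ^ n = z ^ n * γ := by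
      induction n with
      | zero => simp
      | succ n ih => rw [pow_succ, ← Matrix.mul_assoc, ih, Matrix.mul_assoc, h, ← Matrix.mul_assoc, ← pow_succ]
    simp only [Polynomial.aeval_monomial, ← Algebra.smul_def, Matrix.mul_smul, Matrix.smul_mul, hn]

lemma IrrM.zero_or_inj {ι κ F : Type} [Fintype ι] [DecidableEq ι] [Fintype κ] [DecidableEq κ] [Field F]
    {x : Matrix ι ι F} (hx : IrrM x) {z : Matrix κ κ F} {γ : Matrix κ ι F} (h : γ * x = z * γ) :
    γ = 0 ∨ Function.Injective γ.mulVec := by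
  by_cases hi : ∃ v, v ≠ 0 ∧ γ *ᵥ v = 0
  · left
    obtain ⟨v, hv, hv0⟩ := hi
    apply Matrix.ext_of_mulVec_single
    intro i
    obtain ⟨p, hp⟩ := hx v hv (Pi.single i 1)
    rw [← hp, Matrix.mulVec_mulVec, intertwine_poly h, ← Matrix.mulVec_mulVec, hv0]
    simp
  · right
    push Not at hi
    intro v w hvw
    by_contra hne
    exact hi (v - w) (sub_ne_zero.2 hne) (by rw [Matrix.mulVec_sub]; exact sub_eq_zero.2 hvw)

end Counting

open Matrix

section Counting2

variable {F ι κ κ' : Type} [Field F] [Fintype ι] [DecidableEq ι] [Fintype κ] [DecidableEq κ]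
    [Fintype κ'] [DecidableEq κ']

lemma isUnit_of_left {A B : Matrix κ κ F} (h : A * B = 1) : IsUnit B :=
  ⟨⟨B, A, _root_.mul_eq_one_comm.1 h, h⟩, rfl⟩

lemma case2_core {x x' α : Matrix ι ι F} {β u u' : Matrix ι κ F} {γ : Matrix κ ι F} {δ z : Matrix κ κ F}
    (e1 : α * x = x' * α + u' * γ) (e2 : α * u + β * z = x' * β + u' * δ)
    (e3 : γ * x = z * γ) (e4 : γ * u + δ * z = z * δ)
    (hz : IsUnit z) (hh : IsUnit (fromBlocks α β γ δ))
    {k : Matrix (ι ⊕ κ') κ F} {k' : Matrix κ (ι ⊕ κ') F} (h1 : k * k' = 1) (h2 : k' * k = 1)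
    {γ0 : Matrix (ι ⊕ κ') ι F} (hγ0 : γ0 = fromRows 1 0) (h3 : k' * γ0 = γ)
    {zt dt : Matrix (ι ⊕ κ') (ι ⊕ κ') F} {A bt ut : Matrix ι (ι ⊕ κ') F}
    (hzt : zt = k * z * k') (hdt : dt = k * δ * k') (hA : A = fromCols α 0)
    (hbt : bt = β * k' - A * dt) (hut : ut = x' * A + u' * k' - A * zt) :
    zt = fromBlocks x zt.toBlocks₁₂ 0 zt.toBlocks₂₂ ∧ ut = fromCols 0 ut.toCols₂ ∧
    fromRows bt dt.toRows₂ * fromBlocks x zt.toBlocks₁₂ 0 zt.toBlocks₂₂ =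
      fromBlocks x' ut.toCols₂ 0 zt.toBlocks₂₂ * fromRows bt dt.toRows₂ ∧
    IsUnit (fromRows bt dt.toRows₂) ∧ IsUnit zt.toBlocks₂₂ := by
  have c1 : ∀ {o : Type} (X : Matrix κ o F), k' * (k * X) = X := by
    intro o X; rw [← Matrix.mul_assoc, h2, Matrix.one_mul]
  have c2 : ∀ {o : Type} (X : Matrix (ι ⊕ κ') o F), k * (k' * X) = X := by
    intro o X; rw [← Matrix.mul_assoc, h1, Matrix.one_mul]
  have h4 : k * γ = γ0 := by rw [← h3, c2]
  have h5 : A * γ0 = α := by rw [hA, hγ0, fromCols_mul_fromRows]; simp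
  have hzg : zt * γ0 = γ0 * x := by
    rw [hzt, Matrix.mul_assoc, h3, Matrix.mul_assoc, ← e3, ← Matrix.mul_assoc, h4]
  have i1 : zt = fromBlocks x zt.toBlocks₁₂ 0 zt.toBlocks₂₂ := by
    conv_lhs => rw [← fromBlocks_toBlocks zt]
    have h6 := hzg
    rw [← fromBlocks_toBlocks zt, hγ0, fromBlocks_mul_fromRows, fromRows_mul] at h6
    simp only [Matrix.mul_one, Matrix.mul_zero, add_zero, Matrix.one_mul, Matrix.zero_mul] at h6
    obtain ⟨h7, h8⟩ := (fromRows_ext_iff _ _ _ _).1 h6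
    rw [h7, h8]
  have hug : ut * γ0 = 0 := by
    rw [hut, Matrix.sub_mul, Matrix.add_mul, Matrix.mul_assoc, h5, Matrix.mul_assoc, h3,
      Matrix.mul_assoc, hzg, ← Matrix.mul_assoc, h5, e1, sub_self]
  have i2 : ut = fromCols 0 ut.toCols₂ := by
    conv_lhs => rw [← fromCols_toCols ut]
    have h6 := hug
    rw [← fromCols_toCols ut, hγ0, fromCols_mul_fromRows] at h6
    simp only [Matrix.mul_one, Matrix.mul_zero, add_zero] at h6
    rw [h6]
  have e4' : γ0 * (u * k') = zt * dt - dt * zt := by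
    rw [← h4, hzt, hdt]
    simp only [Matrix.mul_assoc, c1]
    rw [← Matrix.mul_assoc δ, ← Matrix.mul_assoc z, ← Matrix.mul_assoc γ, ← Matrix.mul_sub,
      ← Matrix.sub_mul, ← e4, add_sub_cancel_right]
  have i3 : bt * zt = x' * bt + ut * dt := by
    have : bt * zt = β * z * k' - A * (dt * zt) := by
      rw [hbt, Matrix.sub_mul, Matrix.mul_assoc, hzt]
      simp only [Matrix.mul_assoc, c1]
    have hbz : β * z = x' * β + u' * δ - α * u := by rw [← e2]; abel
    rw [this, hbz, hbt, hut, ← h5]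
    have hud : u' * k' * dt = u' * δ * k' := by
      rw [hdt]; simp only [Matrix.mul_assoc, c1]
    simp only [Matrix.sub_mul, Matrix.add_mul, Matrix.mul_sub]
    rw [hud, Matrix.mul_assoc A γ0 u, Matrix.mul_assoc A (γ0 * u) k', Matrix.mul_assoc γ0 u, e4',
      Matrix.mul_sub, Matrix.mul_assoc A zt dt, Matrix.mul_assoc x' A dt, Matrix.mul_assoc x' β k']
    abel
  have i4 : dt.toRows₂ * zt = zt.toBlocks₂₂ * dt.toRows₂ := by
    have h6 : zt * dt = dt * zt + γ0 * (u * k') := by rw [e4']; abel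
    have h7 := congrArg toRows₂ h6
    have h8 : ∀ M : Matrix (ι ⊕ κ') (ι ⊕ κ') F, (dt * M).toRows₂ = dt.toRows₂ * M := fun M => rfl
    have h9 : (zt * dt).toRows₂ = zt.toBlocks₂₂ * dt.toRows₂ := by
      conv_lhs => rw [i1, ← fromRows_toRows dt, fromBlocks_mul_fromRows, toRows₂_fromRows]
      simp
    have h10 : (dt * zt + γ0 * (u * k')).toRows₂ = dt.toRows₂ * zt := by
      rw [← h8, hγ0, fromRows_mul]
      ext i j
      simp [toRows₂]
    rw [h9, h10] at h7
    exact h7.symm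
  refine ⟨i1, i2, ?_, ?_, ?_⟩
  · rw [← i1, fromRows_mul, fromBlocks_mul_fromRows, i3, i4, Matrix.zero_mul, zero_add]
    congr 2
    conv_lhs => rw [i2, ← fromRows_toRows dt, fromCols_mul_fromRows]
    simp
  · obtain ⟨H, hH⟩ := hh
    have key : fromBlocks α β γ δ * fromRows (-dt.toRows₁) k' =
        (fromBlocks 1 0 0 (k' * (fromRows 0 1 : Matrix (ι ⊕ κ') κ' F)) : Matrix (ι ⊕ κ) (ι ⊕ κ') F) * fromRows bt dt.toRows₂ := by
      rw [fromBlocks_mul_fromRows, fromBlocks_mul_fromRows]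
      have hA' : A * dt = α * dt.toRows₁ := by
        conv_lhs => rw [hA, ← fromRows_toRows dt, fromCols_mul_fromRows]
        simp
      congr 1
      · rw [hbt, hA']; simp; abel
      · have : δ * k' = k' * dt := by rw [hdt, Matrix.mul_assoc, c1]
        rw [this, Matrix.zero_mul, zero_add, ← h3, Matrix.mul_assoc, Matrix.mul_assoc, ← Matrix.mul_add]
        congr 1
        conv_lhs => rw [← fromRows_toRows dt]
        rw [hγ0, fromRows_mul, fromRows_mul]
        ext (i | i) j <;> simp
    have hl : (fromCols 0 k : Matrix (ι ⊕ κ') (ι ⊕ κ) F) * fromRows (-dt.toRows₁) k' = 1 := by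
      rw [fromCols_mul_fromRows]; simp [h1]
    have : ((fromCols 0 k : Matrix (ι ⊕ κ') (ι ⊕ κ) F) * (H⁻¹).1 *
        (fromBlocks 1 0 0 (k' * (fromRows 0 1 : Matrix (ι ⊕ κ') κ' F)) : Matrix (ι ⊕ κ) (ι ⊕ κ') F)) * fromRows bt dt.toRows₂ = 1 := by
      rw [Matrix.mul_assoc, ← key, Matrix.mul_assoc, ← hH, ← Matrix.mul_assoc (H⁻¹).1]
      have : (H⁻¹).1 * H.1 = 1 := Units.inv_mul H
      rw [this, Matrix.one_mul, hl]
    exact isUnit_of_left this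
  · have hu : IsUnit zt := by
      obtain ⟨Z, hZ⟩ := hz
      have : (k * (Z⁻¹).1 * k') * zt = 1 := by
        rw [hzt, ← hZ]
        simp only [Matrix.mul_assoc, c1]
        rw [← Matrix.mul_assoc (Z⁻¹).1]
        have : (Z⁻¹).1 * Z.1 = 1 := Units.inv_mul Z
        rw [this, Matrix.one_mul, h1]
      exact isUnit_of_left this
    rw [i1, Matrix.isUnit_fromBlocks_zero₂₁] at hu
    exact hu.2

end Counting2

open Matrix

set_option linter.unusedSectionVars false

section Counting3

/-- the set counted in the key estimate -/
def CT {F ι : Type} (κ : Type) [Field F] [Fintype ι] [DecidableEq ι] [Fintype κ] [DecidableEq κ]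
    (x x' : Matrix ι ι F) : Type :=
  {c : Matrix κ κ F × Matrix ι κ F × Matrix ι κ F × Matrix (ι ⊕ κ) (ι ⊕ κ) F //
    IsUnit c.1 ∧ IsUnit c.2.2.2 ∧
      c.2.2.2 * fromBlocks x c.2.1 0 c.1 = fromBlocks x' c.2.2.1 0 c.1 * c.2.2.2}

variable {F ι κ κ' : Type} [Field F] [Fintype ι] [DecidableEq ι] [Fintype κ] [DecidableEq κ]
    [Fintype κ'] [DecidableEq κ']

instance [Fintype F] (x x' : Matrix ι ι F) : Finite (CT κ x x') := by
  unfold CT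
  have : Finite (Matrix κ κ F) := by unfold Matrix; infer_instance
  have : Finite (Matrix ι κ F) := by unfold Matrix; infer_instance
  have : Finite (Matrix (ι ⊕ κ) (ι ⊕ κ) F) := by unfold Matrix; infer_instance
  infer_instance

lemma CT_eqs {x x' : Matrix ι ι F} (c : CT κ x x') :
    (c.1.2.2.2.toBlocks₁₁ * x = x' * c.1.2.2.2.toBlocks₁₁ + c.1.2.2.1 * c.1.2.2.2.toBlocks₂₁) ∧
    (c.1.2.2.2.toBlocks₁₁ * c.1.2.1 + c.1.2.2.2.toBlocks₁₂ * c.1.1 =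
      x' * c.1.2.2.2.toBlocks₁₂ + c.1.2.2.1 * c.1.2.2.2.toBlocks₂₂) ∧
    (c.1.2.2.2.toBlocks₂₁ * x = c.1.1 * c.1.2.2.2.toBlocks₂₁) ∧
    (c.1.2.2.2.toBlocks₂₁ * c.1.2.1 + c.1.2.2.2.toBlocks₂₂ * c.1.1 =
      c.1.1 * c.1.2.2.2.toBlocks₂₂) := by
  have h := c.2.2.2
  rw [← fromBlocks_toBlocks c.1.2.2.2, fromBlocks_multiply, fromBlocks_multiply, fromBlocks_inj] at h
  simpa using h

lemma ext_blocks {F ι κ : Type} {A B : Matrix (ι ⊕ κ) (ι ⊕ κ) F} (h1 : A.toBlocks₁₁ = B.toBlocks₁₁)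
    (h2 : A.toBlocks₁₂ = B.toBlocks₁₂) (h3 : A.toBlocks₂₁ = B.toBlocks₂₁)
    (h4 : A.toBlocks₂₂ = B.toBlocks₂₂) : A = B := by
  rw [← fromBlocks_toBlocks A, ← fromBlocks_toBlocks B, h1, h2, h3, h4]

lemma case1_inj (x x' : Matrix ι ι F) :
    ∃ f : {c : CT κ x x' // c.1.2.2.2.toBlocks₂₁ = 0} →
      {α : UMat ι F // α.1 * x = x' * α.1} ×
      {p : UMat κ F × UMat κ F // p.1.1 * p.2.1 = p.2.1 * p.1.1} × Matrix ι κ F × Matrix ι κ F,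
      Function.Injective f := by
  have hu : ∀ c : {c : CT κ x x' // c.1.2.2.2.toBlocks₂₁ = 0},
      IsUnit c.1.1.2.2.2.toBlocks₁₁ ∧ IsUnit c.1.1.2.2.2.toBlocks₂₂ := by
    intro c
    have h := c.1.2.2.1
    rw [← fromBlocks_toBlocks c.1.1.2.2.2, c.2, Matrix.isUnit_fromBlocks_zero₂₁] at h
    exact h
  refine ⟨fun c => ⟨⟨⟨c.1.1.2.2.2.toBlocks₁₁, (hu c).1⟩, ?_⟩,
    ⟨(⟨c.1.1.2.2.2.toBlocks₂₂, (hu c).2⟩, ⟨c.1.1.1, c.1.2.1⟩), ?_⟩, c.1.1.2.2.2.toBlocks₁₂, c.1.1.2.1⟩, ?_⟩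
  · have := (CT_eqs c.1).1
    rw [c.2] at this
    simpa using this
  · have := (CT_eqs c.1).2.2.2
    rw [c.2] at this
    simpa using this
  · intro c c' h
    simp only [Prod.mk.injEq, Subtype.mk.injEq] at h
    obtain ⟨h1, ⟨h2, h3⟩, h4, h5⟩ := h
    have e2 := (CT_eqs c.1).2.1
    have e2' := (CT_eqs c'.1).2.1
    rw [h1, h2, h3, h4, h5, e2'] at e2
    have h6 : c.1.1.2.2.1 = c'.1.1.2.2.1 := by
      have h7 := add_left_cancel e2
      obtain ⟨U, hU⟩ := (hu c').2
      have h8 := congrArg (fun M => M * (U⁻¹).1) h7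
      simp only [← hU, Matrix.mul_assoc] at h8
      have h9 : U.1 * (U⁻¹).1 = 1 := Units.mul_inv U
      rw [h9, Matrix.mul_one, Matrix.mul_one] at h8
      exact h8.symm
    apply Subtype.ext
    apply Subtype.ext
    refine Prod.ext h3 (Prod.ext h5 (Prod.ext h6 (ext_blocks h1 h4 ?_ h2)))
    rw [c.2, c'.2]

lemma case2_inj (hc : Fintype.card κ = Fintype.card ι + Fintype.card κ') (x x' : Matrix ι ι F) :
    ∃ f : {c : CT κ x x' // Function.Injective c.1.2.2.2.toBlocks₂₁.mulVec} →
      {γ : Matrix κ ι F // Function.Injective γ.mulVec} × Matrix ι ι F × Matrix ι (ι ⊕ κ') F × CT κ' x x',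
      Function.Injective f := by
  choose k k' h1 h2 h3 using fun γ : {γ : Matrix κ ι F // Function.Injective γ.mulVec} =>
    exists_adapted hc γ.1 γ.2
  let g : {c : CT κ x x' // Function.Injective c.1.2.2.2.toBlocks₂₁.mulVec} →
    {γ : Matrix κ ι F // Function.Injective γ.mulVec} := fun c => ⟨c.1.1.2.2.2.toBlocks₂₁, c.2⟩
  let zt := fun c => k (g c) * c.1.1.1 * k' (g c)
  let dt := fun c => k (g c) * c.1.1.2.2.2.toBlocks₂₂ * k' (g c)
  let A : {c : CT κ x x' // Function.Injective c.1.2.2.2.toBlocks₂₁.mulVec} → Matrix ι (ι ⊕ κ') F :=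
    fun c => fromCols c.1.1.2.2.2.toBlocks₁₁ 0
  let bt := fun c => c.1.1.2.2.2.toBlocks₁₂ * k' (g c) - A c * dt c
  let ut := fun c => x' * A c + c.1.1.2.2.1 * k' (g c) - A c * zt c
  have core := fun c : {c : CT κ x x' // Function.Injective c.1.2.2.2.toBlocks₂₁.mulVec} =>
    case2_core (CT_eqs c.1).1 (CT_eqs c.1).2.1 (CT_eqs c.1).2.2.1 (CT_eqs c.1).2.2.2 c.1.2.1
      (by rw [fromBlocks_toBlocks]; exact c.1.2.2.1) (h1 (g c)) (h2 (g c)) rfl (h3 (g c))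
      (zt := zt c) (dt := dt c) (A := A c) (bt := bt c) (ut := ut c) rfl rfl rfl rfl rfl
  refine ⟨fun c => ⟨g c, c.1.1.2.2.2.toBlocks₁₁, (dt c).toRows₁,
    ⟨((zt c).toBlocks₂₂, (zt c).toBlocks₁₂, (ut c).toCols₂, fromRows (bt c) (dt c).toRows₂),
      (core c).2.2.2.2, (core c).2.2.2.1, (core c).2.2.1⟩⟩, ?_⟩
  intro c c' h
  have hg : g c = g c' := congrArg Prod.fst h
  have hα : c.1.1.2.2.2.toBlocks₁₁ = c'.1.1.2.2.2.toBlocks₁₁ := congrArg (fun t => t.2.1) h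
  have hd1 : (dt c).toRows₁ = (dt c').toRows₁ := congrArg (fun t => t.2.2.1) h
  have hz22 : (zt c).toBlocks₂₂ = (zt c').toBlocks₂₂ := congrArg (fun t => t.2.2.2.1.1) h
  have hz12 : (zt c).toBlocks₁₂ = (zt c').toBlocks₁₂ := congrArg (fun t => t.2.2.2.1.2.1) h
  have hu2 : (ut c).toCols₂ = (ut c').toCols₂ := congrArg (fun t => t.2.2.2.1.2.2.1) h
  have hk : fromRows (bt c) (dt c).toRows₂ = fromRows (bt c') (dt c').toRows₂ :=
    congrArg (fun t => t.2.2.2.1.2.2.2) h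
  obtain ⟨hb, hd2⟩ := (fromRows_ext_iff _ _ _ _).1 hk
  have hA : A c = A c' := by simp only [A, hα]
  have hz : zt c = zt c' := by rw [(core c).1, (core c').1, hz12, hz22]
  have hd : dt c = dt c' := by rw [← fromRows_toRows (dt c), ← fromRows_toRows (dt c'), hd1, hd2]
  have hu : ut c = ut c' := by rw [(core c).2.1, (core c').2.1, hu2]
  have c1 : ∀ {o : Type} (X : Matrix o κ F), X * k' (g c) * k (g c) = X := by
    intro o X; rw [Matrix.mul_assoc, h2, Matrix.mul_one]
  have c1' : ∀ {o : Type} (X : Matrix κ o F), k' (g c) * (k (g c) * X) = X := by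
    intro o X; rw [← Matrix.mul_assoc, h2, Matrix.one_mul]
  have cancel : ∀ M N : Matrix κ κ F, k (g c) * M * k' (g c) = k (g c) * N * k' (g c) → M = N := by
    intro M N h
    have := congrArg (fun X => k' (g c) * (X * k (g c))) h
    simpa only [c1, c1'] using this
  have cancel2 : ∀ M N : Matrix ι κ F, M * k' (g c) = N * k' (g c) → M = N := by
    intro M N h
    have := congrArg (fun X => (X * k (g c))) h
    simpa only [c1] using this
  have r1 : c.1.1.1 = c'.1.1.1 := by
    apply cancel
    have := hz
    simp only [zt, ← hg] at this
    exact this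
  have r2 : c.1.1.2.2.2.toBlocks₂₂ = c'.1.1.2.2.2.toBlocks₂₂ := by
    apply cancel
    have := hd
    simp only [dt, ← hg] at this
    exact this
  have r3 : c.1.1.2.2.2.toBlocks₁₂ = c'.1.1.2.2.2.toBlocks₁₂ := by
    apply cancel2
    have := hb
    simp only [bt, hA, hd, ← hg] at this
    exact sub_left_injective this
  have r4 : c.1.1.2.2.1 = c'.1.1.2.2.1 := by
    apply cancel2
    have := hu
    simp only [ut, hA, hz, ← hg] at this
    exact add_right_injective _ (sub_left_injective this)
  have r5 : c.1.1.2.2.2.toBlocks₂₁ = c'.1.1.2.2.2.toBlocks₂₁ := congrArg Subtype.val hg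
  have r6 : c.1.1.2.1 = c'.1.1.2.1 := by
    have e4 := (CT_eqs c.1).2.2.2
    have e4' := (CT_eqs c'.1).2.2.2
    rw [r1, r2, r5, ← e4'] at e4
    have h7 := add_right_cancel e4
    apply Matrix.ext_of_mulVec_single
    intro i
    apply c'.2
    have := congrArg (fun M => M *ᵥ Pi.single i 1) h7
    simpa only [← Matrix.mulVec_mulVec] using this
  apply Subtype.ext
  apply Subtype.ext
  exact Prod.ext r1 (Prod.ext r6 (Prod.ext r4 (ext_blocks hα r3 r5 r2)))

/-- counting injective matrices -/
lemma card_inj_mul_le [Fintype F] (hc : Fintype.card κ = Fintype.card ι + Fintype.card κ') :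
    Nat.card {γ : Matrix κ ι F // Function.Injective γ.mulVec} * (Nat.card (GL κ' F) *
      Nat.card (Matrix ι κ' F)) ≤ Nat.card (GL κ F) := by
  have hfM : Finite (Matrix κ κ F) := by unfold Matrix; infer_instance
  rcases isEmpty_or_nonempty {γ : Matrix κ ι F // Function.Injective γ.mulVec} with he | ⟨⟨γ₁⟩⟩
  · rw [Nat.card_of_isEmpty, Nat.zero_mul]; exact Nat.zero_le _
  choose k k' h1 h2 h3 using fun γ : {γ : Matrix κ ι F // Function.Injective γ.mulVec} =>
    exists_adapted hc γ.1 γ.2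
  rw [← Nat.card_congr (umatEquiv κ F), ← Nat.card_congr (umatEquiv κ' F), ← Nat.card_prod, ← Nat.card_prod]
  let f : {γ : Matrix κ ι F // Function.Injective γ.mulVec} × UMat κ' F × Matrix ι κ' F → Matrix κ κ F :=
    fun t => k' t.1 * fromBlocks (1 : Matrix ι ι F) t.2.2 0 t.2.1.1 * k γ₁
  have hf : ∀ t, IsUnit (f t) := by
    intro t
    have hu : IsUnit (fromBlocks (1 : Matrix ι ι F) t.2.2 0 t.2.1.1) :=
      Matrix.isUnit_fromBlocks_zero₂₁.2 ⟨isUnit_one, t.2.1.2⟩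
    obtain ⟨U, hU⟩ := hu
    apply isUnit_of_left (A := k' γ₁ * (U⁻¹).1 * k t.1)
    simp only [f, ← hU]
    have h9 : (U⁻¹).1 * U.1 = 1 := Units.inv_mul U
    calc k' γ₁ * (U⁻¹).1 * k t.1 * (k' t.1 * U.1 * k γ₁)
        = k' γ₁ * ((U⁻¹).1 * ((k t.1 * k' t.1) * U.1) * k γ₁) := by simp only [Matrix.mul_assoc]
      _ = 1 := by rw [h1, Matrix.one_mul, h9, Matrix.one_mul, h2]
  refine Nat.card_le_card_of_injective (fun t => (⟨f t, hf t⟩ : UMat κ F)) ?_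
  rintro ⟨γ, g, w⟩ ⟨γ', g', w'⟩ h
  have h4 : k' γ * fromBlocks (1 : Matrix ι ι F) w 0 g.1 * k γ₁ = k' γ' * fromBlocks (1 : Matrix ι ι F) w' 0 g'.1 * k γ₁ :=
    congrArg Subtype.val h
  have h5 : k' γ * fromBlocks (1 : Matrix ι ι F) w 0 g.1 = k' γ' * fromBlocks (1 : Matrix ι ι F) w' 0 g'.1 := by
    have h5 := congrArg (fun M : Matrix κ κ F => M * k' γ₁) h4
    rw [Matrix.mul_assoc, h1, Matrix.mul_one, Matrix.mul_assoc, h1, Matrix.mul_one] at h5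
    exact h5
  have h6 := congrArg (fun M : Matrix κ (ι ⊕ κ') F => M * (fromRows 1 0 : Matrix (ι ⊕ κ') ι F)) h5
  have h7 : ∀ (w : Matrix ι κ' F) (g : Matrix κ' κ' F), fromBlocks (1 : Matrix ι ι F) w 0 g *
    (fromRows 1 0 : Matrix (ι ⊕ κ') ι F) = fromRows 1 0 := by
    intro w g; rw [fromBlocks_mul_fromRows]; simp
  simp only [Matrix.mul_assoc, h7, h3] at h6
  have h8 : γ = γ' := Subtype.ext h6
  subst h8
  have h10 := congrArg (fun M : Matrix κ (ι ⊕ κ') F => k γ * M) h5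
  simp only [← Matrix.mul_assoc, h1, Matrix.one_mul] at h10
  rw [fromBlocks_inj] at h10
  ext1
  · rfl
  · exact Prod.ext (Subtype.ext h10.2.2.2) h10.2.1

end Counting3

open Matrix

section Counting4

lemma natCard_matrix (F ι κ : Type) [Fintype F] [Fintype ι] [Fintype κ] :
    Nat.card (Matrix ι κ F) = Fintype.card F ^ (Fintype.card ι * Fintype.card κ) := by
  classical
  unfold Matrix
  rw [Nat.card_eq_fintype_card, Fintype.card_fun, Fintype.card_fun, ← pow_mul, mul_comm]

theorem CT_card {F ι : Type} [Field F] [Fintype F] [Fintype ι] [DecidableEq ι] [Nonempty ι]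
    (q : ℕ) (hq : Fintype.card F = q) (hq3 : 3 ≤ q) (x x' : Matrix ι ι F) (hx : IrrM x) (m : ℕ) :
    ∀ (κ : Type) [Fintype κ] [DecidableEq κ], Fintype.card κ = m →
    (Nat.card (CT κ x x') : ℝ) ≤ Nat.card {α : UMat ι F // α.1 * x = x' * α.1} * (4 * (q:ℝ) ^ m) *
      Nat.card (GL κ F) * (q:ℝ) ^ (2 * Fintype.card ι * m) := by
  classical
  have hfM : ∀ (ι κ : Type) [Fintype ι] [Fintype κ], Finite (Matrix ι κ F) := by
    intro ι κ _ _; unfold Matrix; infer_instance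
  have hq0 : (0:ℝ) < q := by exact_mod_cast (by omega : 0 < q)
  set a : ℝ := (Nat.card {α : UMat ι F // α.1 * x = x' * α.1} : ℝ) with ha
  have ha0 : 0 ≤ a := Nat.cast_nonneg _
  set d := Fintype.card ι with hd
  have hd1 : 1 ≤ d := Fintype.card_pos
  induction m using Nat.strong_induction_on with
  | _ m ih =>
  intro κ _ _ hm
  have hsplit : Nat.card (CT κ x x') ≤ Nat.card {c : CT κ x x' // c.1.2.2.2.toBlocks₂₁ = 0} +
      Nat.card {c : CT κ x x' // Function.Injective c.1.2.2.2.toBlocks₂₁.mulVec} := by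
    rw [← Nat.card_sum]
    have hor : ∀ c : CT κ x x', c.1.2.2.2.toBlocks₂₁ = 0 ∨ Function.Injective c.1.2.2.2.toBlocks₂₁.mulVec :=
      fun c => hx.zero_or_inj (CT_eqs c).2.2.1
    refine Nat.card_le_card_of_injective (fun c => if h : c.1.2.2.2.toBlocks₂₁ = 0 then Sum.inl ⟨c, h⟩ else
      Sum.inr ⟨c, (hor c).resolve_left h⟩) ?_
    intro c c' h
    dsimp only at h
    split_ifs at h <;> simpa using h
  have hcase1 : (Nat.card {c : CT κ x x' // c.1.2.2.2.toBlocks₂₁ = 0} : ℝ) ≤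
      a * (2 * (q:ℝ) ^ m) * Nat.card (GL κ F) * (q:ℝ) ^ (2 * d * m) := by
    obtain ⟨f, hf⟩ := case1_inj (κ := κ) x x'
    have h1 := Nat.card_le_card_of_injective f hf
    rw [Nat.card_prod, Nat.card_prod, Nat.card_prod, natCard_matrix, hq, hm] at h1
    have h2 := card_comm_umat F q hq hq3 κ
    rw [hm] at h2
    calc (Nat.card {c : CT κ x x' // c.1.2.2.2.toBlocks₂₁ = 0} : ℝ)
        ≤ a * (Nat.card {p : UMat κ F × UMat κ F // p.1.1 * p.2.1 = p.2.1 * p.1.1} *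
          ((q:ℝ) ^ (d * m) * (q:ℝ) ^ (d * m))) := by rw [ha]; exact_mod_cast h1
      _ ≤ a * ((2 * (q : ℝ) ^ m * Nat.card (GL κ F)) * ((q:ℝ) ^ (d * m) * (q:ℝ) ^ (d * m))) := by
          gcongr
      _ = _ := by rw [← pow_add, show d * m + d * m = 2 * d * m by ring]; ring
  have hcase2 : (Nat.card {c : CT κ x x' // Function.Injective c.1.2.2.2.toBlocks₂₁.mulVec} : ℝ) ≤
      a * (2 * (q:ℝ) ^ m) * Nat.card (GL κ F) * (q:ℝ) ^ (2 * d * m) := by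
    by_cases hdm : d ≤ m
    · obtain ⟨m', rfl⟩ := Nat.exists_eq_add_of_le hdm
      have hc : Fintype.card κ = Fintype.card ι + Fintype.card (Fin m') := by rw [hm, Fintype.card_fin]
      obtain ⟨f, hf⟩ := case2_inj hc x x'
      have h1 := Nat.card_le_card_of_injective f hf
      rw [Nat.card_prod, Nat.card_prod, Nat.card_prod, natCard_matrix, natCard_matrix, hq,
        Fintype.card_sum, Fintype.card_fin] at h1
      have h2 := card_inj_mul_le (F := F) hc
      rw [natCard_matrix, hq, Fintype.card_fin] at h2
      have h3 := ih m' (by omega) (Fin m') (Fintype.card_fin _)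
      rw [← hd] at h1 h2
      set I : ℝ := (Nat.card {γ : Matrix κ ι F // Function.Injective γ.mulVec} : ℝ) with hI
      have h2' : I * (Nat.card (GL (Fin m') F) * (q:ℝ) ^ (d * m')) ≤ Nat.card (GL κ F) := by
        rw [hI]; exact_mod_cast h2
      calc (Nat.card {c : CT κ x x' // Function.Injective c.1.2.2.2.toBlocks₂₁.mulVec} : ℝ)
          ≤ I * ((q:ℝ) ^ (d * d) * ((q:ℝ) ^ (d * (d + m')) * Nat.card (CT (Fin m') x x'))) := by
            rw [hI]; exact_mod_cast h1
        _ ≤ I * ((q:ℝ) ^ (d * d) * ((q:ℝ) ^ (d * (d + m')) * (a * (4 * (q:ℝ) ^ m') *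
              Nat.card (GL (Fin m') F) * (q:ℝ) ^ (2 * d * m')))) := by gcongr
        _ = (I * (Nat.card (GL (Fin m') F) * (q:ℝ) ^ (d * m'))) * (a * (4 * (q:ℝ) ^ m') *
              ((q:ℝ) ^ (2 * d * (d + m')))) := by
            rw [show (q:ℝ) ^ (2 * d * m') = (q:ℝ) ^ (d * m') * (q:ℝ) ^ (d * m') by rw [← pow_add]; ring_nf,
              show (q:ℝ) ^ (2 * d * (d + m')) = (q:ℝ) ^ (d * d) * (q:ℝ) ^ (d * (d + m')) * (q:ℝ) ^ (d * m') by
                rw [← pow_add, ← pow_add]; ring_nf]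
            ring
        _ ≤ Nat.card (GL κ F) * (a * (4 * (q:ℝ) ^ m') * ((q:ℝ) ^ (2 * d * (d + m')))) := by gcongr
        _ ≤ Nat.card (GL κ F) * (a * (2 * (q:ℝ) ^ (d + m')) * ((q:ℝ) ^ (2 * d * (d + m')))) := by
            gcongr _ * (a * ?_ * _)
            rw [pow_add]
            have : (2:ℝ) ≤ (q:ℝ) ^ d := by
              calc (2:ℝ) ≤ (q:ℝ) ^ 1 := by rw [pow_one]; exact_mod_cast (by omega : 2 ≤ q)
                _ ≤ (q:ℝ) ^ d := pow_le_pow_right₀ (by exact_mod_cast (by omega : 1 ≤ q)) hd1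
            nlinarith [pow_pos hq0 m']
        _ = _ := by ring
    · have : IsEmpty {c : CT κ x x' // Function.Injective c.1.2.2.2.toBlocks₂₁.mulVec} := by
        refine ⟨fun c => hdm ?_⟩
        have := LinearMap.finrank_le_finrank_of_injective (f := Matrix.mulVecLin c.1.1.2.2.2.toBlocks₂₁) c.2
        simpa [hm, ← hd] using this
      rw [Nat.card_of_isEmpty]
      simp only [Nat.cast_zero]
      positivity
  calc (Nat.card (CT κ x x') : ℝ) ≤ ((Nat.card {c : CT κ x x' // c.1.2.2.2.toBlocks₂₁ = 0} +
      Nat.card {c : CT κ x x' // Function.Injective c.1.2.2.2.toBlocks₂₁.mulVec} : ℕ) : ℝ) := by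
        exact_mod_cast hsplit
    _ ≤ a * (2 * (q:ℝ) ^ m) * Nat.card (GL κ F) * (q:ℝ) ^ (2 * d * m) +
        a * (2 * (q:ℝ) ^ m) * Nat.card (GL κ F) * (q:ℝ) ^ (2 * d * m) := by
          push_cast; exact add_le_add hcase1 hcase2
    _ = _ := by ring

end Counting4

open Matrix
set_option linter.unusedSectionVars false

section FieldFacts

variable {F K ι : Type} [Field F] [Fintype F] [Field K] [Fintype K] [Algebra F K]
  [Fintype ι] [DecidableEq ι]

lemma nonsq_natDegree (q d k : ℕ) (hq : Fintype.card F = q) (hodd : Odd q)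
    (hK : Fintype.card K = q ^ d) (hd : d = 2 ^ (k + 1))
    (x : Kˣ) (hx : ¬ IsSquare x) : (minpoly F (x : K)).natDegree = d := by
  have hfin : Module.finrank F K = d := by
    have h := Module.card_eq_pow_finrank (K := F) (V := K)
    rw [hK, hq] at h
    have : 1 < q := hq ▸ Fintype.one_lt_card
    exact (Nat.pow_right_injective this h).symm
  have hint : IsIntegral F (x:K) := IsIntegral.of_finite F _
  set e := (minpoly F (x : K)).natDegree with he
  have hfe : Module.finrank F (IntermediateField.adjoin F {(x:K)}) = e :=
    IntermediateField.adjoin.finrank hint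
  have hdvd : e ∣ 2 ^ (k + 1) := by
    rw [← hd, ← hfin, ← hfe]
    exact ⟨_, (Module.finrank_mul_finrank F _ K).symm⟩
  by_contra hne
  have hdvd2 : e ∣ 2 ^ k := by
    obtain ⟨j, hj, hj2⟩ := (Nat.dvd_prime_pow Nat.prime_two).1 hdvd
    rw [hj2]
    apply pow_dvd_pow
    rcases hj.eq_or_lt with h | h
    · exact absurd (by rw [hj2, hd, h]) hne
    · omega
  apply hx
  have hpow : (x:K) ^ q ^ e = x := by
    let y : IntermediateField.adjoin F {(x:K)} := ⟨x, IntermediateField.mem_adjoin_simple_self F _⟩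
    have : Fintype (IntermediateField.adjoin F {(x:K)}) := Fintype.ofFinite _
    have h1 := FiniteField.pow_card y
    rw [Module.card_eq_pow_finrank (K := F), hfe, hq] at h1
    exact congrArg Subtype.val h1
  have hpow2 : (x:K) ^ q ^ (2 ^ k) = x := by
    obtain ⟨c, hc⟩ := hdvd2
    rw [hc]
    clear hc
    induction c with
    | zero => simp
    | succ c ih => rw [Nat.mul_succ, pow_add, pow_mul, ih, hpow]
  have hq1 : 1 ≤ q ^ 2 ^ k := Nat.one_le_pow _ _ hodd.pos
  have hpow3 : x ^ (q ^ (2 ^ k) - 1) = 1 := by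
    have h3 : x ^ q ^ (2 ^ k) = x := Units.ext hpow2
    have h4 : x ^ (q ^ (2 ^ k) - 1) * x = 1 * x := by
      rw [← pow_succ, Nat.sub_add_cancel hq1, h3, one_mul]
    exact mul_right_cancel h4
  have hc2 : ringChar K ≠ 2 := by
    intro h2
    have h3 := FiniteField.even_card_iff_char_two.1 h2
    rw [hK] at h3
    have h4 := Nat.odd_iff.1 (hodd.pow (n := d))
    omega
  rw [FiniteField.unit_isSquare_iff hc2, hK, hd]
  obtain ⟨t, ht⟩ := hodd.pow (n := 2 ^ k)
  have : q ^ 2 ^ (k + 1) / 2 = (q ^ 2 ^ k - 1) * (t + 1) := by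
    rw [pow_succ, pow_mul, ht]
    have : (2 * t + 1) ^ 2 = 2 * ((2 * t) * (t + 1)) + 1 := by ring
    rw [this]
    simp only [Nat.add_sub_cancel]
    omega
  rw [this, pow_mul, hpow3, one_pow]

variable (b : Module.Basis ι F K)

lemma lmm_mulVec (t y : K) : Algebra.leftMulMatrix b t *ᵥ b.equivFun y = b.equivFun (t * y) := by
  have := Algebra.leftMulMatrix_mulVec_repr b t y
  simpa using this

lemma irrM_of_degree (x : K) (hx : (minpoly F x).natDegree = Module.finrank F K) :
    IrrM (Algebra.leftMulMatrix b x) := by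
  intro v hv w
  have hint : IsIntegral F x := IsIntegral.of_finite F _
  have htop : IntermediateField.adjoin F {x} = ⊤ :=
    (Field.primitive_element_iff_minpoly_natDegree_eq F x).2 hx
  have hmem : (b.equivFun.symm w / b.equivFun.symm v) ∈ IntermediateField.adjoin F {x} := by
    rw [htop]; trivial
  rw [← IntermediateField.mem_toSubalgebra, IntermediateField.adjoin_simple_toSubalgebra_of_isAlgebraic hint.isAlgebraic,
    Algebra.adjoin_singleton_eq_range_aeval] at hmem
  obtain ⟨p, hp⟩ := hmem
  refine ⟨p, ?_⟩
  have hv' : b.equivFun.symm v ≠ 0 := (LinearEquiv.map_ne_zero_iff _).2 hv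
  rw [Polynomial.aeval_algHom_apply]
  have h1 : v = b.equivFun (b.equivFun.symm v) := (LinearEquiv.apply_symm_apply _ _).symm
  conv_lhs => rw [h1, lmm_mulVec]
  have hp' : (Polynomial.aeval x) p = b.equivFun.symm w / b.equivFun.symm v := hp
  rw [hp', div_mul_cancel₀ _ hv']
  exact LinearEquiv.apply_symm_apply _ _

lemma card_intertwiners_le (x x' : Matrix ι ι F) [Nonempty ι] (hx : IrrM x) :
    Nat.card {α : UMat ι F // α.1 * x = x' * α.1} ≤ Fintype.card F ^ Fintype.card ι := by
  obtain ⟨i⟩ := ‹Nonempty ι›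
  rw [← Fintype.card_fun, ← Nat.card_eq_fintype_card]
  refine Nat.card_le_card_of_injective (fun α => α.1.1 *ᵥ (Pi.single i 1 : ι → F)) ?_
  intro α α' h
  have hsub : (α.1.1 - α'.1.1) * x = x' * (α.1.1 - α'.1.1) := by
    rw [Matrix.sub_mul, Matrix.mul_sub, α.2, α'.2]
  rcases hx.zero_or_inj hsub with h0 | h0
  · exact Subtype.ext (Subtype.ext (sub_eq_zero.1 h0))
  · exfalso
    have h1 : (α.1.1 - α'.1.1) *ᵥ (Pi.single i 1 : ι → F) = (α.1.1 - α'.1.1) *ᵥ 0 := by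
      rw [Matrix.sub_mulVec, Matrix.mulVec_zero]; exact sub_eq_zero.2 h
    have := congrFun (h0 h1) i
    simp at this

lemma sum_intertwiners_le (x : Kˣ) [Nonempty ι] (hx : (minpoly F (x:K)).natDegree = Module.finrank F K)
    (S : Finset Kˣ) :
    ∑ x' ∈ S, Nat.card {α : UMat ι F // α.1 * Algebra.leftMulMatrix b x = Algebra.leftMulMatrix b x' * α.1} ≤
      Fintype.card ι * Fintype.card F ^ Fintype.card ι := by
  classical
  have hd : Module.finrank F K = Fintype.card ι := Module.finrank_eq_card_basis b
  have hint : IsIntegral F (x:K) := IsIntegral.of_finite F _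
  let R : Finset K := (minpoly F (x:K)).aroots K |>.toFinset
  have hR : R.card ≤ Fintype.card ι := by
    rw [← hd, ← hx]
    exact (Multiset.toFinset_card_le _).trans ((Polynomial.card_roots' _).trans (Polynomial.natDegree_map_le))
  have hz : ∀ x' ∈ S, ¬ (x':K) ∈ R →
      Nat.card {α : UMat ι F // α.1 * Algebra.leftMulMatrix b x = Algebra.leftMulMatrix b x' * α.1} = 0 := by
    intro x' _ hx'
    have : IsEmpty {α : UMat ι F // α.1 * Algebra.leftMulMatrix b (x:K) = Algebra.leftMulMatrix b (x':K) * α.1} := by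
      refine ⟨fun α => hx' ?_⟩
      have h1 := intertwine_poly α.2 (minpoly F (x:K))
      rw [Polynomial.aeval_algHom_apply, minpoly.aeval, map_zero, Matrix.mul_zero,
        Polynomial.aeval_algHom_apply] at h1
      have h2 : Algebra.leftMulMatrix b ((Polynomial.aeval (x':K)) (minpoly F (x:K))) = 0 :=
        (α.1.2.mul_left_eq_zero).1 h1.symm
      rw [← map_zero (Algebra.leftMulMatrix b)] at h2
      have h3 := Algebra.leftMulMatrix_injective b h2
      rw [Multiset.mem_toFinset, Polynomial.mem_aroots]
      exact ⟨minpoly.ne_zero hint, h3⟩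
    exact Nat.card_of_isEmpty
  calc _ = ∑ x' ∈ S.filter (fun x' : Kˣ => (x':K) ∈ R), Nat.card {α : UMat ι F // α.1 * Algebra.leftMulMatrix b (x:K) = Algebra.leftMulMatrix b (x':K) * α.1} := by
        rw [Finset.sum_filter]
        apply Finset.sum_congr rfl
        intro x' hx'
        split_ifs with h
        · rfl
        · exact hz x' hx' h
    _ ≤ ∑ x' ∈ S.filter (fun x' : Kˣ => (x':K) ∈ R), Fintype.card F ^ Fintype.card ι :=
        Finset.sum_le_sum fun x' _ => card_intertwiners_le _ _ (irrM_of_degree b _ hx)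
    _ = (S.filter (fun x' : Kˣ => (x':K) ∈ R)).card * Fintype.card F ^ Fintype.card ι := by simp
    _ ≤ _ := by
        gcongr
        refine le_trans ?_ hR
        apply Finset.card_le_card_of_injOn (fun x : Kˣ => (x:K))
        · intro y hy; exact (Finset.mem_filter.1 hy).2
        · intro y _ z _ h; exact Units.ext h

lemma exists_frob (q : ℕ) (hq : Fintype.card F = q) :
    ∃ α : GL ι F, ∀ x : K, α.1 * Algebra.leftMulMatrix b x = Algebra.leftMulMatrix b (x ^ q) * α.1 := by
  subst hq
  let φ : K ≃ₐ[F] K := FiniteField.frobeniusAlgEquivOfAlgebraic F K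
  have hφ : ∀ x, φ x = x ^ Fintype.card F := fun x => rfl
  refine ⟨⟨LinearMap.toMatrix b b φ.toLinearMap, LinearMap.toMatrix b b φ.symm.toLinearMap, ?_, ?_⟩, ?_⟩
  · rw [← LinearMap.toMatrix_comp, ← LinearMap.toMatrix_one b]; congr 1; ext; simp
  · rw [← LinearMap.toMatrix_comp, ← LinearMap.toMatrix_one b]; congr 1; ext; simp
  · intro x
    change LinearMap.toMatrix b b φ.toLinearMap * LinearMap.toMatrix b b (LinearMap.mulLeft F x) =
      LinearMap.toMatrix b b (LinearMap.mulLeft F (x ^ Fintype.card F)) * LinearMap.toMatrix b b φ.toLinearMap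
    rw [← LinearMap.toMatrix_comp, ← LinearMap.toMatrix_comp]
    congr 1
    ext y
    simp [← hφ]

/-- no collision -/
lemma noncollide {κ σ : Type} [Fintype κ] [DecidableEq κ] [Fintype σ] [DecidableEq σ] (x : Kˣ)
    (hx : (minpoly F (x:K)).natDegree = Module.finrank F K) (hx1 : x ≠ 1)
    (hκ : Fintype.card κ < Fintype.card ι) (l : Matrix κ κ F) (N : Matrix ι (κ ⊕ σ) F)
    (h : Algebra.leftMulMatrix b x * N = N * fromBlocks l 0 0 1) : N = 0 := by
  have hint : IsIntegral F (x:K) := IsIntegral.of_finite F _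
  have hd : Module.finrank F K = Fintype.card ι := Module.finrank_eq_card_basis b
  let f := l.charpoly * (Polynomial.X - 1)
  have h0 : ∀ p : Polynomial F, Polynomial.aeval (fromBlocks l 0 0 (1 : Matrix σ σ F)) p =
      fromBlocks (Polynomial.aeval l p) 0 0 (Polynomial.aeval (1 : Matrix σ σ F) p) := by
    intro p
    induction p using Polynomial.induction_on' with
    | add p q hp hq => simp only [map_add, hp, hq, fromBlocks_add, add_zero]
    | monomial n a =>
      have hn : (fromBlocks l 0 0 (1 : Matrix σ σ F)) ^ n = fromBlocks (l ^ n) 0 0 1 := by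
        induction n with
        | zero => simp
        | succ n ih => rw [pow_succ, ih, fromBlocks_multiply]; simp [pow_succ]
      simp only [Polynomial.aeval_monomial, ← Algebra.smul_def, hn, fromBlocks_smul, one_pow, smul_zero]
  have h1 : Polynomial.aeval (fromBlocks l 0 0 (1 : Matrix σ σ F)) f = 0 := by
    rw [h0, map_mul, map_mul, Matrix.aeval_self_charpoly]
    simp
  have h2 := intertwine_poly h.symm f
  rw [h1, Matrix.mul_zero, Polynomial.aeval_algHom_apply] at h2
  have h3 : (Polynomial.aeval (x:K)) f ≠ 0 := by
    rw [map_mul]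
    apply mul_ne_zero
    · intro h4
      have := Polynomial.natDegree_le_of_dvd (minpoly.dvd F (x:K) h4) (Matrix.charpoly_monic l).ne_zero
      rw [Matrix.charpoly_natDegree_eq_dim, hx, hd] at this
      omega
    · simp only [map_sub, Polynomial.aeval_X, map_one]
      rw [sub_ne_zero]
      intro h5; exact hx1 (Units.ext h5)
  have h4 : Algebra.leftMulMatrix b ((Polynomial.aeval (x:K)) f)⁻¹ * Algebra.leftMulMatrix b ((Polynomial.aeval (x:K)) f) = 1 := by
    rw [← map_mul, inv_mul_cancel₀ h3, map_one]
  calc N = (Algebra.leftMulMatrix b ((Polynomial.aeval (x:K)) f)⁻¹ * Algebra.leftMulMatrix b ((Polynomial.aeval (x:K)) f)) * N := by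
        rw [h4, Matrix.one_mul]
    _ = 0 := by rw [Matrix.mul_assoc, ← h2, Matrix.mul_zero]

end FieldFacts

open Matrix
set_option linter.unusedSectionVars false

section AbsDual

variable {A : Type} [CommGroup A] [Fintype A]

lemma dual_parseval (f : A → ℂ) :
    ∑ ψ : AddChar (Additive A) ℂ, ‖∑ x, ψ (Additive.ofMul x) * f x‖ ^ 2 =
      Fintype.card A * ∑ x, ‖f x‖ ^ 2 := by
  classical
  have hc : ∀ z : ℂ, ((‖z‖ ^ 2 : ℝ) : ℂ) = z * (starRingEnd ℂ) z := by
    intro z; rw [Complex.mul_conj, Complex.normSq_eq_norm_sq]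
  have key : ((∑ ψ : AddChar (Additive A) ℂ, ‖∑ x, ψ (Additive.ofMul x) * f x‖ ^ 2 : ℝ) : ℂ) =
      ((Fintype.card A * ∑ x, ‖f x‖ ^ 2 : ℝ) : ℂ) := by
    push_cast
    have hc' : ∀ z : ℂ, ((‖z‖ : ℝ) : ℂ) ^ 2 = z * (starRingEnd ℂ) z := by
      intro z; rw [← hc]; push_cast; rfl
    simp_rw [hc', map_sum, map_mul, Finset.sum_mul_sum]
    have h1 : ∀ (ψ : AddChar (Additive A) ℂ) (x y : A),
        ψ (Additive.ofMul x) * f x * ((starRingEnd ℂ) (ψ (Additive.ofMul y)) * (starRingEnd ℂ) (f y)) =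
        (f x * (starRingEnd ℂ) (f y)) * ψ (Additive.ofMul (x / y)) := by
      intro ψ x y
      rw [← AddChar.map_neg_eq_conj, ofMul_div, sub_eq_add_neg, AddChar.map_add_eq_mul]
      ring
    simp_rw [h1]
    rw [Finset.sum_comm, Finset.mul_sum]
    refine Finset.sum_congr rfl fun x _ => ?_
    rw [Finset.sum_comm]
    simp_rw [← Finset.mul_sum, AddChar.sum_apply_eq_ite]
    rw [Finset.sum_eq_single x]
    · simp; ring
    · intro y _ hy
      rw [if_neg, mul_zero]
      intro h0
      apply hy
      rw [ofMul_eq_zero, div_eq_one] at h0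
      exact h0.symm
    · simp
  exact_mod_cast key

lemma dual_nongeneric_card [IsCyclic A] [DecidableEq (AddChar (Additive A) ℂ)] (Q : ℕ) (hQ : 2 ≤ Q) :
    (Finset.univ.filter (fun ψ : AddChar (Additive A) ℂ => ψ ^ Q = ψ)).card ≤ Q := by
  classical
  obtain ⟨t, ht⟩ := IsCyclic.exists_generator (α := A)
  have hsub : ∀ ψ ∈ Finset.univ.filter (fun ψ : AddChar (Additive A) ℂ => ψ ^ Q = ψ),
      ψ (Additive.ofMul t) ∈ (Polynomial.nthRoots (Q - 1) (1:ℂ)).toFinset := by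
    intro ψ hψ
    have h1 := (Finset.mem_filter.1 hψ).2
    rw [Multiset.mem_toFinset, Polynomial.mem_nthRoots (by omega)]
    have h2 : ψ (Additive.ofMul t) ^ Q = ψ (Additive.ofMul t) := by
      rw [← AddChar.pow_apply, h1]
    have h3 : ψ (Additive.ofMul t) ≠ 0 := (AddChar.val_isUnit ψ _).ne_zero
    have h4 : ψ (Additive.ofMul t) ^ (Q - 1) * ψ (Additive.ofMul t) = 1 * ψ (Additive.ofMul t) := by
      rw [← pow_succ, Nat.sub_add_cancel (by omega), h2, one_mul]
    exact mul_right_cancel₀ h3 h4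
  refine (Finset.card_le_card_of_injOn _ hsub ?_).trans ((Multiset.toFinset_card_le _).trans
    ((Polynomial.card_nthRoots _ _).trans (Nat.sub_le _ _)))
  intro ψ _ ψ' _ h
  have h : ψ (Additive.ofMul t) = ψ' (Additive.ofMul t) := h
  ext x
  obtain ⟨n, hn⟩ := (Submonoid.mem_powers_iff _ _).1 ((mem_powers_iff_mem_zpowers).2 (ht (Additive.toMul x)))
  have : x = n • Additive.ofMul t := by rw [← ofMul_pow, hn]; rfl
  rw [this, AddChar.map_nsmul_eq_pow, AddChar.map_nsmul_eq_pow, h]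

lemma dual_orbit [DecidableEq (AddChar (Additive A) ℂ)] (q k : ℕ) (hq : 1 ≤ q) (hA : Fintype.card A = q ^ 2 ^ (k + 1) - 1)
    (f : AddChar (Additive A) ℂ → ℝ) (hf0 : ∀ ψ, 0 ≤ f ψ) (hfq : ∀ ψ, f (ψ ^ q) = f ψ)
    (hex : ∃ ψ, 1 ≤ f ψ) :
    1 ≤ (1 / (2:ℝ) ^ (k + 1)) * ∑ ψ, f ψ +
      ∑ ψ ∈ Finset.univ.filter (fun ψ : AddChar (Additive A) ℂ => ψ ^ (q ^ 2 ^ k) = ψ), f ψ := by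
  classical
  obtain ⟨ψ, hψ⟩ := hex
  by_cases hng : ψ ^ (q ^ 2 ^ k) = ψ
  · have h1 : f ψ ≤ ∑ ψ ∈ Finset.univ.filter (fun ψ : AddChar (Additive A) ℂ => ψ ^ (q ^ 2 ^ k) = ψ), f ψ :=
      Finset.single_le_sum (f := f) (fun i _ => hf0 i) (Finset.mem_filter.2 ⟨Finset.mem_univ _, hng⟩)
    have h2 : 0 ≤ (1 / (2:ℝ) ^ (k + 1)) * ∑ ψ, f ψ :=
      mul_nonneg (by positivity) (Finset.sum_nonneg fun i _ => hf0 i)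
    linarith
  · let T : AddChar (Additive A) ℂ → AddChar (Additive A) ℂ := fun ψ => ψ ^ q
    have hT : ∀ n, T^[n] ψ = ψ ^ (q ^ n) := by
      intro n
      induction n with
      | zero => simp
      | succ n ih => rw [Function.iterate_succ_apply', ih]; simp only [T]; rw [← pow_mul, pow_succ]
    have hf : ∀ n, f (T^[n] ψ) = f ψ := by
      intro n
      induction n with
      | zero => simp
      | succ n ih => rw [Function.iterate_succ_apply']; simp only [T]; rw [hfq]; exact ih
    have hper : Function.IsPeriodicPt T (2 ^ (k + 1)) ψ := by
      show T^[_] ψ = ψ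
      rw [hT]
      have h1 : 1 ≤ q ^ 2 ^ (k + 1) := Nat.one_le_pow _ _ hq
      rw [← Nat.sub_add_cancel h1, ← hA, pow_succ]
      have : ψ ^ Fintype.card A = 1 := by
        ext x
        rw [AddChar.pow_apply, ← AddChar.map_nsmul_eq_pow]
        have : (Fintype.card A) • x = 0 := by
          have := card_nsmul_eq_zero (x := x)
          rwa [Fintype.card_additive] at this
        rw [this]; simp
      rw [this, one_mul]
    have hmin : Function.minimalPeriod T ψ = 2 ^ (k + 1) := by
      obtain ⟨j, hj, hj2⟩ := (Nat.dvd_prime_pow Nat.prime_two).1 hper.minimalPeriod_dvd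
      rcases hj.eq_or_lt with h | h
      · rw [hj2, h]
      · exfalso; apply hng
        have : Function.IsPeriodicPt T (2 ^ k) ψ :=
          (Function.isPeriodicPt_minimalPeriod T ψ).trans_dvd (by rw [hj2]; exact pow_dvd_pow _ (by omega))
        rw [← hT]; exact this
    have hinj : Set.InjOn (fun n => T^[n] ψ) (Finset.range (2 ^ (k + 1)) : Set ℕ) := by
      intro a ha c hc h
      simp only [Finset.coe_range, Set.mem_Iio] at ha hc
      have := Function.iterate_injOn_Iio_minimalPeriod (f := T) (x := ψ)
      rw [hmin] at this
      exact this ha hc h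
    have h1 : (2:ℝ) ^ (k + 1) ≤ ∑ ψ, f ψ := by
      calc (2:ℝ) ^ (k + 1) ≤ ∑ n ∈ Finset.range (2 ^ (k + 1)), f (T^[n] ψ) := by
            simp_rw [hf]
            rw [Finset.sum_const, Finset.card_range, nsmul_eq_mul]
            push_cast
            nlinarith [pow_pos (show (0:ℝ) < 2 by norm_num) (k + 1)]
        _ = ∑ φ ∈ (Finset.range (2 ^ (k + 1))).image (fun n => T^[n] ψ), f φ :=
            (Finset.sum_image hinj).symm
        _ ≤ _ := Finset.sum_le_sum_of_subset_of_nonneg (Finset.subset_univ _) fun i _ _ => hf0 i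
    have h2 : 1 ≤ (1 / (2:ℝ) ^ (k + 1)) * ∑ ψ, f ψ := by
      rw [one_div, ← div_eq_inv_mul, one_le_div (by positivity)]
      exact h1
    have h3 : 0 ≤ ∑ ψ ∈ Finset.univ.filter (fun ψ : AddChar (Additive A) ℂ => ψ ^ (q ^ 2 ^ k) = ψ), f ψ :=
      Finset.sum_nonneg fun i _ => hf0 i
    linarith

end AbsDual

open Matrix
set_option linter.unusedSectionVars false

section HGroup

variable {F K ι κ : Type} [Field F] [Fintype F] [Field K] [Fintype K] [Algebra F K]
  [Fintype ι] [DecidableEq ι] [Fintype κ] [DecidableEq κ]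

lemma lmm_inv (b : Module.Basis ι F K) (x : Kˣ) :
    Algebra.leftMulMatrix b (x : K) * Algebra.leftMulMatrix b ((x⁻¹ : Kˣ) : K) = 1 := by
  rw [← map_mul, Units.mul_inv, map_one]

lemma lmm_inv' (b : Module.Basis ι F K) (x : Kˣ) :
    Algebra.leftMulMatrix b ((x⁻¹ : Kˣ) : K) * Algebra.leftMulMatrix b (x : K) = 1 := by
  rw [← map_mul, Units.inv_mul, map_one]

/-- block upper triangular element -/
noncomputable def bl (b : Module.Basis ι F K) (x : Kˣ) (l : GL κ F) (u : Matrix ι κ F) : GL (ι ⊕ κ) F where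
  val := fromBlocks (Algebra.leftMulMatrix b (x : K)) u 0 l.1
  inv := fromBlocks (Algebra.leftMulMatrix b ((x⁻¹ : Kˣ) : K))
    (-(Algebra.leftMulMatrix b ((x⁻¹ : Kˣ) : K) * u * (l⁻¹ : GL κ F).1)) 0 (l⁻¹ : GL κ F).1
  val_inv := by
    rw [fromBlocks_multiply, ← fromBlocks_one]
    have h : l.1 * (l⁻¹ : GL κ F).1 = 1 := l.mul_inv
    congr 1
    · rw [Matrix.mul_zero, add_zero, lmm_inv]
    · rw [Matrix.mul_neg, ← Matrix.mul_assoc, ← Matrix.mul_assoc, lmm_inv, Matrix.one_mul, neg_add_cancel]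
    · simp
    · rw [Matrix.zero_mul, zero_add, h]
  inv_val := by
    rw [fromBlocks_multiply, ← fromBlocks_one]
    have h : (l⁻¹ : GL κ F).1 * l.1 = 1 := l.inv_mul
    congr 1
    · rw [Matrix.mul_zero, add_zero, lmm_inv']
    · rw [Matrix.neg_mul, Matrix.mul_assoc _ _ l.1, h, Matrix.mul_one, add_neg_cancel]
    · simp
    · rw [Matrix.zero_mul, zero_add, h]

lemma bl_mul (b : Module.Basis ι F K) (x x' : Kˣ) (l l' : GL κ F) (u u' : Matrix ι κ F) :
    bl b x l u * bl b x' l' u' = bl b (x * x') (l * l') (Algebra.leftMulMatrix b (x:K) * u' + u * l'.1) := by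
  apply Units.ext
  show fromBlocks _ _ _ _ * fromBlocks _ _ _ _ = fromBlocks _ _ _ _
  rw [fromBlocks_multiply]
  congr 1
  · rw [Matrix.mul_zero, add_zero, ← map_mul, Units.val_mul]
  · simp
  · rw [Matrix.zero_mul, zero_add, Units.val_mul]

lemma bl_one (b : Module.Basis ι F K) : bl b (1 : Kˣ) (1 : GL κ F) 0 = 1 := by
  apply Units.ext
  show fromBlocks _ _ _ _ = 1
  rw [← fromBlocks_one, Units.val_one, map_one, Units.val_one]

/-- the auxiliary group -/
@[ext] structure HG (b : Module.Basis ι F K) (κ : Type) [Fintype κ] [DecidableEq κ] where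
  x : Kˣ
  x' : Kˣ
  l : GL κ F
  u : Matrix ι κ F
  u' : Matrix ι κ F

variable (b : Module.Basis ι F K)

noncomputable instance HG.instGroup : Group (HG b κ) :=
  let m : Mul (HG b κ) := ⟨fun h k => ⟨h.x * k.x, h.x' * k.x', h.l * k.l,
    Algebra.leftMulMatrix b (h.x:K) * k.u + h.u * k.l.1, Algebra.leftMulMatrix b (h.x':K) * k.u' + h.u' * k.l.1⟩⟩
  let i : Inv (HG b κ) := ⟨fun h => ⟨h.x⁻¹, h.x'⁻¹, h.l⁻¹,
    -(Algebra.leftMulMatrix b ((h.x⁻¹ : Kˣ) : K) * h.u * (h.l⁻¹ : GL κ F).1),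
    -(Algebra.leftMulMatrix b ((h.x'⁻¹ : Kˣ) : K) * h.u' * (h.l⁻¹ : GL κ F).1)⟩⟩
  let o : One (HG b κ) := ⟨⟨1, 1, 1, 0, 0⟩⟩
  Group.ofLeftAxioms
    (fun h k l => by
      apply HG.ext
      · exact mul_assoc _ _ _
      · exact mul_assoc _ _ _
      · exact mul_assoc _ _ _
      · change Algebra.leftMulMatrix b ((h.x * k.x : Kˣ) : K) * l.u + (Algebra.leftMulMatrix b (h.x:K) * k.u + h.u * k.l.1) * l.l.1 =
          Algebra.leftMulMatrix b (h.x:K) * (Algebra.leftMulMatrix b (k.x:K) * l.u + k.u * l.l.1) + h.u * (k.l * l.l).1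
        rw [Units.val_mul, map_mul, Units.val_mul, Matrix.add_mul, Matrix.mul_add]
        simp only [Matrix.mul_assoc, add_assoc]
      · change Algebra.leftMulMatrix b ((h.x' * k.x' : Kˣ) : K) * l.u' + (Algebra.leftMulMatrix b (h.x':K) * k.u' + h.u' * k.l.1) * l.l.1 =
          Algebra.leftMulMatrix b (h.x':K) * (Algebra.leftMulMatrix b (k.x':K) * l.u' + k.u' * l.l.1) + h.u' * (k.l * l.l).1
        rw [Units.val_mul, map_mul, Units.val_mul, Matrix.add_mul, Matrix.mul_add]
        simp only [Matrix.mul_assoc, add_assoc])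
    (fun h => by
      apply HG.ext
      · exact one_mul _
      · exact one_mul _
      · exact one_mul _
      · change Algebra.leftMulMatrix b ((1 : Kˣ) : K) * h.u + 0 * h.l.1 = h.u
        simp
      · change Algebra.leftMulMatrix b ((1 : Kˣ) : K) * h.u' + 0 * h.l.1 = h.u'
        simp)
    (fun h => by
      have hl : (h.l⁻¹ : GL κ F).1 * h.l.1 = 1 := h.l.inv_mul
      apply HG.ext
      · exact inv_mul_cancel _
      · exact inv_mul_cancel _
      · exact inv_mul_cancel _
      · change Algebra.leftMulMatrix b ((h.x⁻¹ : Kˣ) : K) * h.u + -(Algebra.leftMulMatrix b ((h.x⁻¹ : Kˣ) : K) * h.u * (h.l⁻¹ : GL κ F).1) * h.l.1 = 0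
        rw [Matrix.neg_mul, Matrix.mul_assoc _ _ h.l.1, hl, Matrix.mul_one, add_neg_cancel]
      · change Algebra.leftMulMatrix b ((h.x'⁻¹ : Kˣ) : K) * h.u' + -(Algebra.leftMulMatrix b ((h.x'⁻¹ : Kˣ) : K) * h.u' * (h.l⁻¹ : GL κ F).1) * h.l.1 = 0
        rw [Matrix.neg_mul, Matrix.mul_assoc _ _ h.l.1, hl, Matrix.mul_one, add_neg_cancel])

def HG.equiv : HG b κ ≃ GL κ F × (Kˣ × Matrix ι κ F) × (Kˣ × Matrix ι κ F) where
  toFun h := (h.l, (h.x, h.u), (h.x', h.u'))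
  invFun p := ⟨p.2.1.1, p.2.2.1, p.1, p.2.1.2, p.2.2.2⟩
  left_inv _ := rfl
  right_inv _ := rfl

instance finite_mat' (α β : Type) [Finite α] [Finite β] : Finite (Matrix α β F) := by
  unfold Matrix; infer_instance

noncomputable instance HG.instFintype : Fintype (HG b κ) :=
  have : Finite (HG b κ) := Finite.of_equiv _ (HG.equiv (κ := κ) b).symm
  Fintype.ofFinite _

noncomputable def HG.p1 : HG b κ →* GL (ι ⊕ κ) F where
  toFun h := bl b h.x h.l h.u
  map_one' := bl_one b
  map_mul' h k := (bl_mul b h.x k.x h.l k.l h.u k.u).symm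

noncomputable def HG.p2 : HG b κ →* GL (ι ⊕ κ) F where
  toFun h := bl b h.x' h.l h.u'
  map_one' := bl_one b
  map_mul' h k := (bl_mul b h.x' k.x' h.l k.l h.u' k.u').symm

/-- twist character -/
noncomputable def HG.tw (c c' : Kˣ →* ℂ) : HG b κ →* ℂ where
  toFun h := c h.x * c' h.x'
  map_one' := by
    change c 1 * c' 1 = 1
    simp
  map_mul' h k := by
    change c (h.x * k.x) * c' (h.x' * k.x') = _
    rw [map_mul, map_mul]; ring

lemma HG_int {G : Type} [Group G] (e : GL (ι ⊕ κ) F ≃* G) (χ : Irr G) (c c' : Kˣ →* ℂ) :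
    ∃ n : ℕ, (Fintype.card (HG b κ) : ℂ)⁻¹ * ∑ h : HG b κ, (c h.x * c' h.x') *
      (χ.1 (e (bl b h.x h.l h.u)) * χ.1 (e (bl b h.x' h.l h.u'))⁻¹) = n := by
  obtain ⟨χ, V, hV, rfl⟩ := χ
  exact avg_twist_nat₂ V (e.toMonoidHom.comp (HG.p1 b)) (e.toMonoidHom.comp (HG.p2 b)) (HG.tw b c c')

end HGroup

open Matrix
set_option linter.unusedSectionVars false

section NN

variable {F K ι κ : Type} [Field F] [Fintype F] [Field K] [Fintype K] [Algebra F K]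
  [Fintype ι] [DecidableEq ι] [Fintype κ] [DecidableEq κ] [DecidableEq F] [DecidableEq K]
  (b : Module.Basis ι F K) {G : Type} [Group G] (e : GL (ι ⊕ κ) F ≃* G)

noncomputable def Ss (χ : Irr G) (l : GL κ F) (x : Kˣ) : ℂ :=
  ∑ u : Matrix ι κ F, χ.1 (e (bl b x l u))

open Classical in
noncomputable def Sq (χ : Irr G) (l : GL κ F) (x : Kˣ) : ℂ :=
  if IsSquare x then 0 else Ss b e χ l x

noncomputable def Bs (ψ : AddChar (Additive Kˣ) ℂ) (χ : Irr G) (l : GL κ F) : ℂ :=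
  ∑ x : Kˣ, ψ (Additive.ofMul x) * Sq b e χ l x

noncomputable def Nn (ψ : AddChar (Additive Kˣ) ℂ) (χ : Irr G) : ℝ :=
  4 / (Fintype.card (HG b κ) : ℝ) * ∑ l : GL κ F, ‖Bs b e ψ χ l‖ ^ 2

lemma Nn_nonneg (ψ : AddChar (Additive Kˣ) ℂ) (χ : Irr G) : 0 ≤ Nn b e ψ χ := by
  unfold Nn; positivity

noncomputable def sgnHom (K : Type) [Field K] [Fintype K] [DecidableEq K] : Kˣ →* ℂ :=
  ((Int.castRingHom ℂ).toMonoidHom.comp (quadraticChar K).toMonoidHom).comp (Units.coeHom K)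

lemma sgnHom_sq (x : Kˣ) (h : IsSquare x) : sgnHom K x = 1 := by
  have : quadraticChar K (x:K) = 1 := by
    rw [quadraticChar_one_iff_isSquare x.ne_zero]
    obtain ⟨y, rfl⟩ := h
    exact ⟨(y:K), by simp⟩
  change ((quadraticChar K (x:K) : ℤ) : ℂ) = 1
  rw [this]; simp

lemma sgnHom_nonsq (x : Kˣ) (h : ¬ IsSquare x) : sgnHom K x = -1 := by
  have : quadraticChar K (x:K) = -1 := by
    rw [quadraticChar_neg_one_iff_not_isSquare]
    rintro ⟨y, hy⟩
    apply h
    have hy0 : y ≠ 0 := by rintro rfl; exact x.ne_zero (by simp at hy)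
    exact ⟨Units.mk0 y hy0, Units.ext (by simpa using hy)⟩
  change ((quadraticChar K (x:K) : ℤ) : ℂ) = -1
  rw [this]; simp

lemma sum_HG (g : HG b κ → ℂ) : ∑ h, g h = ∑ l : GL κ F, ∑ x : Kˣ, ∑ u : Matrix ι κ F, ∑ x' : Kˣ, ∑ u' : Matrix ι κ F,
    g ⟨x, x', l, u, u'⟩ := by
  rw [← Equiv.sum_comp (HG.equiv (κ := κ) b).symm]
  simp_rw [Fintype.sum_prod_type]
  rfl

noncomputable def psiHom (ψ : AddChar (Additive Kˣ) ℂ) : Kˣ →* ℂ where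
  toFun x := ψ (Additive.ofMul x)
  map_one' := by simp
  map_mul' x y := by rw [ofMul_mul, AddChar.map_add_eq_mul]

lemma Nn_nat (ψ : AddChar (Additive Kˣ) ℂ) (χ : Irr G) [Finite G] :
    ∃ n : ℕ, Nn b e ψ χ = n := by
  let c1 := psiHom ψ
  let c2 := psiHom ψ * sgnHom K
  let d1 := psiHom (ψ⁻¹)
  let d2 := psiHom (ψ⁻¹) * sgnHom K
  have hc : ∀ x l, (c1 x - c2 x) * Ss b e χ l x = 2 * (ψ (Additive.ofMul x) * Sq b e χ l x) := by
    intro x l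
    simp only [c1, c2, MonoidHom.mul_apply, Sq]
    split_ifs with h
    · rw [sgnHom_sq x h]; ring
    · rw [sgnHom_nonsq x h]; simp only [psiHom, MonoidHom.coe_mk, OneHom.coe_mk]; ring
  have hconj : ∀ x : Kˣ, (ψ⁻¹) (Additive.ofMul x) = (starRingEnd ℂ) (ψ (Additive.ofMul x)) := by
    intro x; rw [AddChar.inv_apply, AddChar.map_neg_eq_conj]
  have hd : ∀ x l, (d1 x - d2 x) * (starRingEnd ℂ) (Ss b e χ l x) =
      2 * (starRingEnd ℂ) (ψ (Additive.ofMul x) * Sq b e χ l x) := by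
    intro x l
    simp only [d1, d2, MonoidHom.mul_apply, Sq]
    split_ifs with h
    · rw [sgnHom_sq x h]; simp
    · rw [sgnHom_nonsq x h]; simp only [psiHom, MonoidHom.coe_mk, OneHom.coe_mk]; rw [hconj, map_mul]; ring
  have key : ((Nn b e ψ χ : ℝ) : ℂ) = (Fintype.card (HG b κ) : ℂ)⁻¹ * ∑ h : HG b κ,
      ((c1 h.x - c2 h.x) * (d1 h.x' - d2 h.x')) *
      (χ.1 (e (bl b h.x h.l h.u)) * χ.1 (e (bl b h.x' h.l h.u'))⁻¹) := by
    rw [sum_HG]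
    have h1 : ∀ l : GL κ F, ∑ x : Kˣ, ∑ u : Matrix ι κ F, ∑ x' : Kˣ, ∑ u' : Matrix ι κ F,
        ((c1 x - c2 x) * (d1 x' - d2 x')) *
      (χ.1 (e (bl b x l u)) * χ.1 (e (bl b x' l u'))⁻¹) = 4 * (‖Bs b e ψ χ l‖ ^ 2 : ℝ) := by
      intro l
      have h2 : ∑ x : Kˣ, (c1 x - c2 x) * Ss b e χ l x = 2 * Bs b e ψ χ l := by
        rw [Bs, Finset.mul_sum]; exact Finset.sum_congr rfl fun x _ => hc x l
      have h3 : ∑ x : Kˣ, (d1 x - d2 x) * (starRingEnd ℂ) (Ss b e χ l x) = 2 * (starRingEnd ℂ) (Bs b e ψ χ l) := by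
        rw [Bs, map_sum, Finset.mul_sum]; exact Finset.sum_congr rfl fun x _ => hd x l
      have h4 : (((‖Bs b e ψ χ l‖ ^ 2 : ℝ)) : ℂ) = Bs b e ψ χ l * (starRingEnd ℂ) (Bs b e ψ χ l) := by
        rw [Complex.mul_conj, Complex.normSq_eq_norm_sq]
      rw [h4]
      calc _ = (∑ x : Kˣ, (c1 x - c2 x) * Ss b e χ l x) * (∑ x : Kˣ, (d1 x - d2 x) * (starRingEnd ℂ) (Ss b e χ l x)) := by
            rw [Finset.sum_mul]
            refine Finset.sum_congr rfl fun x _ => ?_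
            conv_rhs => rw [Ss, mul_assoc, Finset.sum_mul, Finset.mul_sum]
            refine Finset.sum_congr rfl fun u _ => ?_
            rw [Finset.mul_sum, Finset.mul_sum]
            refine Finset.sum_congr rfl fun x' _ => ?_
            rw [Ss, map_sum, Finset.mul_sum, Finset.mul_sum, Finset.mul_sum]
            refine Finset.sum_congr rfl fun u' _ => ?_
            rw [irr_conj χ.2]
            ring
        _ = _ := by rw [h2, h3]; ring
    simp_rw [h1]
    rw [← Finset.mul_sum, Nn]
    push_cast
    ring
  obtain ⟨n1, h1⟩ := HG_int b e χ c1 d1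
  obtain ⟨n2, h2⟩ := HG_int b e χ c1 d2
  obtain ⟨n3, h3⟩ := HG_int b e χ c2 d1
  obtain ⟨n4, h4⟩ := HG_int b e χ c2 d2
  have key2 : ((Nn b e ψ χ : ℝ) : ℂ) = n1 - n2 - n3 + n4 := by
    rw [key, ← h1, ← h2, ← h3, ← h4, ← mul_sub, ← mul_sub, ← mul_add, ← Finset.sum_sub_distrib,
      ← Finset.sum_sub_distrib, ← Finset.sum_add_distrib]
    congr 1
    exact Finset.sum_congr rfl fun h _ => by ring
  have key3 : Nn b e ψ χ = (((n1 : ℤ) - n2 - n3 + n4 : ℤ) : ℝ) := by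
    have : ((Nn b e ψ χ : ℝ) : ℂ) = (((((n1 : ℤ) - n2 - n3 + n4 : ℤ) : ℝ)) : ℂ) := by
      rw [key2]; push_cast; rfl
    exact_mod_cast this
  have h0 := Nn_nonneg b e ψ χ
  rw [key3] at h0
  have h0' : 0 ≤ ((n1 : ℤ) - n2 - n3 + n4 : ℤ) := by exact_mod_cast h0
  refine ⟨((n1 : ℤ) - n2 - n3 + n4 : ℤ).toNat, ?_⟩
  rw [key3]
  have := Int.toNat_of_nonneg h0'
  exact_mod_cast congrArg (fun z : ℤ => (z : ℝ)) this.symm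

end NN

open Matrix
set_option linter.unusedSectionVars false

section Bessel

variable {F K ι κ : Type} [Field F] [Fintype F] [Field K] [Fintype K] [Algebra F K]
  [Fintype ι] [DecidableEq ι] [Fintype κ] [DecidableEq κ] [DecidableEq F] [DecidableEq K]
  (b : Module.Basis ι F K) {G : Type} [Group G] (e : GL (ι ⊕ κ) F ≃* G)

/-- block diagonal matrices -/
noncomputable def dgHom (F ι κ : Type) [Field F] [Fintype ι] [DecidableEq ι] [Fintype κ] [DecidableEq κ] :
    GL ι F × GL κ F →* GL (ι ⊕ κ) F where
  toFun p := ⟨fromBlocks p.1.1 0 0 p.2.1, fromBlocks (p.1⁻¹).1 0 0 (p.2⁻¹).1,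
    by
      have h1 : p.1.1 * (p.1⁻¹).1 = 1 := p.1.mul_inv
      have h2 : p.2.1 * (p.2⁻¹).1 = 1 := p.2.mul_inv
      rw [fromBlocks_multiply, h1, h2]; simp,
    by
      have h1 : (p.1⁻¹).1 * p.1.1 = 1 := p.1.inv_mul
      have h2 : (p.2⁻¹).1 * p.2.1 = 1 := p.2.inv_mul
      rw [fromBlocks_multiply, h1, h2]; simp⟩
  map_one' := Units.ext (by
    show fromBlocks _ _ _ _ = 1
    rw [← fromBlocks_one]; rfl)
  map_mul' p p' := Units.ext (by
    show fromBlocks _ _ _ _ = fromBlocks _ _ _ _ * fromBlocks _ _ _ _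
    rw [fromBlocks_multiply]; simp)

lemma dgHom_val (p : GL ι F × GL κ F) : (dgHom F ι κ p).1 = fromBlocks p.1.1 0 0 p.2.1 := rfl
lemma bl_val (x : Kˣ) (l : GL κ F) (u : Matrix ι κ F) :
    (bl b x l u).1 = fromBlocks (Algebra.leftMulMatrix b (x : K)) u 0 l.1 := rfl

lemma Ss_frob (q : ℕ) (hq : Fintype.card F = q) (χ : Irr G) (l : GL κ F) (x : Kˣ) :
    Ss b e χ l (x ^ q) = Ss b e χ l x := by
  obtain ⟨α, hα⟩ := exists_frob b q hq
  have hinv : (α⁻¹).1 * α.1 = 1 := α.inv_mul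
  have hinv' : α.1 * (α⁻¹).1 = 1 := α.mul_inv
  let E : Matrix ι κ F ≃ Matrix ι κ F :=
    { toFun := fun u => α.1 * u
      invFun := fun u => (α⁻¹).1 * u
      left_inv := fun u => by beta_reduce; rw [← Matrix.mul_assoc, hinv, Matrix.one_mul]
      right_inv := fun u => by beta_reduce; rw [← Matrix.mul_assoc, hinv', Matrix.one_mul] }
  rw [Ss, Ss, ← Equiv.sum_comp E]
  refine Finset.sum_congr rfl fun u _ => ?_
  let γ := dgHom F ι κ (α, 1)
  have h : bl b (x ^ q) l (E u) = γ * bl b x l u * γ⁻¹ := by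
    rw [eq_mul_inv_iff_mul_eq]
    apply Units.ext
    show (bl b (x ^ q) l (E u)).1 * γ.1 = γ.1 * (bl b x l u).1
    rw [bl_val, bl_val, dgHom_val, fromBlocks_multiply, fromBlocks_multiply]
    have := hα (x : K)
    simp [E, this]
  rw [h, map_mul, map_mul, map_inv, irr_class χ.2]

lemma isSquare_pow_odd (q : ℕ) (hodd : Odd q) (x : Kˣ) : IsSquare (x ^ q) ↔ IsSquare x := by
  constructor
  · intro h
    obtain ⟨k, hk⟩ := hodd
    have : x = x ^ q * (x⁻¹ ^ k * x⁻¹ ^ k) := by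
      rw [hk, pow_succ, two_mul, pow_add, inv_pow]; group
    rw [this]
    exact h.mul ⟨_, rfl⟩
  · intro h; exact h.pow _

lemma Nn_frob (q : ℕ) (hq : Fintype.card F = q) (hodd : Odd q) (χ : Irr G) (ψ : AddChar (Additive Kˣ) ℂ) :
    Nn b e (ψ ^ q) χ = Nn b e ψ χ := by
  have hinj : Function.Injective (fun x : Kˣ => x ^ q) := by
    intro x y h
    have h' : (x:K) ^ q = (y:K) ^ q := by
      have := congrArg Units.val h
      simpa using this
    subst hq
    exact Units.ext ((FiniteField.frobeniusAlgEquivOfAlgebraic F K).injective h')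
  let E : Kˣ ≃ Kˣ := Equiv.ofBijective _ (Finite.injective_iff_bijective.1 hinj)
  have h : ∀ l, Bs b e (ψ ^ q) χ l = Bs b e ψ χ l := by
    intro l
    rw [Bs, Bs, ← Equiv.sum_comp E (fun x => ψ (Additive.ofMul x) * Sq b e χ l x)]
    refine Finset.sum_congr rfl fun x _ => ?_
    show _ = ψ (Additive.ofMul (x ^ q)) * Sq b e χ l (x ^ q)
    rw [AddChar.pow_apply, ofMul_pow, AddChar.map_nsmul_eq_pow]
    congr 1
    simp only [Sq, isSquare_pow_odd q hodd, Ss_frob b e q hq]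
  simp only [Nn, h]

variable [Fintype G] [DecidableEq G]

lemma sigma_CT (x x' : Kˣ) :
    ∑ l : GL κ F, ∑ u : Matrix ι κ F, ∑ u' : Matrix ι κ F,
      Fintype.card {h : G // h * e (bl b x l u) = e (bl b x' l u') * h} ≤
    Nat.card (CT κ (Algebra.leftMulMatrix b (x:K)) (Algebra.leftMulMatrix b (x':K))) := by
  let T := {p : GL κ F × Matrix ι κ F × Matrix ι κ F × G //
    p.2.2.2 * e (bl b x p.1 p.2.1) = e (bl b x' p.1 p.2.2.1) * p.2.2.2}
  have h1 : ∑ l : GL κ F, ∑ u : Matrix ι κ F, ∑ u' : Matrix ι κ F,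
      Fintype.card {h : G // h * e (bl b x l u) = e (bl b x' l u') * h} = Nat.card T := by
    rw [Nat.card_eq_fintype_card, Fintype.card_subtype, Finset.card_filter]
    simp_rw [Fintype.sum_prod_type]
    refine Finset.sum_congr rfl fun l _ => Finset.sum_congr rfl fun u _ => Finset.sum_congr rfl fun u' _ => ?_
    rw [Fintype.card_subtype, Finset.card_filter]
  rw [h1]
  refine Nat.card_le_card_of_injective (fun p : T => ⟨(p.1.1.1, p.1.2.1, p.1.2.2.1, (e.symm p.1.2.2.2).1),
    p.1.1.isUnit, (e.symm p.1.2.2.2).isUnit, ?_⟩) ?_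
  · have := congrArg e.symm p.2
    rw [map_mul, map_mul, e.symm_apply_apply, e.symm_apply_apply] at this
    exact congrArg Units.val this
  · rintro ⟨⟨l, u, u', h⟩, hp⟩ ⟨⟨l', v, v', h'⟩, hp'⟩ heq
    have hv := congrArg Subtype.val heq
    have h1 : l = l' := Units.ext (congrArg Prod.fst hv)
    have h2 : u = v := congrArg (fun p => p.2.1) hv
    have h3 : u' = v' := congrArg (fun p => p.2.2.1) hv
    have h4 : h = h' := e.symm.injective (Units.ext (congrArg (fun p => p.2.2.2) hv))
    subst h1 h2 h3 h4
    rfl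

open Classical in
noncomputable def NS (K : Type) [Field K] [Fintype K] [DecidableEq K] : Finset Kˣ := Finset.univ.filter (fun x : Kˣ => ¬ IsSquare x)

lemma mem_NS (x : Kˣ) : x ∈ NS K ↔ ¬ IsSquare x := by simp [NS]

lemma bessel1 (S : Finset (Irr G)) (ψ : AddChar (Additive Kˣ) ℂ) :
    ∑ χ ∈ S, ∑ l, ‖Bs b e ψ χ l‖ ^ 2 ≤ ∑ x ∈ NS K, ∑ x' ∈ NS K,
      (Nat.card (CT κ (Algebra.leftMulMatrix b (x:K)) (Algebra.leftMulMatrix b (x':K))) : ℝ) := by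
  rw [Finset.sum_comm]
  have h1 : ∀ l : GL κ F, ∑ χ ∈ S, ‖Bs b e ψ χ l‖ ^ 2 ≤
      ∑ x ∈ NS K, ∑ x' ∈ NS K, ∑ u : Matrix ι κ F, ∑ u' : Matrix ι κ F,
        (Fintype.card {h : G // h * e (bl b x l u) = e (bl b x' l u') * h} : ℝ) := by
    intro l
    have h := irr_bessel S (I := NS K × Matrix ι κ F) (fun i => ψ (Additive.ofMul i.1.1))
      (fun i => e (bl b i.1.1 l i.2))
    have h2 : ∀ χ : Irr G, Bs b e ψ χ l = ∑ i : NS K × Matrix ι κ F, ψ (Additive.ofMul i.1.1) * χ.1 (e (bl b i.1.1 l i.2)) := by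
      intro χ
      rw [Fintype.sum_prod_type]
      rw [Finset.sum_coe_sort (NS K) (fun x => ∑ u, ψ (Additive.ofMul x) * χ.1 (e (bl b x l u)))]
      rw [Bs, NS, Finset.sum_filter]
      refine Finset.sum_congr rfl fun x _ => ?_
      rw [Sq, ite_not]
      split_ifs
      · simp
      · rw [Ss, Finset.mul_sum]
    simp_rw [h2]
    refine h.trans (le_of_eq ?_)
    simp_rw [AddChar.norm_apply, one_mul, Fintype.sum_prod_type]
    rw [Finset.sum_coe_sort (NS K) (fun x => ∑ u, ∑ x' : NS K, ∑ u', (Fintype.card {h : G // h * e (bl b x l u) = e (bl b x'.1 l u') * h} : ℝ))]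
    refine Finset.sum_congr rfl fun x _ => ?_
    rw [Finset.sum_comm]
    rw [Finset.sum_coe_sort (NS K) (fun x' => ∑ u, ∑ u', (Fintype.card {h : G // h * e (bl b x l u) = e (bl b x' l u') * h} : ℝ))]
  refine (Finset.sum_le_sum fun l _ => h1 l).trans ?_
  rw [Finset.sum_comm]
  refine Finset.sum_le_sum fun x _ => ?_
  rw [Finset.sum_comm]
  refine Finset.sum_le_sum fun x' _ => ?_
  exact_mod_cast sigma_CT b e x x'

lemma bessel2 (S : Finset (Irr G)) :
    ∑ χ ∈ S, ∑ ψ : AddChar (Additive Kˣ) ℂ, ∑ l, ‖Bs b e ψ χ l‖ ^ 2 ≤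
      Fintype.card Kˣ * ∑ x ∈ NS K, 
      (Nat.card (CT κ (Algebra.leftMulMatrix b (x:K)) (Algebra.leftMulMatrix b (x:K))) : ℝ) := by
  have h0 : ∀ χ : Irr G, ∑ ψ : AddChar (Additive Kˣ) ℂ, ∑ l, ‖Bs b e ψ χ l‖ ^ 2 =
      Fintype.card Kˣ * ∑ x ∈ NS K, ∑ l, ‖Ss b e χ l x‖ ^ 2 := by
    intro χ
    rw [Finset.sum_comm, Finset.sum_comm (s := NS K), Finset.mul_sum]
    refine Finset.sum_congr rfl fun l _ => ?_
    simp only [Bs]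
    rw [dual_parseval]
    congr 1
    rw [NS, Finset.sum_filter]
    refine Finset.sum_congr rfl fun x _ => ?_
    rw [Sq, ite_not]
    split_ifs <;> simp
  simp_rw [h0]
  rw [← Finset.mul_sum]
  refine mul_le_mul_of_nonneg_left ?_ (by positivity)
  rw [Finset.sum_comm]
  refine Finset.sum_le_sum fun x _ => ?_
  rw [Finset.sum_comm]
  have h1 : ∀ l : GL κ F, ∑ χ ∈ S, ‖Ss b e χ l x‖ ^ 2 ≤ ∑ u : Matrix ι κ F, ∑ u' : Matrix ι κ F,
        (Fintype.card {h : G // h * e (bl b x l u) = e (bl b x l u') * h} : ℝ) := by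
    intro l
    have h := irr_bessel S (I := Matrix ι κ F) (fun _ => 1) (fun u => e (bl b x l u))
    simpa [Ss] using h
  refine (Finset.sum_le_sum fun l _ => h1 l).trans ?_
  exact_mod_cast sigma_CT b e x x

end Bessel

open Matrix
set_option linter.unusedSectionVars false

section LemmaN

variable {F K ι κ : Type} [Field F] [Fintype F] [Field K] [Fintype K] [Algebra F K]
  [Fintype ι] [DecidableEq ι] [Fintype κ] [DecidableEq κ] [DecidableEq F] [DecidableEq K]
  (b : Module.Basis ι F K) {G : Type} [Group G] (e : GL (ι ⊕ κ) F ≃* G)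

lemma card_HG : (Fintype.card (HG b κ) : ℝ) = Nat.card (GL κ F) * ((Fintype.card Kˣ * Fintype.card (Matrix ι κ F)) *
    (Fintype.card Kˣ * Fintype.card (Matrix ι κ F))) := by
  have h : Fintype.card (HG b κ) = Nat.card (GL κ F) * ((Fintype.card Kˣ * Fintype.card (Matrix ι κ F)) *
    (Fintype.card Kˣ * Fintype.card (Matrix ι κ F))) := by
    rw [Fintype.card_congr (HG.equiv (κ := κ) b), Fintype.card_prod, Fintype.card_prod, Fintype.card_prod, Nat.card_eq_fintype_card]
  exact_mod_cast h

theorem lemmaN [Fintype G] [DecidableEq G] (q k : ℕ) (hq : Fintype.card F = q) (hq3 : 3 ≤ q) (hodd : Odd q)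
    (hK : Fintype.card K = q ^ 2 ^ (k + 1)) (S : Finset (Irr G))
    (hS : ∀ χ ∈ S, ∃ x : Kˣ, ¬ IsSquare x ∧ ∃ l : GL κ F, Ss b e χ l x ≠ 0) :
    (S.card : ℝ) ≤ 1 / (2:ℝ) ^ (k + 1) * (16 * (q:ℝ) ^ (2 ^ (k + 1) + Fintype.card κ)) +
      q ^ 2 ^ k * (24 * 2 ^ (k + 1) * (q:ℝ) ^ Fintype.card κ) := by
  classical
  have hfin : Module.finrank F K = 2 ^ (k + 1) := by
    have h := Module.card_eq_pow_finrank (K := F) (V := K)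
    rw [hK, hq] at h
    exact (Nat.pow_right_injective (by omega : 2 ≤ q) h).symm
  have hι : Fintype.card ι = 2 ^ (k + 1) := by rw [← hfin, Module.finrank_eq_card_basis b]
  have hne : Nonempty ι := Fintype.card_pos_iff.1 (by rw [hι]; positivity)
  have hdeg : ∀ x ∈ NS K, (minpoly F (x : K)).natDegree = Module.finrank F K := by
    intro x hx
    rw [hfin]
    exact nonsq_natDegree q _ k hq hodd hK rfl x ((mem_NS x).1 hx)
  set d : ℕ := 2 ^ (k + 1) with hd
  set m := Fintype.card κ with hm
  have hcA : Fintype.card Kˣ = q ^ d - 1 := by rw [Fintype.card_units, hK]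
  set L : ℝ := (Nat.card (GL κ F) : ℝ) with hL
  set A : ℝ := (Fintype.card Kˣ : ℝ) with hA
  set U : ℝ := (Fintype.card (Matrix ι κ F) : ℝ) with hU
  set H : ℝ := (Fintype.card (HG b κ) : ℝ) with hH
  have hLpos : 0 < L := by rw [hL]; exact_mod_cast Nat.card_pos
  have hApos : 0 < A := by rw [hA]; exact_mod_cast Fintype.card_pos
  have hUpos : 0 < U := by rw [hU]; exact_mod_cast Fintype.card_pos
  have hHeq : H = L * ((A * U) * (A * U)) := card_HG b
  have hUq : (q:ℝ) ^ (2 * Fintype.card ι * m) = U * U := by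
    have : Fintype.card (Matrix ι κ F) = q ^ (Fintype.card ι * m) := by
      rw [← Nat.card_eq_fintype_card, natCard_matrix, hq]
    rw [hU, this]; push_cast; rw [← pow_add]; congr 1; ring
  have hq0 : (0:ℝ) < q := by exact_mod_cast (by omega : 0 < q)
  have hqd3 : (3:ℝ) ≤ (q:ℝ) ^ d := by
    have : 3 ≤ q ^ d := hq3.trans (Nat.le_self_pow (by positivity) q)
    exact_mod_cast this
  have hAq : (q:ℝ) ^ d = A + 1 := by
    have h1 : 1 ≤ q ^ d := Nat.one_le_pow _ _ (by omega)
    rw [hA, hcA]; push_cast [Nat.cast_sub h1]; ring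
  have hNS : ((NS K).card : ℝ) ≤ A := by
    rw [hA]; exact_mod_cast Finset.card_le_univ _
  -- CT bounds
  have hCT : ∀ x ∈ NS K, ∀ x' : Kˣ, (Nat.card (CT κ (Algebra.leftMulMatrix b (x:K)) (Algebra.leftMulMatrix b (x':K))) : ℝ) ≤
      (Nat.card {α : UMat ι F // α.1 * Algebra.leftMulMatrix b (x:K) = Algebra.leftMulMatrix b (x':K) * α.1} : ℝ) *
        (4 * (q:ℝ) ^ m * L * (U * U)) := by
    intro x hx x'
    have h := CT_card q hq hq3 (Algebra.leftMulMatrix b (x:K)) (Algebra.leftMulMatrix b (x':K))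
      (irrM_of_degree b _ (hdeg x hx)) m κ hm.symm
    rw [hUq] at h
    refine h.trans (le_of_eq ?_)
    ring
  have hC0 : 0 ≤ 4 * (q:ℝ) ^ m * L * (U * U) := by positivity
  have b1 : ∑ x ∈ NS K, (Nat.card (CT κ (Algebra.leftMulMatrix b (x:K)) (Algebra.leftMulMatrix b (x:K))) : ℝ) ≤
      A * ((q:ℝ) ^ d * (4 * (q:ℝ) ^ m * L * (U * U))) := by
    calc _ ≤ ∑ x ∈ NS K, ((q:ℝ) ^ d * (4 * (q:ℝ) ^ m * L * (U * U))) := by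
          refine Finset.sum_le_sum fun x hx => (hCT x hx x).trans ?_
          refine mul_le_mul_of_nonneg_right ?_ hC0
          have := card_intertwiners_le (Algebra.leftMulMatrix b (x:K)) (Algebra.leftMulMatrix b (x:K)) (irrM_of_degree b _ (hdeg x hx))
          rw [hι, hq] at this
          exact_mod_cast this
      _ = (NS K).card * ((q:ℝ) ^ d * (4 * (q:ℝ) ^ m * L * (U * U))) := by rw [Finset.sum_const, nsmul_eq_mul]
      _ ≤ _ := mul_le_mul_of_nonneg_right hNS (by positivity)
  have b2 : ∑ x ∈ NS K, ∑ x' ∈ NS K, (Nat.card (CT κ (Algebra.leftMulMatrix b (x:K)) (Algebra.leftMulMatrix b (x':K))) : ℝ) ≤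
      A * ((d * (q:ℝ) ^ d) * (4 * (q:ℝ) ^ m * L * (U * U))) := by
    calc _ ≤ ∑ x ∈ NS K, ((d * (q:ℝ) ^ d) * (4 * (q:ℝ) ^ m * L * (U * U))) := by
          refine Finset.sum_le_sum fun x hx => (Finset.sum_le_sum fun x' _ => hCT x hx x').trans ?_
          rw [← Finset.sum_mul]
          refine mul_le_mul_of_nonneg_right ?_ hC0
          have := sum_intertwiners_le b x (hdeg x hx) (NS K)
          rw [hι, hq] at this
          exact_mod_cast this
      _ = (NS K).card * ((d * (q:ℝ) ^ d) * (4 * (q:ℝ) ^ m * L * (U * U))) := by rw [Finset.sum_const, nsmul_eq_mul]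
      _ ≤ _ := mul_le_mul_of_nonneg_right hNS (by positivity)
  have hHpos : 0 < H := by rw [hHeq]; positivity
  have hN1 : ∑ χ ∈ S, ∑ ψ : AddChar (Additive Kˣ) ℂ, Nn b e ψ χ ≤ 16 * (q:ℝ) ^ (d + m) := by
    simp only [Nn]
    simp_rw [← Finset.mul_sum]
    rw [← hH]
    calc _ ≤ 4 / H * (A * (A * ((q:ℝ) ^ d * (4 * (q:ℝ) ^ m * L * (U * U))))) := by
          refine mul_le_mul_of_nonneg_left ((bessel2 b e S).trans ?_) (by positivity)
          exact mul_le_mul_of_nonneg_left b1 hApos.le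
      _ = _ := by
          rw [hHeq, pow_add]; field_simp; ring
  have hN2 : ∀ ψ : AddChar (Additive Kˣ) ℂ, ∑ χ ∈ S, Nn b e ψ χ ≤ 24 * d * (q:ℝ) ^ m := by
    intro ψ
    simp only [Nn]
    rw [← Finset.mul_sum, ← hH]
    calc _ ≤ 4 / H * (A * ((d * (q:ℝ) ^ d) * (4 * (q:ℝ) ^ m * L * (U * U)))) := by
          refine mul_le_mul_of_nonneg_left ((bessel1 b e S ψ).trans b2) (by positivity)
      _ = 16 * d * (q:ℝ) ^ m * ((q:ℝ) ^ d / A) := by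
          rw [hHeq]; field_simp; ring
      _ ≤ 16 * d * (q:ℝ) ^ m * (3 / 2) := by
          refine mul_le_mul_of_nonneg_left ?_ (by positivity)
          rw [div_le_iff₀ hApos]; linarith
      _ = _ := by ring
  let NG := Finset.univ.filter (fun ψ : AddChar (Additive Kˣ) ℂ => ψ ^ (q ^ 2 ^ k) = ψ)
  have hNG : (NG.card : ℝ) ≤ (q:ℝ) ^ 2 ^ k := by
    have h2 : 2 ≤ q ^ 2 ^ k := (by omega : 2 ≤ q).trans (Nat.le_self_pow (by positivity) q)
    have := dual_nongeneric_card (A := Kˣ) (q ^ 2 ^ k) h2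
    exact_mod_cast this
  have hpt : ∀ χ ∈ S, (1:ℝ) ≤ (1 / (2:ℝ) ^ (k + 1)) * ∑ ψ, Nn b e ψ χ + ∑ ψ ∈ NG, Nn b e ψ χ := by
    intro χ hχ
    refine dual_orbit q k (by omega) hcA (fun ψ => Nn b e ψ χ) (fun ψ => Nn_nonneg b e ψ χ)
      (fun ψ => Nn_frob b e q hq hodd χ ψ) ?_
    obtain ⟨x, hx, l, hl⟩ := hS χ hχ
    by_contra hcon
    push Not at hcon
    have hz : ∀ ψ, Nn b e ψ χ = 0 := by
      intro ψ
      obtain ⟨n, hn⟩ := Nn_nat b e ψ χ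
      have := hcon ψ
      rw [hn] at this ⊢
      have : n < 1 := by exact_mod_cast this
      have : n = 0 := by omega
      simp [this]
    have hB : ∀ ψ, Bs b e ψ χ l = 0 := by
      intro ψ
      have h1 := hz ψ
      rw [Nn] at h1
      have h2 : ∑ l : GL κ F, ‖Bs b e ψ χ l‖ ^ 2 = 0 := by
        rcases mul_eq_zero.1 h1 with h | h
        · exact absurd h (by positivity)
        · exact h
      have h3 := (Finset.sum_eq_zero_iff_of_nonneg (fun l _ => by positivity)).1 h2 l (Finset.mem_univ _)
      simpa using h3
    have hP := dual_parseval (fun x => Sq b e χ l x)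
    have h0 : ∑ ψ : AddChar (Additive Kˣ) ℂ, ‖∑ x, ψ (Additive.ofMul x) * Sq b e χ l x‖ ^ 2 = 0 :=
      Finset.sum_eq_zero fun ψ _ => by
        have := hB ψ
        rw [Bs] at this
        rw [this]; simp
    rw [h0] at hP
    have h4 : ∑ x, ‖Sq b e χ l x‖ ^ 2 = 0 := by
      rcases mul_eq_zero.1 hP.symm with h | h
      · exact absurd h hApos.ne'
      · exact h
    have h5 := (Finset.sum_eq_zero_iff_of_nonneg (fun l _ => by positivity)).1 h4 x (Finset.mem_univ _)
    rw [Sq, if_neg hx] at h5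
    exact hl (by simpa using h5)
  calc (S.card : ℝ) = ∑ χ ∈ S, (1:ℝ) := by simp
    _ ≤ ∑ χ ∈ S, ((1 / (2:ℝ) ^ (k + 1)) * ∑ ψ, Nn b e ψ χ + ∑ ψ ∈ NG, Nn b e ψ χ) := Finset.sum_le_sum hpt
    _ = (1 / (2:ℝ) ^ (k + 1)) * ∑ χ ∈ S, ∑ ψ, Nn b e ψ χ + ∑ ψ ∈ NG, ∑ χ ∈ S, Nn b e ψ χ := by
        rw [Finset.sum_add_distrib, ← Finset.mul_sum, Finset.sum_comm (s := S) (t := NG)]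
    _ ≤ (1 / (2:ℝ) ^ (k + 1)) * (16 * (q:ℝ) ^ (d + m)) + NG.card * (24 * d * (q:ℝ) ^ m) := by
        refine add_le_add (mul_le_mul_of_nonneg_left hN1 (by positivity)) ?_
        rw [← nsmul_eq_mul]
        exact Finset.sum_le_card_nsmul _ _ _ fun ψ _ => hN2 ψ
    _ ≤ _ := by
        refine add_le_add le_rfl ?_
        have : (d:ℝ) = 2 ^ (k + 1) := by rw [hd]; push_cast; rfl
        rw [← this]
        exact mul_le_mul_of_nonneg_right hNG (by positivity)

end LemmaN

open Matrix
set_option linter.unusedSectionVars false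

section NonColl

variable {F K ι : Type} [Field F] [Fintype F] [Field K] [Fintype K] [Algebra F K]
  [Fintype ι] [DecidableEq ι] [DecidableEq F] [DecidableEq K]
  (b : Module.Basis ι F K) {G : Type} [Group G]

lemma Ss_noncollide {κ σ : Type} [Fintype κ] [DecidableEq κ] [Fintype σ] [DecidableEq σ]
    (e : GL (ι ⊕ (κ ⊕ σ)) F ≃* G) (χ : Irr G) (x : Kˣ)
    (hx : (minpoly F (x:K)).natDegree = Module.finrank F K) (hx1 : x ≠ 1)
    (hκ : Fintype.card κ < Fintype.card ι) (l : GL κ F)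
    (h0 : Ss b e χ (dgHom F κ σ (l, 1)) x = 0) :
    χ.1 (e (bl b x (dgHom F κ σ (l, 1)) 0)) = 0 := by
  let lam : GL (κ ⊕ σ) F := dgHom F κ σ (l, 1)
  have hinj : Function.Injective (fun N : Matrix ι (κ ⊕ σ) F => Algebra.leftMulMatrix b (x:K) * N - N * lam.1) := by
    intro N N' h
    have h : Algebra.leftMulMatrix b (x:K) * N - N * lam.1 = Algebra.leftMulMatrix b (x:K) * N' - N' * lam.1 := h
    have h2 : Algebra.leftMulMatrix b (x:K) * (N - N') = (N - N') * (fromBlocks l.1 0 0 (1 : Matrix σ σ F)) := by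
      have h3 : lam.1 = fromBlocks l.1 0 0 (1 : Matrix σ σ F) := rfl
      rw [← h3, Matrix.mul_sub, Matrix.sub_mul, ← sub_eq_zero]
      rw [← sub_eq_zero] at h
      rw [← h]; abel
    exact sub_eq_zero.1 (noncollide b x hx hx1 hκ l.1 (N - N') h2)
  have hsurj := Finite.injective_iff_surjective.1 hinj
  have hconst : ∀ u : Matrix ι (κ ⊕ σ) F, χ.1 (e (bl b x lam u)) = χ.1 (e (bl b x lam 0)) := by
    intro u
    obtain ⟨N, hN⟩ := hsurj u
    have hN : Algebra.leftMulMatrix b (x:K) * N - N * lam.1 = u := hN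
    have h4 : bl b 1 1 N * bl b x lam u = bl b x lam 0 * bl b 1 1 N := by
      rw [bl_mul, bl_mul]
      congr 1
      · rw [one_mul, mul_one]
      · rw [one_mul, mul_one]
      · rw [← hN]; simp
    have h5 : bl b x lam 0 = bl b 1 1 N * bl b x lam u * (bl b 1 1 N)⁻¹ := by
      rw [h4]; group
    rw [h5, map_mul, map_mul, map_inv, irr_class χ.2]
  have h6 : (Fintype.card (Matrix ι (κ ⊕ σ) F) : ℂ) * χ.1 (e (bl b x lam 0)) = 0 := by
    rw [← h0, Ss]
    rw [Finset.sum_congr rfl fun u _ => hconst u]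
    simp
  rcases mul_eq_zero.1 h6 with h | h
  · exfalso
    have : Fintype.card (Matrix ι (κ ⊕ σ) F) = 0 := by exact_mod_cast h
    exact Fintype.card_ne_zero this
  · exact h

end NonColl

lemma exists_sqrt_poly (M : ℕ) (hM : 0 < M) :
    ∃ c : Polynomial ℂ, (Polynomial.X ^ M - 1) ∣ Polynomial.X * c ^ 2 - 1 := by
  classical
  have hprim := Complex.isPrimitiveRoot_exp M hM.ne'
  let s := Polynomial.nthRootsFinset M (1:ℂ)
  have hsq : ∀ z : ℂ, ∃ w : ℂ, w ^ 2 = z⁻¹ := fun z => IsAlgClosed.exists_pow_nat_eq _ two_pos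
  choose r hr using hsq
  refine ⟨Lagrange.interpolate s id r, ?_⟩
  rw [Polynomial.X_pow_sub_one_eq_prod hM hprim]
  apply Finset.prod_dvd_of_coprime
  · intro x _ y _ hxy
    exact Polynomial.isCoprime_X_sub_C_of_isUnit_sub (sub_ne_zero.2 hxy).isUnit
  · intro z hz
    rw [Polynomial.dvd_iff_isRoot, Polynomial.IsRoot.def]
    have h1 : Polynomial.eval z (Lagrange.interpolate s id r) = r z :=
      Lagrange.eval_interpolate_at_node (v := id) r (Set.injOn_id _) hz
    have hz0 : z ≠ 0 := by
      have := (Polynomial.mem_nthRootsFinset hM 1).1 hz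
      rintro rfl
      rw [zero_pow hM.ne'] at this
      exact zero_ne_one this
    rw [Polynomial.eval_sub, Polynomial.eval_mul, Polynomial.eval_pow, h1, hr, Polynomial.eval_X, Polynomial.eval_one,
      mul_inv_cancel₀ hz0, sub_self]

lemma exists_eta (K : Type) [Field K] [Fintype K] (hK : ringChar K ≠ 2) :
    ∃ (D : ℕ) (x : Fin D → Kˣ) (c : Fin D → ℂ), (∀ j, ¬ IsSquare (x j)) ∧
      ∀ (V : Type) [AddCommGroup V] [Module ℂ V] (ρ : Kˣ →* Module.End ℂ V),
        (∑ j, c j • ρ (x j)) ^ 2 = 1 := by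
  classical
  obtain ⟨t, ht⟩ := IsCyclic.exists_generator (α := Kˣ)
  have htn : ¬ IsSquare t := by
    intro h
    obtain ⟨a, ha⟩ := FiniteField.exists_nonsquare hK
    have ha0 : a ≠ 0 := by rintro rfl; exact ha ⟨0, by simp⟩
    obtain ⟨n, hn⟩ := (Submonoid.mem_powers_iff _ _).1 ((mem_powers_iff_mem_zpowers).2 (ht (Units.mk0 a ha0)))
    apply ha
    obtain ⟨y, hy⟩ := h.pow n
    refine ⟨(y : K), ?_⟩
    have := congrArg Units.val (hn.symm.trans hy)
    simpa using this
  let M := Fintype.card Kˣ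
  obtain ⟨c, hc⟩ := exists_sqrt_poly M Fintype.card_pos
  refine ⟨c.natDegree + 1, fun j => t ^ (2 * j.1 + 1), fun j => c.coeff j, fun j => ?_, ?_⟩
  · rw [isSquare_pow_odd _ ⟨_, rfl⟩]; exact htn
  · intro V _ _ ρ
    have h1 : ∑ j : Fin (c.natDegree + 1), c.coeff j • ρ (t ^ (2 * j.1 + 1)) =
        ρ t * Polynomial.aeval (ρ t ^ 2) c := by
      rw [Polynomial.aeval_eq_sum_range, Finset.mul_sum,
        Fin.sum_univ_eq_sum_range (fun j => c.coeff j • ρ (t ^ (2 * j + 1))) (c.natDegree + 1)]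
      refine Finset.sum_congr rfl fun j _ => ?_
      rw [mul_smul_comm, ← pow_mul, ← map_pow, ← map_mul, pow_succ' t (2 * j)]
    rw [h1]
    have hcomm : Commute (ρ t) (Polynomial.aeval (ρ t ^ 2) c) := by
      rw [Polynomial.aeval_eq_sum_range]
      exact Commute.sum_right _ _ _ fun j _ => (((Commute.refl (ρ t)).pow_right 2).pow_right j).smul_right _
    rw [hcomm.mul_pow]
    obtain ⟨w, hw⟩ := hc
    have h2 := congrArg (Polynomial.aeval (ρ t ^ 2)) hw
    have h3 : Polynomial.aeval (ρ t ^ 2) (Polynomial.X ^ M - 1 : Polynomial ℂ) = 0 := by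
      have : t ^ M = 1 := pow_card_eq_one
      simp only [map_sub, map_pow, Polynomial.aeval_X, map_one]
      rw [← pow_mul, mul_comm, pow_mul, ← map_pow ρ t M, this]
      simp
    rw [map_mul, h3, zero_mul, map_sub, map_mul, map_pow, Polynomial.aeval_X, map_one, sub_eq_zero] at h2
    exact h2

open Matrix
set_option linter.unusedSectionVars false

def Cond {Γ I : Type} [Group Γ] [Fintype I] (c : I → ℂ) (y : I → Γ) (N : ℕ) : Prop :=
  ∀ (V : Type) [AddCommGroup V] [Module ℂ V] (ρ : Γ →* Module.End ℂ V),
    (∑ i, c i • ρ (y i)) ^ (N + 1) = ∑ i, c i • ρ (y i)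

lemma val_integral {Γ I G : Type} [Group Γ] [Group G] [Fintype I] (c : I → ℂ) (y : I → Γ) (N : ℕ)
    (hN : 1 ≤ N) (h : Cond c y N) (χ : Irr G) (φ : Γ →* G) : IsIntegral ℤ (∑ i, c i * χ.1 (φ (y i))) := by
  obtain ⟨χ, V, hV, rfl⟩ := χ
  have h1 := trace_integral _ N hN (h V (V.ρ.comp φ))
  rw [map_sum] at h1
  convert h1 using 2
  rw [map_smul, smul_eq_mul]
  rfl

noncomputable def lmmGL {F K ι : Type} [Field F] [Field K] [Algebra F K] [Fintype ι] [DecidableEq ι]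
    (b : Module.Basis ι F K) : Kˣ →* GL ι F := Units.map (Algebra.leftMulMatrix b).toRingHom.toMonoidHom

lemma Cond_step {F K ι κ I : Type} [Field F] [Field K] [Algebra F K] [Fintype ι] [DecidableEq ι]
    [Fintype κ] [DecidableEq κ] [Fintype I]
    (b : Module.Basis ι F K) (D : ℕ) (x : Fin D → Kˣ) (p : Fin D → ℂ)
    (hp : ∀ (V : Type) [AddCommGroup V] [Module ℂ V] (ρ : Kˣ →* Module.End ℂ V),
        (∑ j, p j • ρ (x j)) ^ 2 = 1)
    (c : I → ℂ) (y : I → GL κ F) (N : ℕ) (h : Cond c y N) :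
    Cond (fun ji : Option (Fin D) × I => ((1 / 2 : ℂ) * ji.1.elim 1 p) * c ji.2)
      (fun ji => dgHom F ι κ (lmmGL b (ji.1.elim 1 x), y ji.2)) N := by
  intro V _ _ ρ
  let ρ1 : Kˣ →* Module.End ℂ V := (ρ.comp (dgHom F ι κ)).comp ((MonoidHom.inl (GL ι F) (GL κ F)).comp (lmmGL b))
  let ρ2 : GL κ F →* Module.End ℂ V := (ρ.comp (dgHom F ι κ)).comp (MonoidHom.inr (GL ι F) (GL κ F))
  have h12 : ∀ a z, ρ (dgHom F ι κ (lmmGL b a, z)) = ρ1 a * ρ2 z := by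
    intro a z
    simp only [ρ1, ρ2, MonoidHom.comp_apply]
    rw [← map_mul, ← map_mul]
    simp
  have h21 : ∀ a z, Commute (ρ1 a) (ρ2 z) := by
    intro a z
    show ρ1 a * ρ2 z = ρ2 z * ρ1 a
    simp only [ρ1, ρ2, MonoidHom.comp_apply]
    rw [← map_mul, ← map_mul, ← map_mul, ← map_mul]
    simp
  let E := ∑ j, p j • ρ1 (x j)
  let T := ∑ i, c i • ρ2 (y i)
  have hE : E ^ 2 = 1 := hp V ρ1
  have hT : T ^ (N + 1) = T := h V ρ2
  let P := (1 / 2 : ℂ) • (1 + E)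
  have hP : IsIdempotentElem P := by
    show P * P = P
    simp only [P]
    rw [smul_mul_smul_comm]
    have : (1 + E) * (1 + E) = (2:ℂ) • (1 + E) := by
      have : (1 + E) * (1 + E) = 1 + E + E + E ^ 2 := by noncomm_ring
      rw [this, hE, two_smul]; abel
    rw [this, smul_smul]; norm_num
  have hPsum : P = ∑ j : Option (Fin D), ((1 / 2 : ℂ) * j.elim 1 p) • ρ1 (j.elim 1 x) := by
    rw [Fintype.sum_option]
    simp only [P, E, Option.elim, mul_one, map_one]
    rw [smul_add, Finset.smul_sum]
    congr 1
    exact Finset.sum_congr rfl fun j _ => by rw [smul_smul]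
  have hsum : ∑ ji : Option (Fin D) × I, (((1 / 2 : ℂ) * ji.1.elim 1 p) * c ji.2) •
      ρ (dgHom F ι κ (lmmGL b (ji.1.elim 1 x), y ji.2)) = P * T := by
    rw [hPsum, Fintype.sum_prod_type, Finset.sum_mul_sum]
    refine Finset.sum_congr rfl fun j _ => Finset.sum_congr rfl fun i _ => ?_
    rw [h12, smul_mul_smul_comm]
  have hcomm : Commute P T := by
    rw [hPsum]
    refine Commute.sum_left _ _ _ fun j _ => Commute.sum_right _ _ _ fun i _ => ?_
    exact ((h21 _ _).smul_left _).smul_right _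
  rw [hsum, hcomm.mul_pow, hT, hP.pow_succ_eq]

noncomputable def glRe (F : Type) [Field F] {α β : Type} [Fintype α] [DecidableEq α] [Fintype β] [DecidableEq β]
    (σ : α ≃ β) : GL α F ≃* GL β F := Units.mapEquiv (Matrix.reindexAlgEquiv F F σ).toMulEquiv

lemma glRe_val {F : Type} [Field F] {α β : Type} [Fintype α] [DecidableEq α] [Fintype β] [DecidableEq β]
    (σ : α ≃ β) (g : GL α F) : (glRe F σ g).1 = Matrix.reindex σ σ g.1 := rfl

section Reidx
variable {F ι κ σ : Type} [Field F] [Fintype ι] [DecidableEq ι]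
    [Fintype κ] [DecidableEq κ] [Fintype σ] [DecidableEq σ]

lemma reidx1 (a : GL ι F) (y : GL κ F) (z : GL σ F) :
    glRe F (Equiv.sumAssoc ι κ σ) (dgHom F (ι ⊕ κ) σ (dgHom F ι κ (a, y), z)) =
      dgHom F ι (κ ⊕ σ) (a, dgHom F κ σ (y, z)) := by
  apply Units.ext
  rw [glRe_val]
  simp only [dgHom_val]
  ext i j
  rcases i with i | i | i <;> rcases j with j | j | j <;> simp

def sig2 (κ : Type) (d s : ℕ) : (Fin d ⊕ κ) ⊕ Fin s ≃ κ ⊕ Fin (d + s) :=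
  ((Equiv.sumCongr (Equiv.sumComm (Fin d) κ) (Equiv.refl _)).trans (Equiv.sumAssoc κ (Fin d) (Fin s))).trans
    (Equiv.sumCongr (Equiv.refl _) finSumFinEquiv)

lemma reidx2 (d s : ℕ) (y : GL κ F) :
    glRe F (sig2 κ d s) (dgHom F (Fin d ⊕ κ) (Fin s) (dgHom F (Fin d) κ (1, y), 1)) =
      dgHom F κ (Fin (d + s)) (y, 1) := by
  apply Units.ext
  rw [glRe_val]
  simp only [dgHom_val]
  rw [← Equiv.eq_symm_apply]
  ext i j
  rcases i with (i | i) | i <;> rcases j with (j | j) | j <;> simp [sig2, Matrix.one_apply]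
  all_goals
    intro h
    have h' := congrArg Fin.val h
    simp only [Fin.val_castAdd, Fin.val_natAdd] at h'
    omega

end Reidx

open Matrix
set_option linter.unusedSectionVars false

def PP (F : Type) [Field F] (q r : ℕ) : Prop :=
  ∀ (κ : Type) [Fintype κ] [DecidableEq κ] (I : Type) [Fintype I] (c : I → ℂ) (y : I → GL κ F) (N : ℕ),
    1 ≤ N → Cond c y N → ∀ ε : ℝ, 0 < ε → ∃ s0 : ℕ, ∀ s, s0 ≤ s → ∀ (G : Type) [Group G]
      (e : GL (κ ⊕ Fin s) F ≃* G),
      (Nat.card {χ : Irr G // ¬ IsIntegral ℤ ((∑ i, c i * χ.1 (e (dgHom F κ (Fin s) (y i, 1)))) / (2:ℂ) ^ r)} : ℝ) ≤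
        ε * (q:ℝ) ^ (Fintype.card κ + s)

lemma PP_zero (F : Type) [Field F] (q : ℕ) : PP F q 0 := by
  intro κ _ _ I _ c y N hN hc ε hε
  refine ⟨0, fun s _ G _ e => ?_⟩
  have : IsEmpty {χ : Irr G // ¬ IsIntegral ℤ ((∑ i, c i * χ.1 (e (dgHom F κ (Fin s) (y i, 1)))) / (2:ℂ) ^ 0)} := by
    refine ⟨fun ⟨χ, hχ⟩ => hχ ?_⟩
    rw [pow_zero, div_one]
    exact val_integral c y N hN hc χ (e.toMonoidHom.comp ((dgHom F κ (Fin s)).comp (MonoidHom.inl _ _)))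
  rw [Nat.card_of_isEmpty]
  push_cast
  positivity

lemma exists_ext (F : Type) [Field F] [Fintype F] (q d : ℕ) (hq : Fintype.card F = q) (hd : d ≠ 0) :
    ∃ (K : Type) (_ : Field K) (_ : Fintype K) (_ : Algebra F K), Fintype.card K = q ^ d ∧ Module.finrank F K = d := by
  obtain ⟨p, hp⟩ := CharP.exists F
  have hpp : Fact p.Prime := ⟨CharP.char_is_prime F p⟩
  have hd' : NeZero d := ⟨hd⟩
  have : Finite (FiniteField.Extension F p d) := Module.finite_of_finite F
  have inst : Fintype (FiniteField.Extension F p d) := Fintype.ofFinite _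
  refine ⟨FiniteField.Extension F p d, inferInstance, inst, inferInstance, ?_, ?_⟩
  · rw [← Nat.card_eq_fintype_card, FiniteField.natCard_extension, Nat.card_eq_fintype_card, hq]
  · exact FiniteField.finrank_extension F p d

lemma num_bound (q k n : ℕ) (m : ℕ) (hq3 : 3 ≤ q) (hn : n = 2 ^ (k + 1) + m) :
    1 / (2:ℝ) ^ (k + 1) * (16 * (q:ℝ) ^ (2 ^ (k + 1) + m)) +
      q ^ 2 ^ k * (24 * 2 ^ (k + 1) * (q:ℝ) ^ m) ≤ 56 / 2 ^ k * (q:ℝ) ^ n := by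
  subst hn
  have hq0 : (0:ℝ) < q := by exact_mod_cast (by omega : 0 < q)
  have hw : (2:ℝ) ^ k * 2 ^ k ≤ (q:ℝ) ^ 2 ^ k := by
    have h1 : ∀ w : ℕ, w * w ≤ 3 ^ w := by
      intro w
      induction w with
      | zero => simp
      | succ w ih =>
        rw [pow_succ]
        rcases w with _ | _ | w
        · simp
        · norm_num
        · nlinarith
    have h2 : 2 ^ k * 2 ^ k ≤ q ^ 2 ^ k := (h1 _).trans (Nat.pow_le_pow_left hq3 _)
    exact_mod_cast h2
  set w : ℝ := 2 ^ k with hwdef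
  have hw0 : 0 < w := by positivity
  set Q : ℝ := (q:ℝ) ^ 2 ^ k with hQ
  have hQ0 : 0 < Q := by positivity
  have e1 : (q:ℝ) ^ (2 ^ (k + 1) + m) = Q * Q * (q:ℝ) ^ m := by
    rw [pow_add, hQ, ← pow_add]; ring
  have e2 : (2:ℝ) ^ (k + 1) = 2 * w := by rw [pow_succ]; ring
  rw [e1, e2]
  have hm : 0 < (q:ℝ) ^ m := by positivity
  have h3 : Q * (24 * (2 * w) * (q:ℝ) ^ m) ≤ 48 / w * (Q * Q * (q:ℝ) ^ m) := by
    have : 48 / w * (Q * Q * (q:ℝ) ^ m) - Q * (24 * (2 * w) * (q:ℝ) ^ m) = 48 / w * (Q * (q:ℝ) ^ m) * (Q - w * w) := by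
      field_simp; ring
    have h4 : 0 ≤ 48 / w * (Q * (q:ℝ) ^ m) * (Q - w * w) := mul_nonneg (by positivity) (by linarith)
    linarith
  have h5 : 1 / (2 * w) * (16 * (Q * Q * (q:ℝ) ^ m)) = 8 / w * (Q * Q * (q:ℝ) ^ m) := by
    field_simp; ring
  have h6 : 56 / w * (Q * Q * (q:ℝ) ^ m) = 8 / w * (Q * Q * (q:ℝ) ^ m) + 48 / w * (Q * Q * (q:ℝ) ^ m) := by ring
  rw [h5, h6]
  linarith

lemma PP_succ (F : Type) [Field F] [Fintype F] (q : ℕ) (hq : Fintype.card F = q) (hq3 : 3 ≤ q) (hodd : Odd q)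
    (r : ℕ) (ih : PP F q r) : PP F q (r + 1) := by
  classical
  intro κ _ _ I _ c y N hN hc ε hε
  obtain ⟨k, hk1, hk2⟩ : ∃ k : ℕ, Fintype.card κ < 2 ^ (k + 1) ∧ 56 / (2:ℝ) ^ k ≤ ε / 2 := by
    obtain ⟨n, hn⟩ := exists_nat_gt (112 / ε)
    refine ⟨max n (Fintype.card κ), ?_, ?_⟩
    · calc Fintype.card κ < 2 ^ Fintype.card κ := Nat.lt_two_pow_self
        _ ≤ _ := Nat.pow_le_pow_right (by norm_num) (by omega)
    · have h1 : (n:ℝ) ≤ 2 ^ max n (Fintype.card κ) := by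
        have : n ≤ 2 ^ max n (Fintype.card κ) :=
          (Nat.lt_two_pow_self (n := n)).le.trans (Nat.pow_le_pow_right (by norm_num) (by omega))
        exact_mod_cast this
      rw [div_le_iff₀ (by positivity)]
      rw [div_lt_iff₀ hε] at hn
      nlinarith
  set d := 2 ^ (k + 1) with hd
  obtain ⟨K, iK, iKf, iKa, hK, hfin⟩ := exists_ext F q d hq (by positivity)
  have hc2 : ringChar K ≠ 2 := by
    intro h2
    have h3 := FiniteField.even_card_iff_char_two.1 h2
    rw [hK] at h3
    have h4 := Nat.odd_iff.1 (hodd.pow (n := d))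
    omega
  have hfd : FiniteDimensional F K := Module.finite_of_finrank_pos (by rw [hfin]; positivity)
  let b : Module.Basis (Fin d) F K := Module.finBasisOfFinrankEq F K hfin
  obtain ⟨D, x, p, hx, hp⟩ := exists_eta K hc2
  have hc' := Cond_step b D x p hp c y N hc
  obtain ⟨s0, hs0⟩ := ih (Fin d ⊕ κ) (Option (Fin D) × I) _ _ N hN hc' (ε / 2) (by positivity)
  refine ⟨d + s0, fun s hs G _ e => ?_⟩
  obtain ⟨s', rfl⟩ : ∃ s', s = d + s' := ⟨s - d, by omega⟩
  have hG : Finite G := Finite.of_equiv _ e.toEquiv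
  have : Fintype G := Fintype.ofFinite G
  let e' : GL ((Fin d ⊕ κ) ⊕ Fin s') F ≃* G := (glRe F (sig2 κ d s')).trans e
  let e'' : GL (Fin d ⊕ (κ ⊕ Fin s')) F ≃* G := (glRe F (Equiv.sumAssoc (Fin d) κ (Fin s'))).symm.trans e'
  have h1 := hs0 s' (by omega) G e'
  have : Fintype (Irr G) := Fintype.ofFinite _
  let S : Finset (Irr G) := Finset.univ.filter (fun χ => ∃ x : Kˣ, ¬ IsSquare x ∧ ∃ l : GL (κ ⊕ Fin s') F, Ss b e'' χ l x ≠ 0)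
  have h2 := lemmaN b e'' q k hq hq3 hodd hK S (fun χ hχ => (Finset.mem_filter.1 hχ).2)
  have h3 := h2.trans (num_bound q k (Fintype.card κ + (d + s')) (Fintype.card (κ ⊕ Fin s')) hq3
    (by simp only [Fintype.card_sum, Fintype.card_fin]; omega))
  have hgood : ∀ χ : Irr G, χ ∉ S →
      (∑ ji : Option (Fin D) × I, (((1 / 2 : ℂ) * ji.1.elim 1 p) * c ji.2) *
        χ.1 (e' (dgHom F (Fin d ⊕ κ) (Fin s') (dgHom F (Fin d) κ (lmmGL b (ji.1.elim 1 x), y ji.2), 1)))) =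
      (1 / 2) * ∑ i, c i * χ.1 (e (dgHom F κ (Fin (d + s')) (y i, 1))) := by
    intro χ hχ
    have hχ' : ∀ x : Kˣ, ¬ IsSquare x → ∀ l : GL (κ ⊕ Fin s') F, Ss b e'' χ l x = 0 := by
      intro x hx l
      by_contra hne
      exact hχ (Finset.mem_filter.2 ⟨Finset.mem_univ _, x, hx, l, hne⟩)
    rw [Fintype.sum_prod_type, Fintype.sum_option]
    have hz : ∀ j : Fin D, ∑ i, (((1 / 2 : ℂ) * (some j).elim 1 p) * c i) *
        χ.1 (e' (dgHom F (Fin d ⊕ κ) (Fin s') (dgHom F (Fin d) κ (lmmGL b ((some j).elim 1 x), y i), 1))) = 0 := by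
      intro j
      refine Finset.sum_eq_zero fun i _ => ?_
      have h4 : e' (dgHom F (Fin d ⊕ κ) (Fin s') (dgHom F (Fin d) κ (lmmGL b ((some j).elim 1 x), y i), 1)) =
          e'' (bl b (x j) (dgHom F κ (Fin s') (y i, 1)) 0) := by
        have h5 : bl b (x j) (dgHom F κ (Fin s') (y i, 1)) 0 = dgHom F (Fin d) (κ ⊕ Fin s') (lmmGL b (x j), dgHom F κ (Fin s') (y i, 1)) := Units.ext rfl
        rw [h5, ← reidx1]
        simp only [e'', MulEquiv.trans_apply, MulEquiv.symm_apply_apply, Option.elim]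
      rw [h4, Ss_noncollide b e'' χ (x j) ?_ ?_ ?_ (y i) (hχ' _ (hx j) _), mul_zero]
      · rw [hfin]; exact nonsq_natDegree q d k hq hodd hK hd (x j) (hx j)
      · intro h6; exact hx j (by rw [h6]; exact ⟨1, by simp⟩)
      · rw [Fintype.card_fin]; exact hk1
    rw [Finset.sum_eq_zero fun j _ => hz j, add_zero, Finset.mul_sum]
    refine Finset.sum_congr rfl fun i _ => ?_
    simp only [Option.elim, map_one, mul_one, e', MulEquiv.trans_apply, reidx2]
    ring
  have hsub : ∀ χ : Irr G, ¬ IsIntegral ℤ ((∑ i, c i * χ.1 (e (dgHom F κ (Fin (d + s')) (y i, 1)))) / (2:ℂ) ^ (r + 1)) →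
      χ ∈ S ∪ Finset.univ.filter (fun χ : Irr G => ¬ IsIntegral ℤ ((∑ ji : Option (Fin D) × I, (((1 / 2 : ℂ) * ji.1.elim 1 p) * c ji.2) *
        χ.1 (e' (dgHom F (Fin d ⊕ κ) (Fin s') (dgHom F (Fin d) κ (lmmGL b (ji.1.elim 1 x), y ji.2), 1)))) / (2:ℂ) ^ r)) := by
    intro χ hχ
    rw [Finset.mem_union]
    by_cases hS : χ ∈ S
    · exact Or.inl hS
    · refine Or.inr (Finset.mem_filter.2 ⟨Finset.mem_univ _, ?_⟩)
      rw [hgood χ hS]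
      convert hχ using 2
      rw [pow_succ]; field_simp
  rw [Nat.card_eq_fintype_card, Fintype.card_subtype] at h1 ⊢
  have h7 : Finset.univ.filter (fun χ : Irr G => ¬ IsIntegral ℤ ((∑ i, c i * χ.1 (e (dgHom F κ (Fin (d + s')) (y i, 1)))) / (2:ℂ) ^ (r + 1))) ⊆ _ :=
    fun χ hχ => hsub χ (Finset.mem_filter.1 hχ).2
  have h8 := (Finset.card_le_card h7).trans (Finset.card_union_le _ _)
  have h9 := (Nat.cast_le (α := ℝ)).2 h8
  rw [Nat.cast_add] at h9
  have h10 : 56 / (2:ℝ) ^ k * (q:ℝ) ^ (Fintype.card κ + (d + s')) ≤ ε / 2 * (q:ℝ) ^ (Fintype.card κ + (d + s')) :=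
    mul_le_mul_of_nonneg_right hk2 (by positivity)
  have h11 : Fintype.card (Fin d ⊕ κ) + s' = Fintype.card κ + (d + s') := by
    simp only [Fintype.card_sum, Fintype.card_fin]; omega
  rw [h11] at h1
  calc _ ≤ _ := h9
    _ ≤ ε / 2 * (q:ℝ) ^ (Fintype.card κ + (d + s')) + ε / 2 * (q:ℝ) ^ (Fintype.card κ + (d + s')) :=
      add_le_add (h3.trans h10) h1
    _ = _ := by ring

open Matrix

lemma PP_all (F : Type) [Field F] [Fintype F] (q : ℕ) (hq : Fintype.card F = q) (hq3 : 3 ≤ q) (hodd : Odd q)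
    (r : ℕ) : PP F q r := by
  induction r with
  | zero => exact PP_zero F q
  | succ r ih => exact PP_succ F q hq hq3 hodd r ih

lemma glEmbed_eq {F : Type} [Field F] (n₀ n : ℕ) (g : GL (Fin n₀) F) :
    glRe F finSumFinEquiv (dgHom F (Fin n₀) (Fin n) (g, 1)) = glEmbed (Nat.le_add_right n₀ n) g := by
  have key : ∀ (m : ℕ) (h : n₀ + m = n₀ + n),
      Matrix.reindex finSumFinEquiv finSumFinEquiv (fromBlocks g.1 0 0 (1 : Matrix (Fin n) (Fin n) F)) =
      Matrix.reindex (finSumFinEquiv.trans (finCongr h)) (finSumFinEquiv.trans (finCongr h))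
        (fromBlocks g.1 0 0 (1 : Matrix (Fin m) (Fin m) F)) := by
    intro m h
    obtain rfl : m = n := by omega
    rfl
  exact Units.ext (key (n₀ + n - n₀) (by omega))

lemma Cond_single {Γ : Type} [Group Γ] [Finite Γ] (g : Γ) :
    Cond (fun _ : Unit => (1:ℂ)) (fun _ => g) (orderOf g) := by
  intro V _ _ ρ
  simp only [Finset.univ_unique, Finset.sum_const, Finset.card_singleton, one_smul]
  rw [← map_pow, pow_succ, pow_orderOf_eq_one, one_mul]

theorem two_power_divisibility_of_character_values
    (q : ℕ) (hq : IsPrimePow q) (hodd : Odd q)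
    (F : Type) [Field F] [Fintype F] (hFq : Fintype.card F = q)
    (r n₀ : ℕ) (hr : 0 < r) (hn₀ : 0 < n₀) (g : GL (Fin n₀) F) :
    Filter.Tendsto
      (fun n : ℕ =>
        (Nat.card {χ : GL (Fin (n₀ + n)) F → ℂ //
            IsIrrChar _ χ ∧ ¬ NatDvdAlg (2 ^ r) (χ (glEmbed (Nat.le_add_right n₀ n) g))} : ℝ) /
          (Nat.card {χ : GL (Fin (n₀ + n)) F → ℂ // IsIrrChar _ χ} : ℝ))
      Filter.atTop (nhds 0) := by
  classical
  have hq3 : 3 ≤ q := by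
    have h1 := hq.two_le
    rcases hodd with ⟨k, hk⟩
    omega
  rw [Metric.tendsto_atTop]
  intro ε hε
  obtain ⟨s0, hs0⟩ := PP_all F q hFq hq3 hodd r (Fin n₀) Unit (fun _ => 1) (fun _ => g) (orderOf g)
    (orderOf_pos g) (Cond_single g) (ε / 4) (by positivity)
  refine ⟨s0, fun n hn => ?_⟩
  have h1 := hs0 n hn _ (glRe F finSumFinEquiv)
  have hlow := irr_lower F q hFq hq3 (n₀ + n) (by omega)
  have hQ : (0:ℝ) < (q:ℝ) ^ (n₀ + n) := pow_pos (by exact_mod_cast (by omega : 0 < q)) _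
  rw [Fintype.card_fin] at h1
  have hcard : Nat.card {χ : GL (Fin (n₀ + n)) F → ℂ //
            IsIrrChar _ χ ∧ ¬ NatDvdAlg (2 ^ r) (χ (glEmbed (Nat.le_add_right n₀ n) g))} =
      Nat.card {χ : Irr (GL (Fin (n₀ + n)) F) // ¬ IsIntegral ℤ ((∑ i : Unit, (1:ℂ) *
        χ.1 (glRe F finSumFinEquiv (dgHom F (Fin n₀) (Fin n) (g, 1)))) / (2:ℂ) ^ r)} := by
    refine Nat.card_congr ((Equiv.subtypeSubtypeEquivSubtypeInter (IsIrrChar (GL (Fin (n₀ + n)) F))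
      (fun χ => ¬ NatDvdAlg (2 ^ r) (χ (glEmbed (Nat.le_add_right n₀ n) g)))).symm.trans
      (Equiv.subtypeEquivRight fun χ => ?_))
    rw [glEmbed_eq]
    simp [NatDvdAlg]
  rw [hcard, Real.dist_eq, sub_zero, abs_of_nonneg (by positivity)]
  refine lt_of_le_of_lt (div_le_div₀ (by positivity) h1 (by positivity) hlow) ?_
  have : ε / 4 * (q:ℝ) ^ (n₀ + n) / ((q:ℝ) ^ (n₀ + n) / 2) = ε / 2 := by
    field_simp
    norm_num
  rw [this]
  linarith
end

section
/- Let ℓ be an odd prime, q a prime power coprime to ℓ, t the multiplicative order of q modulo ℓ, and τ = v_ℓ(q^t − 1). For all positive integers A and B, writing h = gcd(B, t), one has v_ℓ( ∏_{i=1}^{A} (q^{B·i} − 1) ) = ⌊Ah/t⌋ · (v_ℓ(B/h) + τ) + v_ℓ( ⌊Ah/t⌋! ). -/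
theorem lifting_the_exponent_product
    (ℓ : ℕ) (hℓ : ℓ.Prime) (hodd : Odd ℓ)
    (q : ℕ) (hq : IsPrimePow q) (hco : Nat.Coprime q ℓ)
    (t : ℕ) (ht : t = orderOf (q : ZMod ℓ))
    (τ : ℕ) (hτ : τ = padicValNat ℓ (q ^ t - 1))
    (A B : ℕ) (hA : 0 < A) (hB : 0 < B) (h : ℕ) (hh : h = Nat.gcd B t) :
    padicValNat ℓ (∏ i ∈ Finset.Icc 1 A, (q ^ (B * i) - 1)) =
      (A * h / t) * (padicValNat ℓ (B / h) + τ) +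
        padicValNat ℓ (Nat.factorial (A * h / t)) := by
  haveI : Fact ℓ.Prime := ⟨hℓ⟩
  have hq2 : 1 < q := hq.one_lt
  have htpos : 0 < t := by
    rw [ht, ← ZMod.coe_unitOfCoprime q hco, orderOf_units]
    exact orderOf_pos _
  have hdvd : ∀ n, ℓ ∣ q ^ n - 1 ↔ t ∣ n := by
    intro n
    have h1 : 1 ≤ q ^ n := Nat.one_le_pow _ _ (by omega)
    rw [ht, orderOf_dvd_iff_pow_eq_one, ← ZMod.natCast_eq_zero_iff, Nat.cast_sub h1, sub_eq_zero]
    simp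
  have hhpos : 0 < h := by rw [hh]; exact Nat.gcd_pos_of_pos_left _ hB
  obtain ⟨b, s, hbs, hb, hs⟩ : ∃ b s, Nat.Coprime b s ∧ B = b * h ∧ t = s * h := by
    subst hh
    obtain ⟨b, s, h1, h2, h3⟩ := Nat.exists_coprime B t
    exact ⟨b, s, h1, h2, h3⟩
  have hspos : 0 < s := Nat.pos_of_ne_zero (by rintro rfl; simp at hs; omega)
  have hbpos : 0 < b := Nat.pos_of_ne_zero (by rintro rfl; simp at hb; omega)
  have hBh : B / h = b := by rw [hb, Nat.mul_div_cancel _ hhpos]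
  have hdiv : ∀ A, A * h / t = A / s := fun A => by rw [hs, Nat.mul_div_mul_right _ _ hhpos]
  rw [hBh, hdiv]
  have hne : ∀ i, 0 < i → q ^ (B * i) - 1 ≠ 0 := by
    intro i hi
    have := Nat.one_lt_pow (Nat.mul_pos hB hi).ne' hq2
    omega
  have hlq : ∀ n, ¬ ℓ ∣ q ^ n := by
    intro n hn
    have := hℓ.dvd_of_dvd_pow hn
    have h2 := Nat.dvd_gcd this dvd_rfl
    rw [hco] at h2
    exact hℓ.one_lt.ne' (Nat.dvd_one.mp h2)
  have hti : ∀ i, t ∣ B * i ↔ s ∣ i := by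
    intro i
    rw [hs, hb, show b * h * i = b * i * h by ring, Nat.mul_dvd_mul_iff_right hhpos]
    exact hbs.symm.dvd_mul_left
  clear hA
  induction A with
  | zero => simp
  | succ n ih =>
    rw [Finset.prod_Icc_succ_top (by omega), padicValNat.mul
      (Finset.prod_ne_zero_iff.mpr fun i hi => hne i (by simp at hi; omega)) (hne _ (by omega)), ih]
    by_cases hd : s ∣ n + 1
    · rw [Nat.succ_div_of_dvd hd]
      obtain ⟨j, hj⟩ := hd
      have hjpos : 0 < j := Nat.pos_of_ne_zero (by rintro rfl; simp at hj)
      have hj' : n / s + 1 = j := by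
        rw [← Nat.succ_div_of_dvd ⟨j, hj⟩, hj, Nat.mul_div_cancel_left _ hspos]
      have key : padicValNat ℓ (q ^ (B * (n + 1)) - 1) = τ + (padicValNat ℓ b + padicValNat ℓ j) := by
        have h1 := padicValNat.pow_sub_pow (p := ℓ) hodd (x := q ^ t) (y := 1)
          (Nat.one_lt_pow htpos.ne' hq2) ((hdvd t).2 dvd_rfl) (hlq t)
          (n := b * j) (Nat.mul_pos hbpos hjpos).ne'
        rw [one_pow, ← pow_mul, ← hτ, padicValNat.mul hbpos.ne' hjpos.ne'] at h1
        rw [← h1, hj, hb, hs]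
        congr 3
        ring
      rw [key, Nat.factorial_succ, padicValNat.mul (by omega) (Nat.factorial_ne_zero _), hj']
      rw [← hj']
      ring
    · rw [Nat.succ_div_of_not_dvd hd, padicValNat.eq_zero_of_not_dvd (n := q ^ (B * (n + 1)) - 1)]
      · rfl
      · rw [hdvd, hti]; exact hd
end

section
/- Let ℓ be an odd prime, q a prime power coprime to ℓ, t the multiplicative order of q modulo ℓ, and τ = v_ℓ(q^t − 1). Let λ be a partition of n and let H_t(λ) denote the multiset of hooks of λ of length divisible by t. Then v_ℓ(d_λ(q)) = (⌊n/t⌋ − |H_t(λ)|)·τ + v_ℓ( ⌊n/t⌋! / ∏_{h ∈ H_t(λ)} (|h|/t) ). In particular v_ℓ(d_λ(q)) ≥ ⌊n/t⌋ − |H_t(λ)| + v_ℓ( ⌊n/t⌋! / ∏_{h ∈ H_t(λ)} (|h|/t) ). -/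
/-- The `i`-th part (0-indexed, parts in weakly decreasing order) of the partition whose
multiset of parts is `lam`; `0` if `i` is at least the number of parts. -/
def partNth (lam : Multiset ℕ) (i : ℕ) : ℕ :=
  ((lam.sort (· ≤ ·)).reverse.getD i 0)

/-- The `j`-th part (0-indexed) of the conjugate partition: the number of parts `> j`. -/
def conjNth (lam : Multiset ℕ) (j : ℕ) : ℕ :=
  (lam.filter (fun m => j < m)).card

/-- The cells `(i, j)` (0-indexed) of the Young diagram of `lam`. -/
def cellsOf (lam : Multiset ℕ) : Finset (ℕ × ℕ) :=
  (Finset.range (Multiset.card lam) ×ˢ Finset.range lam.sum).filter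
    (fun c => c.2 < partNth lam c.1)

/-- The hook length of the cell `c = (i, j)` of `lam`:
`(λᵢ − j) + (λ'ⱼ − i) − 1`. -/
def hookLen (lam : Multiset ℕ) (c : ℕ × ℕ) : ℕ :=
  (partNth lam c.1 - c.2) + (conjNth lam c.2 - c.1) - 1

/-- The product of all hook lengths of `lam`. -/
def hookProd (lam : Multiset ℕ) : ℕ :=
  ∏ c ∈ cellsOf lam, hookLen lam c

/-- `α(λ) = Σᵢ (i − 1)·λᵢ` (1-indexed), i.e. `Σᵢ i·λᵢ` for the 0-indexed parts. -/
def alphaStat (lam : Multiset ℕ) : ℕ :=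
  ∑ i ∈ Finset.range (Multiset.card lam), i * partNth lam i

/-- `𝔣_λ = n! / ∏_{h ∈ H(λ)} |h|`, the degree of the irreducible character of `S_n`
indexed by `λ`, as a rational number. -/
def fDeg (lam : Multiset ℕ) : ℚ :=
  (Nat.factorial lam.sum : ℚ) / (hookProd lam : ℚ)

/-- `d_λ(x) = x^{α(λ)} · ∏_{i=1}^{n} (x^i − 1) / ∏_{h ∈ H(λ)} (x^{|h|} − 1)`. -/
def dDeg (lam : Multiset ℕ) (x : ℕ) : ℚ :=
  (x : ℚ) ^ alphaStat lam * (∏ i ∈ Finset.Icc 1 lam.sum, ((x : ℚ) ^ i - 1)) /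
    ∏ c ∈ cellsOf lam, ((x : ℚ) ^ hookLen lam c - 1)


lemma aux_sum_ge (s : Finset ℕ) : ∑ i ∈ Finset.range s.card, i ≤ ∑ x ∈ s, x := by
  induction s using Finset.induction_on_max with
  | empty => simp
  | insert a s h ih =>
    have ha : a ∉ s := fun h' => lt_irrefl _ (h a h')
    rw [Finset.card_insert_of_notMem ha, Finset.sum_insert ha, Finset.sum_range_succ]
    have : s.card ≤ a := by
      have := Finset.card_le_card (s := s) (t := Finset.range a)
        (fun x hx => Finset.mem_range.2 (h x hx))
      simpa using this
    omega

lemma aux_mod_inj {t a b : ℕ} (h : a % t = b % t) (h' : a / t = b / t) : a = b := by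
  rw [← Nat.div_add_mod a t, ← Nat.div_add_mod b t, h, h']

lemma aux_div_lt {t a b : ℕ} (h : a % t = b % t) (h' : a < b) : a / t < b / t := by
  rcases lt_or_ge (a / t) (b / t) with h1 | h1
  · exact h1
  · have h2 : a / t = b / t := le_antisymm (Nat.div_le_div_right h'.le) h1
    have := aux_mod_inj h h2
    omega

section
variable (p c : ℕ → ℕ) (m t : ℕ)

def auxX (i : ℕ) : ℕ := p i + (m - 1 - i)

def auxS (i : ℕ) : Finset ℕ :=
  (Finset.range m).filter (fun k => i < k ∧ auxX p m k % t = auxX p m i % t)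

variable {p c m}

lemma aux_p_anti (h : ∀ i j, j < p i ↔ i < c j) {i k : ℕ} (hik : i ≤ k) : p k ≤ p i := by
  by_contra hlt
  push Not at hlt
  have h1 := (h k (p i)).1 hlt
  have h2 := (h i (p i)).2 (by omega)
  omega

lemma aux_c_anti (h : ∀ i j, j < p i ↔ i < c j) {i k : ℕ} (hik : i ≤ k) : c k ≤ c i := by
  by_contra hlt
  push Not at hlt
  have h1 := (h (c i) k).2 hlt
  have h2 := (h (c i) i).1 (by omega)
  omega

lemma aux_row (h : ∀ i j, j < p i ↔ i < c j) (hc : ∀ j, c j ≤ m) (i : ℕ) (hi : i < m) :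
    ((Finset.range (p i)).filter (fun j => t ∣ p i - j + (c j - i) - 1)).card +
      (auxS p m t i).card ≤ auxX p m i / t := by
  set S1 := (Finset.range (p i)).filter (fun j => t ∣ p i - j + (c j - i) - 1) with hS1
  have key1 : ∀ j ∈ S1, (m + j - c j) % t = auxX p m i % t ∧ m + j - c j < auxX p m i := by
    intro j hj
    rw [hS1, Finset.mem_filter, Finset.mem_range] at hj
    obtain ⟨hj1, hj2⟩ := hj
    have h1 := (h i j).1 hj1
    have h2 := hc j
    have e : auxX p m i = (m + j - c j) + (p i - j + (c j - i) - 1) := by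
      unfold auxX; omega
    constructor
    · rw [e]
      obtain ⟨d, hd⟩ := hj2
      rw [hd, Nat.add_mul_mod_self_left]
    · omega
  have key2 : ∀ k ∈ auxS p m t i, auxX p m k % t = auxX p m i % t ∧ auxX p m k < auxX p m i := by
    intro k hk
    simp only [auxS, Finset.mem_filter, Finset.mem_range] at hk
    refine ⟨hk.2.2, ?_⟩
    have := aux_p_anti h hk.2.1.le
    unfold auxX; omega
  have inj1 : Set.InjOn (fun j => (m + j - c j) / t) (S1 : Set ℕ) := by
    intro a ha b hb hab
    have e := aux_mod_inj ((key1 a ha).1.trans (key1 b hb).1.symm) hab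
    have ha2 := hc a
    have hb2 := hc b
    rcases lt_trichotomy a b with hl | hl | hl
    · have := aux_c_anti h hl.le
      omega
    · exact hl
    · have := aux_c_anti h hl.le
      omega
  have inj2 : Set.InjOn (fun k => auxX p m k / t) (auxS p m t i : Set ℕ) := by
    intro a ha b hb hab
    have e := aux_mod_inj ((key2 a ha).1.trans (key2 b hb).1.symm) hab
    have ha' : a < m := Finset.mem_range.1 (Finset.mem_filter.1 ha).1
    have hb' : b < m := Finset.mem_range.1 (Finset.mem_filter.1 hb).1
    unfold auxX at e
    rcases lt_trichotomy a b with hl | hl | hl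
    · have := aux_p_anti h hl.le
      omega
    · exact hl
    · have := aux_p_anti h hl.le
      omega
  rw [← Finset.card_image_of_injOn inj1, ← Finset.card_image_of_injOn inj2,
    ← Finset.card_union_of_disjoint]
  · rw [← Finset.card_range (auxX p m i / t)]
    apply Finset.card_le_card
    intro y hy
    rw [Finset.mem_union, Finset.mem_image, Finset.mem_image] at hy
    rw [Finset.mem_range]
    rcases hy with ⟨j, hj, rfl⟩ | ⟨k, hk, rfl⟩
    · exact aux_div_lt (key1 j hj).1 (key1 j hj).2
    · exact aux_div_lt (key2 k hk).1 (key2 k hk).2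
  · rw [Finset.disjoint_left]
    intro y hy hy'
    rw [Finset.mem_image] at hy hy'
    obtain ⟨j, hj, rfl⟩ := hy
    obtain ⟨k, hk, hjk⟩ := hy'
    have e := aux_mod_inj ((key2 k hk).1.trans (key1 j hj).1.symm) hjk
    have hk' : k < m := Finset.mem_range.1 (Finset.mem_filter.1 hk).1
    have h1 := h k j
    have h2 := hc j
    unfold auxX at e
    omega

lemma aux_count (ht : 0 < t) (h : ∀ i j, j < p i ↔ i < c j) (hc : ∀ j, c j ≤ m) :
    t * ∑ i ∈ Finset.range m,
      ((Finset.range (p i)).filter (fun j => t ∣ p i - j + (c j - i) - 1)).card ≤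
    ∑ i ∈ Finset.range m, p i := by
  let φ : ℕ → ℕ := fun i => auxX p m i % t + t * (auxS p m t i).card
  have hlt : ∀ i k, i < k → k < m → φ i ≠ φ k := by
    intro i k hik hk he
    have h1 : auxX p m i % t = auxX p m k % t := by
      have := congrArg (· % t) he
      simpa [φ, Nat.add_mul_mod_self_left] using this
    have h2 : (auxS p m t i).card = (auxS p m t k).card := by
      simp only [φ, h1] at he
      exact Nat.eq_of_mul_eq_mul_left ht (by omega)
    have h3 : (auxS p m t k) ⊂ (auxS p m t i) := by
      rw [Finset.ssubset_iff_of_subset]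
      · refine ⟨k, ?_, ?_⟩
        · simp [auxS, hk, hik, h1]
        · simp [auxS]
      · intro x hx
        simp only [auxS, Finset.mem_filter, Finset.mem_range] at hx ⊢
        exact ⟨hx.1, by omega, by rw [hx.2.2, h1]⟩
    have := Finset.card_lt_card h3
    omega
  have hinj : Set.InjOn φ (Finset.range m : Set ℕ) := by
    intro a ha b hb hab
    have ha' : a < m := by simpa using ha
    have hb' : b < m := by simpa using hb
    rcases lt_trichotomy a b with hl | hl | hl
    · exact absurd hab (hlt a b hl hb')
    · exact hl
    · exact absurd hab.symm (hlt b a hl ha')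
  have hge : ∑ i ∈ Finset.range m, i ≤ ∑ i ∈ Finset.range m, φ i := by
    have := aux_sum_ge ((Finset.range m).image φ)
    rwa [Finset.card_image_of_injOn hinj, Finset.card_range, Finset.sum_image hinj] at this
  have hrow : ∑ i ∈ Finset.range m,
      (t * ((Finset.range (p i)).filter (fun j => t ∣ p i - j + (c j - i) - 1)).card + φ i) ≤
      ∑ i ∈ Finset.range m, auxX p m i := by
    apply Finset.sum_le_sum
    intro i hi
    have h1 := aux_row t h hc i (Finset.mem_range.1 hi)
    have h2 := Nat.mul_le_mul_left t h1
    rw [mul_add] at h2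
    have h3 := Nat.div_add_mod (auxX p m i) t
    simp only [φ]
    omega
  have hX : ∑ i ∈ Finset.range m, auxX p m i =
      ∑ i ∈ Finset.range m, p i + ∑ i ∈ Finset.range m, i := by
    unfold auxX
    rw [Finset.sum_add_distrib, Finset.sum_range_reflect (fun i => i)]
  rw [Finset.sum_add_distrib, ← Finset.mul_sum, hX] at hrow
  omega

end

lemma aux_list (L : List ℕ) (hL : L.Pairwise (fun a b => b ≤ a)) (i j : ℕ) :
    j < L.getD i 0 ↔ i < L.countP (fun x => decide (j < x)) := by
  induction L generalizing i with
  | nil => simp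
  | cons a L ih =>
    rw [List.pairwise_cons] at hL
    rw [List.countP_cons]
    by_cases hja : j < a
    · cases i with
      | zero => simp [hja]
      | succ i => simp only [List.getD_cons_succ]; rw [ih hL.2]; simp [hja]
    · have h0 : L.countP (fun x => decide (j < x)) = 0 := by
        rw [List.countP_eq_zero]
        intro x hx
        have := hL.1 x hx
        simp; omega
      cases i with
      | zero => simp [hja]; exact fun x hx => le_trans (hL.1 x hx) (not_lt.1 hja)
      | succ i => simp only [List.getD_cons_succ]; rw [ih hL.2, h0]; simp [hja]

lemma aux_list_sum (L : List ℕ) : ∑ i ∈ Finset.range L.length, L.getD i 0 = L.sum := by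
  induction L with
  | nil => simp
  | cons a L ih =>
    rw [List.length_cons, Finset.sum_range_succ', List.sum_cons]
    simp only [List.getD_cons_succ, List.getD_cons_zero]
    rw [ih, add_comm]

lemma aux_pc (lam : Multiset ℕ) (i j : ℕ) : j < partNth lam i ↔ i < conjNth lam j := by
  unfold partNth conjNth
  rw [aux_list]
  · rw [← Multiset.countP_eq_card_filter]
    conv_rhs => rw [← Multiset.sort_eq lam (· ≤ ·)]
    rw [Multiset.coe_countP, List.countP_reverse]
  · rw [List.pairwise_reverse]
    exact Multiset.pairwise_sort lam (· ≤ ·)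

lemma aux_psum (lam : Multiset ℕ) :
    ∑ i ∈ Finset.range (Multiset.card lam), partNth lam i = lam.sum := by
  unfold partNth
  have h := aux_list_sum (lam.sort (· ≤ ·)).reverse
  rw [List.length_reverse, Multiset.length_sort, List.sum_reverse] at h
  rw [h]
  conv_rhs => rw [← Multiset.sort_eq lam (· ≤ ·)]
  rw [Multiset.sum_coe]

lemma aux_hook_pos (lam : Multiset ℕ) (x : ℕ × ℕ) (hx : x ∈ cellsOf lam) :
    0 < hookLen lam x := by
  have h1 := (Finset.mem_filter.1 hx).2
  have h2 := (aux_pc lam _ _).1 h1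
  unfold hookLen
  omega

lemma aux_card (lam : Multiset ℕ) (t : ℕ) (ht : 0 < t) :
    ((cellsOf lam).filter (fun x => t ∣ hookLen lam x)).card ≤ lam.sum / t := by
  rw [Nat.le_div_iff_mul_le ht, mul_comm]
  have h := aux_count (p := partNth lam) (c := conjNth lam) (m := Multiset.card lam) t ht
    (aux_pc lam) (fun j => Multiset.card_le_card (Multiset.filter_le _ _))
  rw [aux_psum] at h
  refine le_trans (Nat.mul_le_mul_left t ?_) h
  rw [← Finset.card_sigma]
  refine Finset.card_le_card_of_injOn (fun x => (⟨x.1, x.2⟩ : Σ _ : ℕ, ℕ)) ?_ ?_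
  · intro x hx
    simp only [cellsOf, Finset.coe_filter, Finset.mem_filter, Finset.mem_product,
      Finset.mem_range, Set.mem_setOf_eq] at hx
    simp only [Finset.coe_sigma, Set.mem_sigma_iff, Finset.coe_filter, Finset.mem_range,
      Finset.coe_range, Set.mem_Iio, Set.mem_setOf_eq]
    exact ⟨hx.1.1.1, hx.1.2, hx.2⟩
  · rintro ⟨a, b⟩ _ ⟨a', b'⟩ _ hab
    simpa using hab

lemma aux_val_prod {ι : Type*} (ℓ : ℕ) [Fact ℓ.Prime] (s : Finset ι) (f : ι → ℚ)
    (hf : ∀ i ∈ s, f i ≠ 0) :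
    padicValRat ℓ (∏ i ∈ s, f i) = ∑ i ∈ s, padicValRat ℓ (f i) := by
  classical
  induction s using Finset.induction_on with
  | empty => simp
  | insert a s ha ih =>
    rw [Finset.prod_insert ha, Finset.sum_insert ha, padicValRat.mul, ih]
    · exact fun i hi => hf i (Finset.mem_insert_of_mem hi)
    · exact hf a (Finset.mem_insert_self _ _)
    · exact Finset.prod_ne_zero_iff.2 fun i hi => hf i (Finset.mem_insert_of_mem hi)

lemma aux_dvd_iff {ℓ q : ℕ} (hq : 1 ≤ q) (i : ℕ) :
    ℓ ∣ q ^ i - 1 ↔ orderOf (q : ZMod ℓ) ∣ i := by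
  rw [orderOf_dvd_iff_pow_eq_one, ← ZMod.natCast_eq_zero_iff,
    Nat.cast_sub (Nat.one_le_pow _ _ hq)]
  push_cast
  exact sub_eq_zero

lemma aux_val {ℓ q : ℕ} [hℓ : Fact ℓ.Prime] (hodd : Odd ℓ) (hq : 2 ≤ q) (hco : Nat.Coprime q ℓ)
    (ht : 0 < orderOf (q : ZMod ℓ)) (i : ℕ) (hi : 0 < i) :
    padicValRat ℓ ((q : ℚ) ^ i - 1) = if orderOf (q : ZMod ℓ) ∣ i then
      ((padicValNat ℓ (q ^ orderOf (q : ZMod ℓ) - 1) : ℕ) : ℤ) +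
        padicValRat ℓ ((i / orderOf (q : ZMod ℓ) : ℕ) : ℚ) else 0 := by
  have e : ((q : ℚ) ^ i - 1) = ((q ^ i - 1 : ℕ) : ℚ) := by
    rw [Nat.cast_sub (Nat.one_le_pow _ _ (by omega))]
    push_cast
    rfl
  rw [e, padicValRat.of_nat, padicValRat.of_nat]
  split_ifs with hd
  · norm_cast
    set t := orderOf (q : ZMod ℓ) with htdef
    obtain ⟨d, rfl⟩ := hd
    have hd0 : d ≠ 0 := by
      rintro rfl
      simp at hi
    rw [Nat.mul_div_cancel_left _ ht, pow_mul]
    have := padicValNat.pow_sub_pow (p := ℓ) (x := q ^ t) (y := 1) hodd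
      (Nat.one_lt_pow ht.ne' (by omega))
      ((aux_dvd_iff (by omega) t).2 (by rw [htdef])) (fun hh => by
        have h1 := hℓ.out.dvd_of_dvd_pow hh
        have h2 : ℓ ∣ 1 := by
          rw [← hco]
          exact Nat.dvd_gcd h1 dvd_rfl
        exact hℓ.out.one_lt.ne' (Nat.dvd_one.1 h2)) hd0
    rwa [one_pow] at this
  · norm_cast
    apply padicValNat.eq_zero_of_not_dvd
    rwa [aux_dvd_iff (by omega)]

lemma aux_fact {ℓ : ℕ} [hℓ : Fact ℓ.Prime] (t : ℕ) (ht : 0 < t) (τ : ℤ) (n : ℕ) :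
    ∑ i ∈ Finset.Icc 1 n, (if t ∣ i then τ + padicValRat ℓ ((i / t : ℕ) : ℚ) else 0) =
      (n / t : ℕ) * τ + padicValRat ℓ (Nat.factorial (n / t) : ℚ) := by
  induction n with
  | zero => simp
  | succ n ih =>
    rw [Finset.sum_Icc_succ_top (by omega), ih]
    split_ifs with hd
    · rw [Nat.succ_div_of_dvd hd, Nat.factorial_succ]
      rw [Nat.cast_mul, padicValRat.mul (by positivity) (by positivity)]
      push_cast
      ring
    · rw [Nat.succ_div_of_not_dvd hd, add_zero]

theorem ell_adic_valuation_of_unipotent_degree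
    (ℓ : ℕ) (hℓ : ℓ.Prime) (hodd : Odd ℓ)
    (q : ℕ) (hq : IsPrimePow q) (hco : Nat.Coprime q ℓ)
    (t : ℕ) (ht : t = orderOf (q : ZMod ℓ))
    (τ : ℕ) (hτ : τ = padicValNat ℓ (q ^ t - 1))
    (n : ℕ) (lam : n.Partition)
    (Ht : Finset (ℕ × ℕ)) (hHt : Ht = (cellsOf lam.parts).filter (fun c => t ∣ hookLen lam.parts c)) :
    padicValRat ℓ (dDeg lam.parts q) =
        ((n / t : ℕ) - (Ht.card : ℤ)) * τ +
          padicValRat ℓ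
            ((Nat.factorial (n / t) : ℚ) / ∏ c ∈ Ht, ((hookLen lam.parts c / t : ℕ) : ℚ)) ∧
      ((n / t : ℕ) - (Ht.card : ℤ)) +
          padicValRat ℓ
            ((Nat.factorial (n / t) : ℚ) / ∏ c ∈ Ht, ((hookLen lam.parts c / t : ℕ) : ℚ)) ≤
        padicValRat ℓ (dDeg lam.parts q) := by
  haveI : Fact ℓ.Prime := ⟨hℓ⟩
  have hq2 : 2 ≤ q := hq.two_le
  have ht0 : 0 < t := by
    rw [ht, orderOf_pos_iff]
    have hu : IsUnit (q : ZMod ℓ) := (ZMod.isUnit_iff_coprime q ℓ).2 hco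
    exact isOfFinOrder_iff_isUnit.2 hu
  have hsum : lam.parts.sum = n := lam.parts_sum
  have hcard : Ht.card ≤ n / t := by
    have := aux_card lam.parts t ht0
    rwa [hsum, ← hHt] at this
  have hτ1 : 1 ≤ τ := by
    rw [hτ]
    apply one_le_padicValNat_of_dvd
    · have := Nat.one_lt_pow ht0.ne' (show 1 < q by omega)
      omega
    · rw [aux_dvd_iff (by omega), ht]
  have hval : ∀ i, 0 < i → padicValRat ℓ ((q : ℚ) ^ i - 1) =
      if t ∣ i then (τ : ℤ) + padicValRat ℓ ((i / t : ℕ) : ℚ) else 0 := by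
    intro i hi
    have := aux_val hodd hq2 hco (ht ▸ ht0) i hi
    rwa [← ht, ← hτ] at this
  have hne : ∀ i, 0 < i → ((q : ℚ) ^ i - 1) ≠ 0 := by
    intro i hi
    have : (1 : ℚ) < (q : ℚ) ^ i := one_lt_pow₀ (by exact_mod_cast hq2) hi.ne'
    exact (sub_pos.2 this).ne'
  have hq0 : (q : ℚ) ≠ 0 := by
    have : q ≠ 0 := by omega
    exact_mod_cast this
  have hHmem : ∀ c ∈ Ht, ((hookLen lam.parts c / t : ℕ) : ℚ) ≠ 0 := by
    intro c hc
    rw [hHt, Finset.mem_filter] at hc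
    have h1 := aux_hook_pos _ c hc.1
    have := Nat.div_pos (Nat.le_of_dvd h1 hc.2) ht0
    exact_mod_cast this.ne'
  have main : padicValRat ℓ (dDeg lam.parts q) =
        ((n / t : ℕ) - (Ht.card : ℤ)) * τ +
          padicValRat ℓ
            ((Nat.factorial (n / t) : ℚ) / ∏ c ∈ Ht, ((hookLen lam.parts c / t : ℕ) : ℚ)) := by
    have hA : ∏ i ∈ Finset.Icc 1 lam.parts.sum, ((q : ℚ) ^ i - 1) ≠ 0 :=
      Finset.prod_ne_zero_iff.2 fun i hi => hne i (Finset.mem_Icc.1 hi).1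
    have hB : ∏ c ∈ cellsOf lam.parts, ((q : ℚ) ^ hookLen lam.parts c - 1) ≠ 0 :=
      Finset.prod_ne_zero_iff.2 fun c hc => hne _ (aux_hook_pos _ c hc)
    unfold dDeg
    rw [padicValRat.div (mul_ne_zero (pow_ne_zero _ hq0) hA) hB,
      padicValRat.mul (pow_ne_zero _ hq0) hA, padicValRat.pow,
      padicValRat.div (by positivity) (Finset.prod_ne_zero_iff.2 hHmem),
      aux_val_prod ℓ _ _ hHmem,
      aux_val_prod ℓ _ _ (fun i hi => hne i (Finset.mem_Icc.1 hi).1),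
      aux_val_prod ℓ _ _ (fun c hc => hne _ (aux_hook_pos _ c hc)),
      Finset.sum_congr rfl (fun i hi => hval i (Finset.mem_Icc.1 hi).1),
      Finset.sum_congr rfl (fun c hc => hval _ (aux_hook_pos _ c hc)),
      aux_fact t ht0, hsum, ← Finset.sum_filter, ← hHt, Finset.sum_add_distrib,
      Finset.sum_const, padicValRat.of_nat, padicValNat.eq_zero_of_not_dvd (n := q)
        (fun hh => hℓ.one_lt.ne' (Nat.dvd_one.1 (by rw [← hco]; exact Nat.dvd_gcd hh dvd_rfl)))]
    simp only [nsmul_eq_mul, Nat.cast_zero, mul_zero, zero_add]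
    ring
  refine ⟨main, ?_⟩
  rw [main]
  have h1 : (0 : ℤ) ≤ ((n / t : ℕ) - (Ht.card : ℤ)) := by
    have : (Ht.card : ℤ) ≤ ((n / t : ℕ) : ℤ) := by exact_mod_cast hcard
    linarith
  have h2 : (1 : ℤ) ≤ τ := by exact_mod_cast hτ1
  have h3 := mul_le_mul_of_nonneg_left h2 h1
  linarith
end
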